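/- Suppose T is Σ1-ill and m ≥ 1. Then there exists a Σ1 provability predicate PR_T(x) of T such that: (1) for any modal formula A and any arithmetical interpretation f based on PR_T(x), if N⁺A_{m,0} ⊢ A then T ⊢ f(A); and (2) there exists an arithmetical interpretation f based on PR_T(x) such that for every modal formula A, N⁺A_{m,0} ⊢ A if and only if T ⊢ f(A). -/

import Mathlib

namespace PLN

/-! ### Modal formulas and the logics N⁺A_{m,n} -/

/-- Formulas of modal propositional logic. -/
inductive MFml : Type
  | var : ℕ → MFml
  | bot : MFml
  | neg : MFml → MFml
  | and : MFml → MFml → MFml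
  | or : MFml → MFml → MFml
  | imp : MFml → MFml → MFml
  | box : MFml → MFml
  deriving DecidableEq

/-- `boxIter n A` is `□ⁿ A`, where `□⁰ A = A` and `□^(k+1) A = □ (□ᵏ A)`. -/
def boxIter : ℕ → MFml → MFml
  | 0, A => A
  | k + 1, A => .box (boxIter k A)

/-- Evaluation of a modal formula under a valuation of its "propositional atoms"
(propositional variables, and boxed formulas); used to define propositional tautologies
in the modal language. -/
def MFml.evalTC (v : MFml → Prop) : MFml → Prop
  | .bot => False
  | .neg A => ¬ A.evalTC v
  | .and A B => A.evalTC v ∧ B.evalTC v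
  | .or A B => A.evalTC v ∨ B.evalTC v
  | .imp A B => A.evalTC v → B.evalTC v
  | A => v A

/-- Propositional tautologies in the modal language. -/
def MTaut (A : MFml) : Prop := ∀ v, A.evalTC v

/-- Provability in the logic `N⁺A_{m,n}`: the pure logic of necessitation `N`
(propositional tautologies, modus ponens, necessitation) together with the axiom scheme
`□ⁿA → □ᵐA` and the rule `Ros□` (from `¬□A` infer `¬□□A`). -/
inductive NAProves (m n : ℕ) : MFml → Prop
  | taut {A} : MTaut A → NAProves m n A
  | acc (A) : NAProves m n (.imp (boxIter n A) (boxIter m A))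
  | mp {A B} : NAProves m n (.imp A B) → NAProves m n A → NAProves m n B
  | nec {A} : NAProves m n A → NAProves m n (.box A)
  | ros {A} : NAProves m n (.neg (.box A)) → NAProves m n (.neg (.box (.box A)))

/-- `IsSub B A` : `B` is a subformula of `A`. -/
inductive IsSub : MFml → MFml → Prop
  | refl (A) : IsSub A A
  | neg {B A} : IsSub B A → IsSub B (.neg A)
  | andL {B A C} : IsSub B A → IsSub B (.and A C)
  | andR {B A C} : IsSub B C → IsSub B (.and A C)
  | orL {B A C} : IsSub B A → IsSub B (.or A C)
  | orR {B A C} : IsSub B C → IsSub B (.or A C)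
  | impL {B A C} : IsSub B A → IsSub B (.imp A C)
  | impR {B A C} : IsSub B C → IsSub B (.imp A C)
  | box {B A} : IsSub B A → IsSub B (.box A)

/-! ### N-frames and N-models -/

/-- An N-model on a set `W` of worlds: an N-frame (a binary relation `≺_B` on `W`
for each modal formula `B`) together with a valuation of propositional variables. -/
structure NModel (W : Type) where
  rel : MFml → W → W → Prop
  val : W → ℕ → Prop

/-- The forcing relation of an N-model:
`x ⊩ □B` iff every `y` with `x ≺_B y` satisfies `y ⊩ B`. -/
def NModel.Forces {W : Type} (M : NModel W) : W → MFml → Prop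
  | x, .var p => M.val x p
  | _, .bot => False
  | x, .neg A => ¬ NModel.Forces M x A
  | x, .and A B => NModel.Forces M x A ∧ NModel.Forces M x B
  | x, .or A B => NModel.Forces M x A ∨ NModel.Forces M x B
  | x, .imp A B => NModel.Forces M x A → NModel.Forces M x B
  | x, .box A => ∀ y, M.rel A x y → NModel.Forces M y A

/-- The relations `≺_B^k` : `x ≺_B^0 y` iff `x = y`, and
`x ≺_B^(k+1) y` iff `∃ w, x ≺_{□ᵏB} w` and `w ≺_B^k y`. -/
def NModel.relIter {W : Type} (M : NModel W) (B : MFml) : ℕ → W → W → Prop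
  | 0, x, y => x = y
  | k + 1, x, y => ∃ w, M.rel (boxIter k B) x w ∧ NModel.relIter M B k w y

/-- `(m,n)`-accessibility of (the frame of) an N-model. -/
def NModel.Accessible {W : Type} (M : NModel W) (m n : ℕ) : Prop :=
  ∀ (B : MFml) (x y : W), NModel.relIter M B m x y → NModel.relIter M B n x y

/-! ### The language of first-order arithmetic -/

/-- Terms of the language of arithmetic, with de Bruijn variables. -/
inductive ATerm : Type
  | var : ℕ → ATerm
  | zero : ATerm
  | succ : ATerm → ATerm
  | add : ATerm → ATerm → ATerm
  | mul : ATerm → ATerm → ATerm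
  deriving DecidableEq

/-- Formulas of the language of arithmetic (with `≤` primitive), de Bruijn variables. -/
inductive AFml : Type
  | eq : ATerm → ATerm → AFml
  | le : ATerm → ATerm → AFml
  | neg : AFml → AFml
  | and : AFml → AFml → AFml
  | or : AFml → AFml → AFml
  | imp : AFml → AFml → AFml
  | all : AFml → AFml
  | ex : AFml → AFml
  deriving DecidableEq

/-- Lift (shift up by one) the variables `≥ c` of a term. -/
def ATerm.lift (c : ℕ) : ATerm → ATerm
  | .var n => .var (if n < c then n else n + 1)
  | .zero => .zero
  | .succ t => .succ (t.lift c)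
  | .add t s => .add (t.lift c) (s.lift c)
  | .mul t s => .mul (t.lift c) (s.lift c)

/-- Simultaneous substitution in terms. -/
def ATerm.substAll (σ : ℕ → ATerm) : ATerm → ATerm
  | .var n => σ n
  | .zero => .zero
  | .succ t => .succ (t.substAll σ)
  | .add t s => .add (t.substAll σ) (s.substAll σ)
  | .mul t s => .mul (t.substAll σ) (s.substAll σ)

/-- Pushing a substitution under a binder. -/
def liftSub (σ : ℕ → ATerm) : ℕ → ATerm
  | 0 => .var 0
  | n + 1 => (σ n).lift 0

/-- Lift (shift up by one) the free variables `≥ c` of a formula. -/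
def AFml.lift (c : ℕ) : AFml → AFml
  | .eq t s => .eq (t.lift c) (s.lift c)
  | .le t s => .le (t.lift c) (s.lift c)
  | .neg φ => .neg (φ.lift c)
  | .and φ ψ => .and (φ.lift c) (ψ.lift c)
  | .or φ ψ => .or (φ.lift c) (ψ.lift c)
  | .imp φ ψ => .imp (φ.lift c) (ψ.lift c)
  | .all φ => .all (φ.lift (c + 1))
  | .ex φ => .ex (φ.lift (c + 1))

/-- Simultaneous (capture-avoiding) substitution in formulas. -/
def AFml.substAll (σ : ℕ → ATerm) : AFml → AFml
  | .eq t s => .eq (t.substAll σ) (s.substAll σ)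
  | .le t s => .le (t.substAll σ) (s.substAll σ)
  | .neg φ => .neg (φ.substAll σ)
  | .and φ ψ => .and (φ.substAll σ) (ψ.substAll σ)
  | .or φ ψ => .or (φ.substAll σ) (ψ.substAll σ)
  | .imp φ ψ => .imp (φ.substAll σ) (ψ.substAll σ)
  | .all φ => .all (φ.substAll (liftSub σ))
  | .ex φ => .ex (φ.substAll (liftSub σ))

def subst0Env (t : ATerm) : ℕ → ATerm
  | 0 => t
  | n + 1 => .var n

def subst2Env (t s : ATerm) : ℕ → ATerm
  | 0 => t
  | 1 => s
  | n + 2 => .var n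

/-- Substitute the term `t` for the free variable `0` (decrementing other variables). -/
def AFml.subst0 (φ : AFml) (t : ATerm) : AFml := φ.substAll (subst0Env t)

/-- Substitute the terms `t`, `s` for the free variables `0`, `1` simultaneously. -/
def AFml.subst2 (φ : AFml) (t s : ATerm) : AFml := φ.substAll (subst2Env t s)

/-- Substitute `S(var 0)` for `var 0`, leaving all other free variables unchanged. -/
def succSubst (φ : AFml) : AFml :=
  φ.substAll fun n => if n = 0 then .succ (.var 0) else .var n

/-- All variables of a term are `< c`. -/
def ATerm.FreeLt (c : ℕ) : ATerm → Prop
  | .var n => n < c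
  | .zero => True
  | .succ t => t.FreeLt c
  | .add t s => t.FreeLt c ∧ s.FreeLt c
  | .mul t s => t.FreeLt c ∧ s.FreeLt c

/-- All free variables of a formula are `< c`; `FreeLt 0 φ` says that `φ` is a sentence. -/
def AFml.FreeLt (c : ℕ) : AFml → Prop
  | .eq t s => t.FreeLt c ∧ s.FreeLt c
  | .le t s => t.FreeLt c ∧ s.FreeLt c
  | .neg φ => φ.FreeLt c
  | .and φ ψ => φ.FreeLt c ∧ ψ.FreeLt c
  | .or φ ψ => φ.FreeLt c ∧ ψ.FreeLt c
  | .imp φ ψ => φ.FreeLt c ∧ ψ.FreeLt c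
  | .all φ => φ.FreeLt (c + 1)
  | .ex φ => φ.FreeLt (c + 1)

/-- The numeral `n̄`. -/
def numeral : ℕ → ATerm
  | 0 => .zero
  | n + 1 => .succ (numeral n)

/-- A Gödel numbering of terms. -/
def ATerm.code : ATerm → ℕ
  | .var n => Nat.pair 0 n
  | .zero => Nat.pair 1 0
  | .succ t => Nat.pair 2 t.code
  | .add t s => Nat.pair 3 (Nat.pair t.code s.code)
  | .mul t s => Nat.pair 4 (Nat.pair t.code s.code)

/-- A Gödel numbering of formulas. -/
def AFml.code : AFml → ℕ
  | .eq t s => Nat.pair 0 (Nat.pair t.code s.code)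
  | .le t s => Nat.pair 1 (Nat.pair t.code s.code)
  | .neg φ => Nat.pair 2 φ.code
  | .and φ ψ => Nat.pair 3 (Nat.pair φ.code ψ.code)
  | .or φ ψ => Nat.pair 4 (Nat.pair φ.code ψ.code)
  | .imp φ ψ => Nat.pair 5 (Nat.pair φ.code ψ.code)
  | .all φ => Nat.pair 6 φ.code
  | .ex φ => Nat.pair 7 φ.code

/-- `⌜φ⌝`, the numeral of the Gödel number of `φ`. -/
def gnum (φ : AFml) : ATerm := numeral φ.code

/-- For a formula `P(x)` (with free variable `var 0`), `P.appNum φ` is `P(⌜φ⌝)`. -/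
def AFml.appNum (P φ : AFml) : AFml := P.subst0 (gnum φ)

/-- Iterated application of a predicate: `iterPred P k φ = P(⌜P(⌜⋯P(⌜φ⌝)⋯⌝)⌝)` (`k` times). -/
def iterPred (P : AFml) : ℕ → AFml → AFml
  | 0, φ => φ
  | k + 1, φ => P.appNum (iterPred P k φ)

/-! ### Satisfaction in the standard model -/

def ATerm.val (ρ : ℕ → ℕ) : ATerm → ℕ
  | .var n => ρ n
  | .zero => 0
  | .succ t => t.val ρ + 1
  | .add t s => t.val ρ + s.val ρ
  | .mul t s => t.val ρ * s.val ρ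

def consEnv (a : ℕ) (ρ : ℕ → ℕ) : ℕ → ℕ
  | 0 => a
  | n + 1 => ρ n

/-- Satisfaction in the standard model `ℕ` under an environment `ρ`. -/
def AFml.Sat (ρ : ℕ → ℕ) : AFml → Prop
  | .eq t s => t.val ρ = s.val ρ
  | .le t s => t.val ρ ≤ s.val ρ
  | .neg φ => ¬ φ.Sat ρ
  | .and φ ψ => φ.Sat ρ ∧ ψ.Sat ρ
  | .or φ ψ => φ.Sat ρ ∨ ψ.Sat ρ
  | .imp φ ψ => φ.Sat ρ → ψ.Sat ρ
  | .all φ => ∀ a, φ.Sat (consEnv a ρ)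
  | .ex φ => ∃ a, φ.Sat (consEnv a ρ)

/-- `ℕ ⊨ φ`. -/
def TrueN (φ : AFml) : Prop := φ.Sat fun _ => 0

/-! ### The arithmetical hierarchy: Δ₀, Σ₁, Π₁ -/

/-- `Δ₀` formulas: every quantifier is bounded. -/
inductive IsDelta0 : AFml → Prop
  | eq (t s : ATerm) : IsDelta0 (.eq t s)
  | le (t s : ATerm) : IsDelta0 (.le t s)
  | neg {φ} : IsDelta0 φ → IsDelta0 (.neg φ)
  | and {φ ψ} : IsDelta0 φ → IsDelta0 ψ → IsDelta0 (.and φ ψ)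
  | or {φ ψ} : IsDelta0 φ → IsDelta0 ψ → IsDelta0 (.or φ ψ)
  | imp {φ ψ} : IsDelta0 φ → IsDelta0 ψ → IsDelta0 (.imp φ ψ)
  | ball {φ : AFml} (t : ATerm) : IsDelta0 φ → IsDelta0 (.all (.imp (.le (.var 0) (ATerm.lift 0 t)) φ))
  | bex {φ : AFml} (t : ATerm) : IsDelta0 φ → IsDelta0 (.ex (.and (.le (.var 0) (ATerm.lift 0 t)) φ))

mutual
  /-- `Σ₁` formulas. -/
  inductive IsSigma1 : AFml → Prop
    | delta0 {φ} : IsDelta0 φ → IsSigma1 φ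
    | and {φ ψ} : IsSigma1 φ → IsSigma1 ψ → IsSigma1 (.and φ ψ)
    | or {φ ψ} : IsSigma1 φ → IsSigma1 ψ → IsSigma1 (.or φ ψ)
    | ex {φ} : IsSigma1 φ → IsSigma1 (.ex φ)
    | negPi {φ} : IsPi1 φ → IsSigma1 (.neg φ)
    | impPiSigma {φ ψ} : IsPi1 φ → IsSigma1 ψ → IsSigma1 (.imp φ ψ)
  /-- `Π₁` formulas. -/
  inductive IsPi1 : AFml → Prop
    | delta0 {φ} : IsDelta0 φ → IsPi1 φ
    | and {φ ψ} : IsPi1 φ → IsPi1 ψ → IsPi1 (.and φ ψ)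
    | or {φ ψ} : IsPi1 φ → IsPi1 ψ → IsPi1 (.or φ ψ)
    | all {φ} : IsPi1 φ → IsPi1 (.all φ)
    | negSigma {φ} : IsSigma1 φ → IsPi1 (.neg φ)
    | impSigmaPi {φ ψ} : IsSigma1 φ → IsPi1 ψ → IsPi1 (.imp φ ψ)
end

/-! ### A Hilbert-style proof system for first-order arithmetic -/

/-- Evaluation of an arithmetical formula under a valuation of its "propositionally atomic"
subformulas (atomic or quantified formulas); used for propositional tautologies and
tautological consequence. -/
def AFml.evalProp (v : AFml → Prop) : AFml → Prop
  | .neg φ => ¬ φ.evalProp v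
  | .and φ ψ => φ.evalProp v ∧ ψ.evalProp v
  | .or φ ψ => φ.evalProp v ∨ ψ.evalProp v
  | .imp φ ψ => φ.evalProp v → ψ.evalProp v
  | φ => v φ

/-- Propositional tautologies in the language of arithmetic. -/
def ATaut (φ : AFml) : Prop := ∀ v, φ.evalProp v

/-- `φ` is a tautological consequence of the set `X` of formulas. -/
def TC (X : Set AFml) (φ : AFml) : Prop :=
  ∀ v : AFml → Prop, (∀ ψ ∈ X, ψ.evalProp v) → φ.evalProp v

def iffF (φ ψ : AFml) : AFml := .and (.imp φ ψ) (.imp ψ φ)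

/-- Hilbert-style provability from the set of axioms `Γ` in classical first-order
logic with equality. -/
inductive Proves (Γ : Set AFml) : AFml → Prop
  | ax {φ} : φ ∈ Γ → Proves Γ φ
  | taut {φ} : ATaut φ → Proves Γ φ
  | mp {φ ψ} : Proves Γ (.imp φ ψ) → Proves Γ φ → Proves Γ ψ
  | allE (φ : AFml) (t : ATerm) : Proves Γ (.imp (.all φ) (φ.subst0 t))
  | exI (φ : AFml) (t : ATerm) : Proves Γ (.imp (φ.subst0 t) (.ex φ))
  | allImp (φ ψ : AFml) : Proves Γ (.imp (.all (.imp φ ψ)) (.imp (.all φ) (.all ψ)))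
  | vacAll (φ : AFml) : Proves Γ (.imp φ (.all (AFml.lift 0 φ)))
  | exDef (φ : AFml) : Proves Γ (iffF (.ex φ) (.neg (.all (.neg φ))))
  | gen {φ} : Proves Γ φ → Proves Γ (.all φ)
  | eqRefl (t : ATerm) : Proves Γ (.eq t t)
  | eqSubst (φ : AFml) (t s : ATerm) : Proves Γ (.imp (.eq t s) (.imp (φ.subst0 t) (φ.subst0 s)))

/-! ### Peano arithmetic -/

/-- The axioms of Peano arithmetic. -/
inductive PAax : AFml → Prop
  | succNeZero : PAax (.all (.neg (.eq (.succ (.var 0)) .zero)))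
  | succInj :
      PAax (.all (.all (.imp (.eq (.succ (.var 1)) (.succ (.var 0))) (.eq (.var 1) (.var 0)))))
  | addZero : PAax (.all (.eq (.add (.var 0) .zero) (.var 0)))
  | addSucc :
      PAax (.all (.all (.eq (.add (.var 1) (.succ (.var 0))) (.succ (.add (.var 1) (.var 0))))))
  | mulZero : PAax (.all (.eq (.mul (.var 0) .zero) .zero))
  | mulSucc :
      PAax (.all (.all (.eq (.mul (.var 1) (.succ (.var 0)))
        (.add (.mul (.var 1) (.var 0)) (.var 1)))))
  | leDef :
      PAax (.all (.all (iffF (.le (.var 1) (.var 0))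
        (.ex (.eq (.add (.var 0) (.var 2)) (.var 1))))))
  | ind (φ : AFml) :
      PAax (.imp (.and (φ.subst0 .zero) (.all (.imp φ (succSubst φ)))) (.all φ))

/-- Peano arithmetic, as a set of axioms. -/
def PA : Set AFml := {φ | PAax φ}

/-- The sentence `0 = 1`. -/
def botFml : AFml := .eq .zero (.succ .zero)

/-- `t < s`, as the formula `S(t) ≤ s`. -/
def ltF (t s : ATerm) : AFml := .le (.succ t) s

/-- `Δ₁(PA)` formulas: `Σ₁` formulas which are `PA`-provably equivalent to a `Π₁` formula. -/
def IsDelta1PA (φ : AFml) : Prop :=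
  IsSigma1 φ ∧ ∃ ψ, IsPi1 ψ ∧ Proves PA (iffF φ ψ)

/-! ### Theories, provability predicates, arithmetical interpretations -/

/-- `Tax` is primitive recursively axiomatized (via the Gödel numbering). -/
def PrAxiomatized (Tax : Set AFml) : Prop :=
  ∃ p : ℕ → Bool, Primrec p ∧ ∀ φ : AFml, φ ∈ Tax ↔ p φ.code = true

/-- `Σ₁`-soundness: every `T`-provable `Σ₁` sentence is true in `ℕ`. -/
def Sigma1Sound (Tax : Set AFml) : Prop :=
  ∀ φ : AFml, IsSigma1 φ → φ.FreeLt 0 → Proves Tax φ → TrueN φ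

/-- `P` is a provability predicate of `T`: a formula `P(x)` with at most the free
variable `x` such that for every formula `φ`, `T ⊢ φ` iff `PA ⊢ P(⌜φ⌝)`. -/
def IsProvPred (Tax : Set AFml) (P : AFml) : Prop :=
  P.FreeLt 1 ∧ ∀ φ : AFml, Proves Tax φ ↔ Proves PA (P.appNum φ)

/-- `f` is an arithmetical interpretation based on the predicate `P`. -/
def IsInterp (P : AFml) (f : MFml → AFml) : Prop :=
  (∀ i, (f (.var i)).FreeLt 0) ∧
  f .bot = botFml ∧
  (∀ A, f (.neg A) = .neg (f A)) ∧
  (∀ A B, f (.and A B) = .and (f A) (f B)) ∧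
  (∀ A B, f (.or A B) = .or (f A) (f B)) ∧
  (∀ A B, f (.imp A B) = .imp (f A) (f B)) ∧
  (∀ A, f (.box A) = P.appNum (f A))

/-- The provability logic of the predicate `P` (relative to the theory `Tax`). -/
def PL (Tax : Set AFml) (P : AFml) : Set MFml :=
  {A | ∀ f : MFml → AFml, IsInterp P f → Proves Tax (f A)}

/-- The formulas with a `T`-proof of code `≤ s` (relative to a proof enumeration `prf`). -/
def PTset (prf : ℕ → Option AFml) (s : ℕ) : Set AFml :=
  {φ | ∃ y ≤ s, prf y = some φ}

section

/-! ## Part A : models and substitution lemmas -/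

/-- Structures for the language of arithmetic. -/
structure AModel where
  C : Type
  z : C
  s : C → C
  add : C → C → C
  mul : C → C → C
  le : C → C → Prop

/-- Extending an environment. -/
def scons {α : Type} (a : α) (ρ : ℕ → α) : ℕ → α
  | 0 => a
  | n + 1 => ρ n

@[simp] theorem scons_zero {α : Type} (a : α) (ρ : ℕ → α) : scons a ρ 0 = a := rfl
@[simp] theorem scons_succ {α : Type} (a : α) (ρ : ℕ → α) (n : ℕ) :
    scons a ρ (n + 1) = ρ n := rfl
@[simp] theorem scons_one {α : Type} (a : α) (ρ : ℕ → α) : scons a ρ 1 = ρ 0 := rfl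
@[simp] theorem scons_two {α : Type} (a : α) (ρ : ℕ → α) : scons a ρ 2 = ρ 1 := rfl
@[simp] theorem scons_three {α : Type} (a : α) (ρ : ℕ → α) : scons a ρ 3 = ρ 2 := rfl
@[simp] theorem scons_four {α : Type} (a : α) (ρ : ℕ → α) : scons a ρ 4 = ρ 3 := rfl
@[simp] theorem scons_five {α : Type} (a : α) (ρ : ℕ → α) : scons a ρ 5 = ρ 4 := rfl

theorem consEnv_eq (a : ℕ) (ρ : ℕ → ℕ) : consEnv a ρ = scons a ρ := by
  funext n; cases n <;> rfl

def ATerm.valM (M : AModel) (ρ : ℕ → M.C) : ATerm → M.C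
  | .var n => ρ n
  | .zero => M.z
  | .succ t => M.s (t.valM M ρ)
  | .add t s => M.add (t.valM M ρ) (s.valM M ρ)
  | .mul t s => M.mul (t.valM M ρ) (s.valM M ρ)

def AFml.SatM (M : AModel) : (ℕ → M.C) → AFml → Prop
  | ρ, .eq t s => t.valM M ρ = s.valM M ρ
  | ρ, .le t s => M.le (t.valM M ρ) (s.valM M ρ)
  | ρ, .neg φ => ¬ AFml.SatM M ρ φ
  | ρ, .and φ ψ => AFml.SatM M ρ φ ∧ AFml.SatM M ρ ψ
  | ρ, .or φ ψ => AFml.SatM M ρ φ ∨ AFml.SatM M ρ ψ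
  | ρ, .imp φ ψ => AFml.SatM M ρ φ → AFml.SatM M ρ ψ
  | ρ, .all φ => ∀ a, AFml.SatM M (scons a ρ) φ
  | ρ, .ex φ => ∃ a, AFml.SatM M (scons a ρ) φ

/-- The standard model. -/
def stdM : AModel := ⟨ℕ, 0, Nat.succ, Nat.add, Nat.mul, Nat.le⟩

theorem valM_std (ρ : ℕ → ℕ) (t : ATerm) : t.valM stdM ρ = t.val ρ := by
  induction t with
  | var n => rfl
  | zero => rfl
  | succ t ih => simp only [ATerm.valM, ATerm.val, ih]; rfl
  | add t s iht ihs => simp only [ATerm.valM, ATerm.val, iht, ihs]; rfl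
  | mul t s iht ihs => simp only [ATerm.valM, ATerm.val, iht, ihs]; rfl

theorem satM_std (φ : AFml) : ∀ ρ : ℕ → ℕ, φ.SatM stdM ρ ↔ φ.Sat ρ := by
  induction φ with
  | eq t s => intro ρ; simp only [AFml.SatM, AFml.Sat, valM_std]; exact Iff.rfl
  | le t s => intro ρ; simp only [AFml.SatM, AFml.Sat, valM_std]; rfl
  | neg φ ih => intro ρ; simp only [AFml.SatM, AFml.Sat, ih]
  | and φ ψ ih1 ih2 => intro ρ; simp only [AFml.SatM, AFml.Sat, ih1, ih2]
  | or φ ψ ih1 ih2 => intro ρ; simp only [AFml.SatM, AFml.Sat, ih1, ih2]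
  | imp φ ψ ih1 ih2 => intro ρ; simp only [AFml.SatM, AFml.Sat, ih1, ih2]
  | all φ ih =>
    intro ρ; simp only [AFml.SatM, AFml.Sat, consEnv_eq]
    exact forall_congr' fun a => ih _
  | ex φ ih =>
    intro ρ; simp only [AFml.SatM, AFml.Sat, consEnv_eq]
    exact exists_congr fun a => ih _

/-- The substitution performing a lift. -/
def liftEnv (c : ℕ) (n : ℕ) : ATerm := .var (if n < c then n else n + 1)

theorem liftSub_liftEnv (c : ℕ) : liftSub (liftEnv c) = liftEnv (c + 1) := by
  funext n
  cases n with
  | zero => simp [liftSub, liftEnv]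
  | succ n =>
    simp only [liftSub, liftEnv, ATerm.lift]
    by_cases h : n < c <;> simp [h]

theorem ATerm.lift_eq (c : ℕ) (t : ATerm) : t.lift c = t.substAll (liftEnv c) := by
  induction t with
  | var n => rfl
  | zero => rfl
  | succ t ih => simp only [ATerm.lift, ATerm.substAll, ih]
  | add t s iht ihs => simp only [ATerm.lift, ATerm.substAll, iht, ihs]
  | mul t s iht ihs => simp only [ATerm.lift, ATerm.substAll, iht, ihs]

theorem AFml.lift_eq (φ : AFml) : ∀ c, φ.lift c = φ.substAll (liftEnv c) := by
  induction φ with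
  | eq t s => intro c; simp only [AFml.lift, AFml.substAll, ATerm.lift_eq]
  | le t s => intro c; simp only [AFml.lift, AFml.substAll, ATerm.lift_eq]
  | neg φ ih => intro c; simp only [AFml.lift, AFml.substAll, ih]
  | and φ ψ ih1 ih2 => intro c; simp only [AFml.lift, AFml.substAll, ih1, ih2]
  | or φ ψ ih1 ih2 => intro c; simp only [AFml.lift, AFml.substAll, ih1, ih2]
  | imp φ ψ ih1 ih2 => intro c; simp only [AFml.lift, AFml.substAll, ih1, ih2]
  | all φ ih => intro c; simp only [AFml.lift, AFml.substAll, ih, liftSub_liftEnv]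
  | ex φ ih => intro c; simp only [AFml.lift, AFml.substAll, ih, liftSub_liftEnv]

theorem ATerm.subst_comp (σ τ : ℕ → ATerm) (t : ATerm) :
    (t.substAll σ).substAll τ = t.substAll fun i => (σ i).substAll τ := by
  induction t with
  | var n => rfl
  | zero => rfl
  | succ t ih => simp only [ATerm.substAll, ih]
  | add t s iht ihs => simp only [ATerm.substAll, iht, ihs]
  | mul t s iht ihs => simp only [ATerm.substAll, iht, ihs]

theorem liftSub_comp (σ τ : ℕ → ATerm) :
    (fun i => (liftSub σ i).substAll (liftSub τ)) = liftSub fun i => (σ i).substAll τ := by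
  funext n
  cases n with
  | zero => rfl
  | succ n =>
    simp only [liftSub, ATerm.lift_eq, ATerm.subst_comp]
    congr 1
    funext i
    simp [liftEnv, ATerm.substAll, liftSub, ATerm.lift_eq]

theorem AFml.subst_comp (φ : AFml) : ∀ σ τ : ℕ → ATerm,
    (φ.substAll σ).substAll τ = φ.substAll fun i => (σ i).substAll τ := by
  induction φ with
  | eq t s => intro σ τ; simp only [AFml.substAll, ATerm.subst_comp]
  | le t s => intro σ τ; simp only [AFml.substAll, ATerm.subst_comp]
  | neg φ ih => intro σ τ; simp only [AFml.substAll, ih]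
  | and φ ψ ih1 ih2 => intro σ τ; simp only [AFml.substAll, ih1, ih2]
  | or φ ψ ih1 ih2 => intro σ τ; simp only [AFml.substAll, ih1, ih2]
  | imp φ ψ ih1 ih2 => intro σ τ; simp only [AFml.substAll, ih1, ih2]
  | all φ ih => intro σ τ; simp only [AFml.substAll, ih, liftSub_comp]
  | ex φ ih => intro σ τ; simp only [AFml.substAll, ih, liftSub_comp]

theorem ATerm.subst_congr {σ τ : ℕ → ATerm} (N : ℕ) (h : ∀ i < N, σ i = τ i) (t : ATerm)
    (ht : t.FreeLt N) : t.substAll σ = t.substAll τ := by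
  induction t with
  | var n => exact h n ht
  | zero => rfl
  | succ t ih => simp only [ATerm.substAll, ih ht]
  | add t s iht ihs => simp only [ATerm.substAll, iht ht.1, ihs ht.2]
  | mul t s iht ihs => simp only [ATerm.substAll, iht ht.1, ihs ht.2]

theorem liftSub_congr {σ τ : ℕ → ATerm} (N : ℕ) (h : ∀ i < N, σ i = τ i) :
    ∀ i < N + 1, liftSub σ i = liftSub τ i := by
  intro i hi
  cases i with
  | zero => rfl
  | succ i => simp only [liftSub]; rw [h i (by omega)]

theorem AFml.subst_congr (φ : AFml) : ∀ {σ τ : ℕ → ATerm} (N : ℕ) (_ : ∀ i < N, σ i = τ i)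
    (_ : φ.FreeLt N), φ.substAll σ = φ.substAll τ := by
  induction φ with
  | eq t s => intro σ τ N h hf; simp only [AFml.substAll, ATerm.subst_congr N h _ hf.1, ATerm.subst_congr N h _ hf.2]
  | le t s => intro σ τ N h hf; simp only [AFml.substAll, ATerm.subst_congr N h _ hf.1, ATerm.subst_congr N h _ hf.2]
  | neg φ ih => intro σ τ N h hf; simp only [AFml.substAll, ih N h hf]
  | and φ ψ ih1 ih2 => intro σ τ N h hf; simp only [AFml.substAll, ih1 N h hf.1, ih2 N h hf.2]
  | or φ ψ ih1 ih2 => intro σ τ N h hf; simp only [AFml.substAll, ih1 N h hf.1, ih2 N h hf.2]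
  | imp φ ψ ih1 ih2 => intro σ τ N h hf; simp only [AFml.substAll, ih1 N h hf.1, ih2 N h hf.2]
  | all φ ih => intro σ τ N h hf; simp only [AFml.substAll, ih (N+1) (liftSub_congr N h) hf]
  | ex φ ih => intro σ τ N h hf; simp only [AFml.substAll, ih (N+1) (liftSub_congr N h) hf]

theorem ATerm.subst_var (t : ATerm) : t.substAll .var = t := by
  induction t with
  | var n => rfl
  | zero => rfl
  | succ t ih => simp only [ATerm.substAll, ih]
  | add t s iht ihs => simp only [ATerm.substAll, iht, ihs]
  | mul t s iht ihs => simp only [ATerm.substAll, iht, ihs]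

theorem liftSub_var : liftSub .var = .var := by
  funext n; cases n <;> rfl

theorem AFml.subst_var (φ : AFml) : φ.substAll .var = φ := by
  induction φ with
  | eq t s => simp only [AFml.substAll, ATerm.subst_var]
  | le t s => simp only [AFml.substAll, ATerm.subst_var]
  | neg φ ih => simp only [AFml.substAll, ih]
  | and φ ψ ih1 ih2 => simp only [AFml.substAll, ih1, ih2]
  | or φ ψ ih1 ih2 => simp only [AFml.substAll, ih1, ih2]
  | imp φ ψ ih1 ih2 => simp only [AFml.substAll, ih1, ih2]
  | all φ ih => simp only [AFml.substAll, liftSub_var, ih]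
  | ex φ ih => simp only [AFml.substAll, liftSub_var, ih]

theorem AFml.subst_closed (φ : AFml) (h : φ.FreeLt 0) (σ : ℕ → ATerm) : φ.substAll σ = φ := by
  conv_rhs => rw [← φ.subst_var]
  exact φ.subst_congr 0 (by simp) h

/-- Semantics of substitution. -/
theorem ATerm.valM_subst (M : AModel) (ρ : ℕ → M.C) (σ : ℕ → ATerm) (t : ATerm) :
    (t.substAll σ).valM M ρ = t.valM M fun i => (σ i).valM M ρ := by
  induction t with
  | var n => rfl
  | zero => rfl
  | succ t ih => simp only [ATerm.substAll, ATerm.valM, ih]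
  | add t s iht ihs => simp only [ATerm.substAll, ATerm.valM, iht, ihs]
  | mul t s iht ihs => simp only [ATerm.substAll, ATerm.valM, iht, ihs]

theorem valM_lift (M : AModel) (ρ : ℕ → M.C) (a : M.C) (t : ATerm) :
    (t.lift 0).valM M (scons a ρ) = t.valM M ρ := by
  rw [ATerm.lift_eq, ATerm.valM_subst]
  rfl

theorem valM_liftSub (M : AModel) (ρ : ℕ → M.C) (a : M.C) (σ : ℕ → ATerm) :
    (fun i => (liftSub σ i).valM M (scons a ρ)) = scons a fun i => (σ i).valM M ρ := by
  funext n
  cases n with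
  | zero => rfl
  | succ n => simp only [liftSub, valM_lift, scons]

theorem AFml.satM_subst (M : AModel) (φ : AFml) : ∀ (ρ : ℕ → M.C) (σ : ℕ → ATerm),
    (φ.substAll σ).SatM M ρ ↔ φ.SatM M fun i => (σ i).valM M ρ := by
  induction φ with
  | eq t s => intro ρ σ; simp only [AFml.substAll, AFml.SatM, ATerm.valM_subst]
  | le t s => intro ρ σ; simp only [AFml.substAll, AFml.SatM, ATerm.valM_subst]
  | neg φ ih => intro ρ σ; simp only [AFml.substAll, AFml.SatM, ih]
  | and φ ψ ih1 ih2 => intro ρ σ; simp only [AFml.substAll, AFml.SatM, ih1, ih2]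
  | or φ ψ ih1 ih2 => intro ρ σ; simp only [AFml.substAll, AFml.SatM, ih1, ih2]
  | imp φ ψ ih1 ih2 => intro ρ σ; simp only [AFml.substAll, AFml.SatM, ih1, ih2]
  | all φ ih => intro ρ σ; simp only [AFml.substAll, AFml.SatM, ih, valM_liftSub]
  | ex φ ih => intro ρ σ; simp only [AFml.substAll, AFml.SatM, ih, valM_liftSub]

theorem satM_subst0 (M : AModel) (φ : AFml) (ρ : ℕ → M.C) (t : ATerm) :
    (φ.subst0 t).SatM M ρ ↔ φ.SatM M (scons (t.valM M ρ) ρ) := by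
  rw [AFml.subst0, AFml.satM_subst]
  have : (fun i => (subst0Env t i).valM M ρ) = scons (t.valM M ρ) ρ := by
    funext n; cases n <;> rfl
  rw [this]

theorem satM_lift0 (M : AModel) (φ : AFml) (ρ : ℕ → M.C) (a : M.C) :
    (φ.lift 0).SatM M (scons a ρ) ↔ φ.SatM M ρ := by
  rw [AFml.lift_eq, AFml.satM_subst]
  rfl

theorem satM_succSubst (M : AModel) (φ : AFml) (ρ : ℕ → M.C) (a : M.C) :
    (succSubst φ).SatM M (scons a ρ) ↔ φ.SatM M (scons (M.s a) ρ) := by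
  rw [succSubst, AFml.satM_subst]
  have : (fun i => ((if i = 0 then ATerm.succ (.var 0) else .var i : ATerm)).valM M (scons a ρ))
      = scons (M.s a) ρ := by
    funext n; cases n <;> simp [ATerm.valM]
  rw [this]

theorem ATerm.valM_congr (M : AModel) {ρ ρ' : ℕ → M.C} (N : ℕ) (h : ∀ i < N, ρ i = ρ' i)
    (t : ATerm) (ht : t.FreeLt N) : t.valM M ρ = t.valM M ρ' := by
  induction t with
  | var n => exact h n ht
  | zero => rfl
  | succ t ih => simp only [ATerm.valM, ih ht]
  | add t s iht ihs => simp only [ATerm.valM, iht ht.1, ihs ht.2]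
  | mul t s iht ihs => simp only [ATerm.valM, iht ht.1, ihs ht.2]

theorem scons_congr {α : Type} {ρ ρ' : ℕ → α} (N : ℕ) (h : ∀ i < N, ρ i = ρ' i) (a : α) :
    ∀ i < N + 1, scons a ρ i = scons a ρ' i := by
  intro i hi
  cases i with
  | zero => rfl
  | succ i => exact h i (by omega)

theorem AFml.satM_congr (M : AModel) (φ : AFml) : ∀ {ρ ρ' : ℕ → M.C} (N : ℕ)
    (_ : ∀ i < N, ρ i = ρ' i) (_ : φ.FreeLt N), φ.SatM M ρ ↔ φ.SatM M ρ' := by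
  induction φ with
  | eq t s => intro ρ ρ' N h hf; simp only [AFml.SatM, ATerm.valM_congr M N h _ hf.1, ATerm.valM_congr M N h _ hf.2]
  | le t s => intro ρ ρ' N h hf; simp only [AFml.SatM, ATerm.valM_congr M N h _ hf.1, ATerm.valM_congr M N h _ hf.2]
  | neg φ ih => intro ρ ρ' N h hf; simp only [AFml.SatM, ih N h hf]
  | and φ ψ ih1 ih2 => intro ρ ρ' N h hf; simp only [AFml.SatM, ih1 N h hf.1, ih2 N h hf.2]
  | or φ ψ ih1 ih2 => intro ρ ρ' N h hf; simp only [AFml.SatM, ih1 N h hf.1, ih2 N h hf.2]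
  | imp φ ψ ih1 ih2 => intro ρ ρ' N h hf; simp only [AFml.SatM, ih1 N h hf.1, ih2 N h hf.2]
  | all φ ih => intro ρ ρ' N h hf; exact forall_congr' fun a => ih (N+1) (scons_congr N h a) hf
  | ex φ ih => intro ρ ρ' N h hf; exact exists_congr fun a => ih (N+1) (scons_congr N h a) hf

theorem satM_closed (M : AModel) (φ : AFml) (h : φ.FreeLt 0) (ρ ρ' : ℕ → M.C) :
    φ.SatM M ρ ↔ φ.SatM M ρ' := φ.satM_congr M 0 (by simp) h

theorem ATerm.freeLt_mono {N K : ℕ} (hNK : N ≤ K) (t : ATerm) (h : t.FreeLt N) : t.FreeLt K := by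
  induction t with
  | var n => exact lt_of_lt_of_le h hNK
  | zero => trivial
  | succ t ih => exact ih h
  | add t s iht ihs => exact ⟨iht h.1, ihs h.2⟩
  | mul t s iht ihs => exact ⟨iht h.1, ihs h.2⟩

theorem AFml.freeLt_mono (φ : AFml) : ∀ {N K : ℕ} (_ : N ≤ K) (_ : φ.FreeLt N), φ.FreeLt K := by
  induction φ with
  | eq t s => intro N K hNK h; exact ⟨t.freeLt_mono hNK h.1, s.freeLt_mono hNK h.2⟩
  | le t s => intro N K hNK h; exact ⟨t.freeLt_mono hNK h.1, s.freeLt_mono hNK h.2⟩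
  | neg φ ih => intro N K hNK h; exact ih hNK h
  | and φ ψ ih1 ih2 => intro N K hNK h; exact ⟨ih1 hNK h.1, ih2 hNK h.2⟩
  | or φ ψ ih1 ih2 => intro N K hNK h; exact ⟨ih1 hNK h.1, ih2 hNK h.2⟩
  | imp φ ψ ih1 ih2 => intro N K hNK h; exact ⟨ih1 hNK h.1, ih2 hNK h.2⟩
  | all φ ih => intro N K hNK h; exact ih (N := N + 1) (K := K + 1) (by omega) h
  | ex φ ih => intro N K hNK h; exact ih (N := N + 1) (K := K + 1) (by omega) h

theorem ATerm.exists_freeLt (t : ATerm) : ∃ N, t.FreeLt N := by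
  induction t with
  | var n => exact ⟨n + 1, Nat.lt_succ_self n⟩
  | zero => exact ⟨0, trivial⟩
  | succ t ih => exact ih
  | add t s iht ihs =>
    obtain ⟨a, ha⟩ := iht; obtain ⟨b, hb⟩ := ihs
    exact ⟨max a b, t.freeLt_mono (le_max_left a b) ha, s.freeLt_mono (le_max_right a b) hb⟩
  | mul t s iht ihs =>
    obtain ⟨a, ha⟩ := iht; obtain ⟨b, hb⟩ := ihs
    exact ⟨max a b, t.freeLt_mono (le_max_left a b) ha, s.freeLt_mono (le_max_right a b) hb⟩

theorem exists_freeLt_two {φ ψ : AFml} (h1 : ∃ N, φ.FreeLt N) (h2 : ∃ N, ψ.FreeLt N) :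
    ∃ N, φ.FreeLt N ∧ ψ.FreeLt N := by
  obtain ⟨a, ha⟩ := h1; obtain ⟨b, hb⟩ := h2
  exact ⟨max a b, φ.freeLt_mono (le_max_left a b) ha, ψ.freeLt_mono (le_max_right a b) hb⟩

theorem exists_freeLt_twoT (t s : ATerm) : ∃ N, t.FreeLt N ∧ s.FreeLt N := by
  obtain ⟨a, ha⟩ := t.exists_freeLt; obtain ⟨b, hb⟩ := s.exists_freeLt
  exact ⟨max a b, t.freeLt_mono (le_max_left a b) ha, s.freeLt_mono (le_max_right a b) hb⟩

theorem AFml.exists_freeLt (φ : AFml) : ∃ N, φ.FreeLt N := by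
  induction φ with
  | eq t s => exact exists_freeLt_twoT t s
  | le t s => exact exists_freeLt_twoT t s
  | neg φ ih => exact ih
  | and φ ψ ih1 ih2 => exact exists_freeLt_two ih1 ih2
  | or φ ψ ih1 ih2 => exact exists_freeLt_two ih1 ih2
  | imp φ ψ ih1 ih2 => exact exists_freeLt_two ih1 ih2
  | all φ ih => obtain ⟨N, h⟩ := ih; exact ⟨N, φ.freeLt_mono (Nat.le_succ N) h⟩
  | ex φ ih => obtain ⟨N, h⟩ := ih; exact ⟨N, φ.freeLt_mono (Nat.le_succ N) h⟩

theorem ATerm.freeLt_subst {N K : ℕ} {σ : ℕ → ATerm} (hσ : ∀ i < N, (σ i).FreeLt K) (t : ATerm)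
    (h : t.FreeLt N) : (t.substAll σ).FreeLt K := by
  induction t with
  | var n => exact hσ n h
  | zero => trivial
  | succ t ih => exact ih h
  | add t s iht ihs => exact ⟨iht h.1, ihs h.2⟩
  | mul t s iht ihs => exact ⟨iht h.1, ihs h.2⟩

theorem freeLt_liftSub {N K : ℕ} {σ : ℕ → ATerm} (hσ : ∀ i < N, (σ i).FreeLt K) :
    ∀ i < N + 1, (liftSub σ i).FreeLt (K + 1) := by
  intro i hi
  cases i with
  | zero => exact Nat.succ_pos K
  | succ i =>
    simp only [liftSub, ATerm.lift_eq]
    refine ATerm.freeLt_subst (N := K) ?_ _ (hσ i (by omega))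
    intro j hj
    show j + 1 < K + 1
    omega

theorem AFml.freeLt_subst (φ : AFml) : ∀ {N K : ℕ} {σ : ℕ → ATerm}
    (_ : ∀ i < N, (σ i).FreeLt K) (_ : φ.FreeLt N), (φ.substAll σ).FreeLt K := by
  induction φ with
  | eq t s => intro N K σ hσ h; exact ⟨t.freeLt_subst hσ h.1, s.freeLt_subst hσ h.2⟩
  | le t s => intro N K σ hσ h; exact ⟨t.freeLt_subst hσ h.1, s.freeLt_subst hσ h.2⟩
  | neg φ ih => intro N K σ hσ h; exact ih hσ h
  | and φ ψ ih1 ih2 => intro N K σ hσ h; exact ⟨ih1 hσ h.1, ih2 hσ h.2⟩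
  | or φ ψ ih1 ih2 => intro N K σ hσ h; exact ⟨ih1 hσ h.1, ih2 hσ h.2⟩
  | imp φ ψ ih1 ih2 => intro N K σ hσ h; exact ⟨ih1 hσ h.1, ih2 hσ h.2⟩
  | all φ ih => intro N K σ hσ h; exact ih (freeLt_liftSub hσ) h
  | ex φ ih => intro N K σ hσ h; exact ih (freeLt_liftSub hσ) h

/-- Substitutions by variables everywhere small: the result has small free variables,
whatever the formula. -/
theorem AFml.freeLt_subst' (φ : AFml) {K : ℕ} {σ : ℕ → ATerm}
    (hσ : ∀ i, (σ i).FreeLt K) : (φ.substAll σ).FreeLt K := by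
  obtain ⟨N, hN⟩ := φ.exists_freeLt
  exact φ.freeLt_subst (fun i _ => hσ i) hN

theorem numeral_freeLt (n K : ℕ) : (numeral n).FreeLt K := by
  induction n with
  | zero => trivial
  | succ n ih => exact ih

theorem freeLt_subst0 {φ : AFml} {K : ℕ} {t : ATerm} (h : φ.FreeLt (K + 1)) (ht : t.FreeLt K) :
    (φ.subst0 t).FreeLt K := by
  refine φ.freeLt_subst (N := K + 1) ?_ h
  intro i hi
  cases i with
  | zero => exact ht
  | succ i => show i < K; omega

/-- Codes are injective. -/
theorem ATerm.code_inj : ∀ {t s : ATerm}, t.code = s.code → t = s := by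
  intro t
  induction t with
  | var n => intro s h; cases s <;> simp_all [ATerm.code, Nat.pair_eq_pair]
  | zero => intro s h; cases s <;> simp_all [ATerm.code, Nat.pair_eq_pair]
  | succ t ih =>
    intro s h; cases s <;> simp [ATerm.code, Nat.pair_eq_pair] at h
    exact congrArg _ (ih h)
  | add t s iht ihs =>
    intro s h; cases s <;> simp [ATerm.code, Nat.pair_eq_pair] at h
    rw [iht h.1, ihs h.2]
  | mul t s iht ihs =>
    intro s h; cases s <;> simp [ATerm.code, Nat.pair_eq_pair] at h
    rw [iht h.1, ihs h.2]

theorem AFml.code_inj : ∀ {φ ψ : AFml}, φ.code = ψ.code → φ = ψ := by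
  intro φ
  induction φ with
  | eq t s =>
    intro s h; cases s <;> simp [AFml.code, Nat.pair_eq_pair] at h
    rw [ATerm.code_inj h.1, ATerm.code_inj h.2]
  | le t s =>
    intro s h; cases s <;> simp [AFml.code, Nat.pair_eq_pair] at h
    rw [ATerm.code_inj h.1, ATerm.code_inj h.2]
  | neg φ ih =>
    intro s h; cases s <;> simp [AFml.code, Nat.pair_eq_pair] at h
    rw [ih h]
  | all φ ih =>
    intro s h; cases s <;> simp [AFml.code, Nat.pair_eq_pair] at h
    rw [ih h]
  | ex φ ih =>
    intro s h; cases s <;> simp [AFml.code, Nat.pair_eq_pair] at h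
    rw [ih h]
  | and φ ψ ih1 ih2 =>
    intro s h; cases s <;> simp [AFml.code, Nat.pair_eq_pair] at h
    rw [ih1 h.1, ih2 h.2]
  | or φ ψ ih1 ih2 =>
    intro s h; cases s <;> simp [AFml.code, Nat.pair_eq_pair] at h
    rw [ih1 h.1, ih2 h.2]
  | imp φ ψ ih1 ih2 =>
    intro s h; cases s <;> simp [AFml.code, Nat.pair_eq_pair] at h
    rw [ih1 h.1, ih2 h.2]

/-! ## Part B : soundness -/

theorem evalProp_satM (M : AModel) (ρ : ℕ → M.C) (φ : AFml) :
    φ.evalProp (fun ψ => ψ.SatM M ρ) ↔ φ.SatM M ρ := by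
  induction φ with
  | eq t s => rfl
  | le t s => rfl
  | neg φ ih => simp only [AFml.evalProp, AFml.SatM, ih]
  | and φ ψ ih1 ih2 => simp only [AFml.evalProp, AFml.SatM, ih1, ih2]
  | or φ ψ ih1 ih2 => simp only [AFml.evalProp, AFml.SatM, ih1, ih2]
  | imp φ ψ ih1 ih2 => simp only [AFml.evalProp, AFml.SatM, ih1, ih2]
  | all φ ih => rfl
  | ex φ ih => rfl

/-- `M` is a model of `Γ`. -/
def IsModel (M : AModel) (Γ : Set AFml) : Prop := ∀ φ ∈ Γ, ∀ ρ, φ.SatM M ρ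

theorem soundness {M : AModel} {Γ : Set AFml} (hM : IsModel M Γ) {φ : AFml} (h : Proves Γ φ) :
    ∀ ρ, φ.SatM M ρ := by
  induction h with
  | ax h => exact hM _ h
  | taut h => intro ρ; exact (evalProp_satM M ρ _).1 (h _)
  | mp _ _ ih1 ih2 => intro ρ; exact ih1 ρ (ih2 ρ)
  | allE φ t => intro ρ h; rw [satM_subst0]; exact h _
  | exI φ t => intro ρ h; rw [satM_subst0] at h; exact ⟨_, h⟩
  | allImp φ ψ => intro ρ h1 h2 a; exact h1 a (h2 a)
  | vacAll φ => intro ρ h a; rw [satM_lift0]; exact h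
  | exDef φ =>
    intro ρ
    simp only [iffF, AFml.SatM]
    constructor
    · rintro ⟨a, ha⟩ h; exact h a ha
    · intro h; by_contra h'; exact h fun a ha => h' ⟨a, ha⟩
  | gen _ ih => intro ρ a; exact ih _
  | eqRefl t => intro ρ; rfl
  | eqSubst φ t s =>
    intro ρ h1 h2
    simp only [AFml.SatM] at h1
    rw [satM_subst0] at h2 ⊢
    rwa [← h1]


end

section

/-! ## Part C : completeness -/

theorem tc1 {Γ : Set AFml} {φ ψ : AFml} (h : ∀ v, φ.evalProp v → ψ.evalProp v)
    (h1 : Proves Γ φ) : Proves Γ ψ := .mp (.taut fun v => h v) h1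

theorem tc2 {Γ : Set AFml} {φ χ ψ : AFml} (h : ∀ v, φ.evalProp v → χ.evalProp v → ψ.evalProp v)
    (h1 : Proves Γ φ) (h2 : Proves Γ χ) : Proves Γ ψ := .mp (.mp (.taut fun v => h v) h1) h2

theorem lift_subst0T (t s : ATerm) : (t.lift 0).substAll (subst0Env s) = t := by
  rw [ATerm.lift_eq, ATerm.subst_comp]
  exact t.subst_var

theorem proves_subst_aux {Γ : Set AFml} (N : ℕ) : ∀ (χ : AFml) (σ : ℕ → ATerm), Proves Γ χ →
    Proves Γ (χ.substAll fun i => if i < N then σ i else .var (i - N)) := by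
  induction N with
  | zero =>
    intro χ σ h
    have : (fun i => if i < 0 then σ i else ATerm.var (i - 0)) = .var := by funext i; simp
    rw [this, AFml.subst_var]; exact h
  | succ N ih =>
    intro χ σ h
    have h1 := ih χ (fun i => (σ i).lift 0) h
    have h2 := Proves.mp (.allE _ (σ N)) (.gen h1)
    rw [AFml.subst0, AFml.subst_comp] at h2
    convert h2 using 2
    funext i
    by_cases hi : i < N
    · have : i < N + 1 := by omega
      simp [hi, this, lift_subst0T]
    · by_cases hi' : i = N
      · subst hi'; simp [ATerm.substAll, subst0Env]
      · have h3 : ¬ i < N + 1 := by omega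
        obtain ⟨j, rfl⟩ : ∃ j, i = N + 1 + j := ⟨i - (N + 1), by omega⟩
        have h4 : N + 1 + j - N = j + 1 := by omega
        simp [hi, h3, h4, ATerm.substAll, subst0Env]

theorem proves_subst {Γ : Set AFml} {χ : AFml} (σ : ℕ → ATerm) (h : Proves Γ χ) :
    Proves Γ (χ.substAll σ) := by
  obtain ⟨N, hN⟩ := χ.exists_freeLt
  have := proves_subst_aux N χ σ h
  rwa [χ.subst_congr N (τ := σ) (by intro i hi; simp [hi]) hN] at this

theorem proves_fresh {Γ : Set AFml} {ψ φ : AFml} {v : ℕ} (hψ : ψ.FreeLt v) (hφ : φ.FreeLt (v + 1))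
    (h : Proves Γ (.imp ψ (φ.subst0 (.var v)))) : Proves Γ (.imp ψ (.all φ)) := by
  have h1 := proves_subst (fun i => if i = v then .var 0 else .var (i + 1)) h
  simp only [AFml.substAll, AFml.subst0, AFml.subst_comp] at h1
  have e1 : ψ.substAll (fun i => if i = v then .var 0 else .var (i + 1)) = ψ.lift 0 := by
    rw [AFml.lift_eq]
    refine ψ.subst_congr v ?_ hψ
    intro i hi
    have : i ≠ v := by omega
    simp [this, liftEnv]
  have e2 : (φ.substAll fun i => (subst0Env (.var v) i).substAll
      (fun i => if i = v then .var 0 else .var (i + 1))) = φ := by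
    conv_rhs => rw [← φ.subst_var]
    refine φ.subst_congr (v + 1) ?_ hφ
    intro i hi
    cases i with
    | zero => simp [subst0Env, ATerm.substAll]
    | succ i =>
      have : i ≠ v := by omega
      simp [subst0Env, ATerm.substAll, this]
  rw [e1, e2] at h1
  have h2 := Proves.mp (.allImp _ _) (.gen h1)
  exact tc2 (by intro v; simp only [AFml.evalProp]; tauto) (.vacAll ψ) h2

/-- Consistency of a formula with `Γ`. -/
def Con (Γ : Set AFml) (ψ : AFml) : Prop := ¬ Proves Γ (.neg ψ)

theorem con_step {Γ : Set AFml} {ψ : AFml} (h : Con Γ ψ) (χ : AFml) :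
    ∃ ψ', Con Γ ψ' ∧ Proves Γ (.imp ψ' ψ) ∧ (Proves Γ (.imp ψ' χ) ∨
      (Proves Γ (.imp ψ' (.neg χ)) ∧
        ∀ φ, χ = .all φ → ∃ t, Proves Γ (.imp ψ' (.neg (φ.subst0 t))))) := by
  by_cases h1 : Con Γ (.and ψ χ)
  · refine ⟨_, h1, .taut ?_, Or.inl (.taut ?_)⟩ <;> intro v <;> simp only [AFml.evalProp] <;> tauto
  · have h1 := not_not.1 h1
    by_cases h2 : ∃ φ, χ = .all φ
    · obtain ⟨φ, rfl⟩ := h2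
      obtain ⟨v, hv1, hv2⟩ := exists_freeLt_two ψ.exists_freeLt φ.exists_freeLt
      refine ⟨.and ψ (.neg (φ.subst0 (.var v))), ?_, .taut ?_, Or.inr ⟨?_, ?_⟩⟩
      · intro h3
        have h4 : Proves Γ (.imp ψ (φ.subst0 (.var v))) :=
          tc1 (by intro v; simp only [AFml.evalProp]; tauto) h3
        have h5 := proves_fresh hv1 (φ.freeLt_mono (Nat.le_succ v) hv2) h4
        exact h (tc2 (by intro v; simp only [AFml.evalProp]; tauto) h1 h5)
      · intro v; simp only [AFml.evalProp]; tauto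
      · exact tc1 (by intro v; simp only [AFml.evalProp]; tauto) (Proves.allE φ (.var v))
      · intro φ' e
        cases e
        exact ⟨.var v, .taut (by intro v; simp only [AFml.evalProp]; tauto)⟩
    · refine ⟨.and ψ (.neg χ), ?_, .taut ?_, Or.inr ⟨.taut ?_, ?_⟩⟩
      · intro h3
        exact h (tc2 (by intro v; simp only [AFml.evalProp]; tauto) h1 h3)
      · intro v; simp only [AFml.evalProp]; tauto
      · intro v; simp only [AFml.evalProp]; tauto
      · intro φ e; exact absurd ⟨φ, e⟩ h2

instance : Countable AFml := ⟨AFml.code, fun _ _ h => AFml.code_inj h⟩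
instance : Nonempty AFml := ⟨botFml⟩

/-- Maximal consistent Henkin sets. -/
structure Henkin (Γ : Set AFml) (U : AFml → Prop) : Prop where
  thm : ∀ {χ}, Proves Γ χ → U χ
  mp : ∀ {χ θ}, U (.imp χ θ) → U χ → U θ
  neg : ∀ {χ}, U (.neg χ) ↔ ¬ U χ
  wit : ∀ {φ}, ¬ U (.all φ) → ∃ t, U (.neg (φ.subst0 t))

theorem exists_henkin {Γ : Set AFml} {ψ : AFml} (h : Con Γ ψ) : ∃ U, Henkin Γ U ∧ U ψ := by
  obtain ⟨e, he⟩ := exists_surjective_nat AFml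
  choose f hf1 hf2 hf3 using fun (ψ : {ψ // Con Γ ψ}) => con_step ψ.2
  let s : ℕ → {ψ // Con Γ ψ} := fun n => Nat.rec ⟨ψ, h⟩ (fun n x => ⟨f x (e n), hf1 x (e n)⟩) n
  have s0 : (s 0).1 = ψ := rfl
  have hs : ∀ n, (s (n + 1)).1 = f (s n) (e n) := fun n => rfl
  have mono : ∀ n k, Proves Γ (.imp (s (n + k)).1 (s n).1) := by
    intro n k
    induction k with
    | zero => exact .taut (by intro v; simp [AFml.evalProp])
    | succ k ih =>
      have := hf2 (s (n + k)) (e (n + k))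
      rw [← hs] at this
      exact tc2 (by intro v; simp only [AFml.evalProp]; tauto) this ih
  have mono' : ∀ {n k χ}, n ≤ k → Proves Γ (.imp (s n).1 χ) → Proves Γ (.imp (s k).1 χ) := by
    intro n k χ hnk hχ
    obtain ⟨j, rfl⟩ := Nat.exists_eq_add_of_le hnk
    exact tc2 (by intro v; simp only [AFml.evalProp]; tauto) (mono n j) hχ
  have both : ∀ {n k χ}, Proves Γ (.imp (s n).1 χ) → Proves Γ (.imp (s k).1 (.neg χ)) → False := by
    intro n k χ h1 h2
    have h1 := mono' (le_max_left n k) h1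
    have h2 := mono' (le_max_right n k) h2
    exact (s (max n k)).2 (tc2 (by intro v; simp only [AFml.evalProp]; tauto) h1 h2)
  refine ⟨fun χ => ∃ n, Proves Γ (.imp (s n).1 χ), ⟨?_, ?_, ?_, ?_⟩, 0, ?_⟩
  · intro χ hχ; exact ⟨0, tc1 (by intro v; simp only [AFml.evalProp]; tauto) hχ⟩
  · rintro χ θ ⟨n, hn⟩ ⟨k, hk⟩
    have hn := mono' (le_max_left n k) hn
    have hk := mono' (le_max_right n k) hk
    exact ⟨_, tc2 (by intro v; simp only [AFml.evalProp]; tauto) hn hk⟩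
  · intro χ
    constructor
    · rintro ⟨n, hn⟩ ⟨k, hk⟩; exact both hk hn
    · intro hn
      obtain ⟨n, rfl⟩ := he χ
      rcases hf3 (s n) (e n) with h1 | h1
      · exact absurd ⟨n + 1, h1⟩ hn
      · exact ⟨n + 1, h1.1⟩
  · intro φ hn
    obtain ⟨n, hφ⟩ := he (.all φ)
    rcases hf3 (s n) (e n) with h1 | h1
    · rw [hφ] at h1
      exact absurd ⟨n + 1, by rw [hs, hφ]; exact h1⟩ hn
    · obtain ⟨t, ht⟩ := h1.2 φ hφ
      exact ⟨t, n + 1, ht⟩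
  · exact .taut (by intro v; simp [AFml.evalProp, s0])

namespace Henkin
variable {Γ : Set AFml} {U : AFml → Prop}

theorem imp (H : Henkin Γ U) {χ θ : AFml} : U (.imp χ θ) ↔ (U χ → U θ) := by
  constructor
  · exact H.mp
  · intro h
    by_cases hχ : U χ
    · exact H.mp (H.thm (.taut (by intro v; simp only [AFml.evalProp]; tauto))) (h hχ)
    · exact H.mp (H.thm (.taut (by intro v; simp only [AFml.evalProp]; tauto))) (H.neg.2 hχ)

theorem and (H : Henkin Γ U) {χ θ : AFml} : U (.and χ θ) ↔ (U χ ∧ U θ) := by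
  constructor
  · intro h
    exact ⟨H.mp (H.thm (.taut (by intro v; simp only [AFml.evalProp]; tauto))) h,
      H.mp (H.thm (.taut (by intro v; simp only [AFml.evalProp]; tauto))) h⟩
  · intro h
    exact H.mp (H.mp (H.thm (.taut (by intro v; simp only [AFml.evalProp]; tauto))) h.1) h.2

theorem or (H : Henkin Γ U) {χ θ : AFml} : U (.or χ θ) ↔ (U χ ∨ U θ) := by
  constructor
  · intro h
    by_contra h'
    rw [not_or, ← H.neg, ← H.neg] at h'
    have : U (.neg (.or χ θ)) :=
      H.mp (H.mp (H.thm (.taut (by intro v; simp only [AFml.evalProp]; tauto))) h'.1) h'.2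
    exact H.neg.1 this h
  · rintro (h | h)
    · exact H.mp (H.thm (.taut (by intro v; simp only [AFml.evalProp]; tauto))) h
    · exact H.mp (H.thm (.taut (by intro v; simp only [AFml.evalProp]; tauto))) h

theorem all (H : Henkin Γ U) {φ : AFml} : U (.all φ) ↔ ∀ t, U (φ.subst0 t) := by
  constructor
  · intro h t; exact H.mp (H.thm (.allE φ t)) h
  · intro h
    by_contra h'
    obtain ⟨t, ht⟩ := H.wit h'
    exact H.neg.1 ht (h t)

theorem ex (H : Henkin Γ U) {φ : AFml} : U (.ex φ) ↔ ∃ t, U (φ.subst0 t) := by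
  have h1 : U (.ex φ) ↔ U (.neg (.all (.neg φ))) := by
    have := H.thm (.exDef φ)
    rw [iffF, H.and, H.imp, H.imp] at this
    exact ⟨this.1, this.2⟩
  rw [h1, H.neg, H.all]
  have : ∀ t, U (AFml.subst0 (.neg φ) t) ↔ ¬ U (φ.subst0 t) := fun t => H.neg
  simp only [this]
  push Not
  rfl

theorem eqs (H : Henkin Γ U) (φ : AFml) {t s : ATerm} (h : U (.eq t s)) (h2 : U (φ.subst0 t)) :
    U (φ.subst0 s) := H.mp (H.mp (H.thm (.eqSubst φ t s)) h) h2

theorem refl (H : Henkin Γ U) (t : ATerm) : U (.eq t t) := H.thm (.eqRefl t)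

theorem symm (H : Henkin Γ U) {t s : ATerm} (h : U (.eq t s)) : U (.eq s t) := by
  have := H.eqs (.eq (.var 0) (t.lift 0)) h
  simp only [AFml.subst0, AFml.substAll, lift_subst0T] at this
  exact this (H.refl t)

theorem trans (H : Henkin Γ U) {t s r : ATerm} (h : U (.eq t s)) (h2 : U (.eq s r)) :
    U (.eq t r) := by
  have := H.eqs (.eq (t.lift 0) (.var 0)) h2
  simp only [AFml.subst0, AFml.substAll, lift_subst0T] at this
  exact this h

/-- Provable equality. -/
def setoid (H : Henkin Γ U) : Setoid ATerm :=
  ⟨fun t s => U (.eq t s), H.refl, H.symm, H.trans⟩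

theorem csucc (H : Henkin Γ U) {t s : ATerm} (h : U (.eq t s)) : U (.eq t.succ s.succ) := by
  have := H.eqs (.eq (.succ (t.lift 0)) (.succ (.var 0))) h
  simp only [AFml.subst0, AFml.substAll, ATerm.substAll, lift_subst0T] at this
  exact this (H.refl _)

theorem cadd (H : Henkin Γ U) {t s t' s' : ATerm} (h : U (.eq t s)) (h' : U (.eq t' s')) :
    U (.eq (t.add t') (s.add s')) := by
  have := H.eqs (.eq (.add (t.lift 0) (t'.lift 0)) (.add (.var 0) (t'.lift 0))) h
  have h2 := H.eqs (.eq (.add (s.lift 0) (t'.lift 0)) (.add (s.lift 0) (.var 0))) h'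
  simp only [AFml.subst0, AFml.substAll, ATerm.substAll, lift_subst0T] at this h2
  exact H.trans (this (H.refl _)) (h2 (H.refl _))

theorem cmul (H : Henkin Γ U) {t s t' s' : ATerm} (h : U (.eq t s)) (h' : U (.eq t' s')) :
    U (.eq (t.mul t') (s.mul s')) := by
  have := H.eqs (.eq (.mul (t.lift 0) (t'.lift 0)) (.mul (.var 0) (t'.lift 0))) h
  have h2 := H.eqs (.eq (.mul (s.lift 0) (t'.lift 0)) (.mul (s.lift 0) (.var 0))) h'
  simp only [AFml.subst0, AFml.substAll, ATerm.substAll, lift_subst0T] at this h2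
  exact H.trans (this (H.refl _)) (h2 (H.refl _))

theorem cle (H : Henkin Γ U) {t s t' s' : ATerm} (h : U (.eq t s)) (h' : U (.eq t' s'))
    (h3 : U (.le t t')) : U (.le s s') := by
  have := H.eqs (.le (.var 0) (t'.lift 0)) h
  have h2 := H.eqs (.le (s.lift 0) (.var 0)) h'
  simp only [AFml.subst0, AFml.substAll, ATerm.substAll, lift_subst0T] at this h2
  exact h2 (this h3)

/-- The term model. -/
def model (H : Henkin Γ U) : AModel where
  C := Quotient H.setoid
  z := Quotient.mk H.setoid .zero
  s := Quotient.map .succ fun _ _ h => H.csucc h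
  add := Quotient.map₂ .add fun _ _ h _ _ h' => H.cadd h h'
  mul := Quotient.map₂ .mul fun _ _ h _ _ h' => H.cmul h h'
  le := Quotient.lift₂ (fun t s => U (.le t s)) fun _ _ _ _ h h' =>
    propext ⟨H.cle h h', H.cle (H.symm h) (H.symm h')⟩

/-- The class of a term. -/
def cls (H : Henkin Γ U) (t : ATerm) : H.model.C := Quotient.mk H.setoid t

theorem mk_surj (H : Henkin Γ U) (a : H.model.C) : ∃ t, H.cls t = a :=
  Quotient.exists_rep (s := H.setoid) a

theorem model_val (H : Henkin Γ U) (τ : ℕ → ATerm) (t : ATerm) :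
    t.valM H.model (fun i => H.cls (τ i)) =
      H.cls (t.substAll τ) := by
  induction t with
  | var n => rfl
  | zero => rfl
  | succ t ih => simp only [ATerm.valM, ih]; rfl
  | add t s iht ihs => simp only [ATerm.valM, iht, ihs]; rfl
  | mul t s iht ihs => simp only [ATerm.valM, iht, ihs]; rfl

theorem scons_mk (H : Henkin Γ U) (τ : ℕ → ATerm) (t : ATerm) :
    scons (H.cls t) (fun i => H.cls (τ i)) =
      fun i => H.cls (scons t τ i) := by
  funext i; cases i <;> rfl

theorem subst_scons (φ : AFml) (τ : ℕ → ATerm) (t : ATerm) :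
    (φ.substAll (liftSub τ)).subst0 t = φ.substAll (scons t τ) := by
  rw [AFml.subst0, AFml.subst_comp]
  congr 1
  funext i
  cases i with
  | zero => rfl
  | succ i => simp [liftSub, lift_subst0T]

theorem truth (H : Henkin Γ U) (φ : AFml) : ∀ τ : ℕ → ATerm,
    φ.SatM H.model (fun i => H.cls (τ i)) ↔ U (φ.substAll τ) := by
  induction φ with
  | eq t s =>
    intro τ
    simp only [AFml.SatM, model_val, AFml.substAll]
    exact Quotient.eq (r := H.setoid)
  | le t s =>
    intro τ
    simp only [AFml.SatM, model_val, AFml.substAll]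
    rfl
  | neg φ ih => intro τ; simp only [AFml.SatM, AFml.substAll, ih, H.neg]
  | and φ ψ ih1 ih2 => intro τ; simp only [AFml.SatM, AFml.substAll, ih1, ih2, H.and]
  | or φ ψ ih1 ih2 => intro τ; simp only [AFml.SatM, AFml.substAll, ih1, ih2, H.or]
  | imp φ ψ ih1 ih2 => intro τ; simp only [AFml.SatM, AFml.substAll, ih1, ih2, H.imp]
  | all φ ih =>
    intro τ
    simp only [AFml.SatM, AFml.substAll, H.all, subst_scons]
    constructor
    · intro h t
      have := h (H.cls t)
      rw [scons_mk, ih] at this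
      exact this
    · intro h a
      obtain ⟨t, rfl⟩ := H.mk_surj a
      rw [scons_mk, ih]
      exact h t
  | ex φ ih =>
    intro τ
    simp only [AFml.SatM, AFml.substAll, H.ex, subst_scons]
    constructor
    · rintro ⟨a, h⟩
      obtain ⟨t, rfl⟩ := H.mk_surj a
      rw [scons_mk, ih] at h
      exact ⟨t, h⟩
    · rintro ⟨t, h⟩
      refine ⟨H.cls t, ?_⟩
      rw [scons_mk, ih]
      exact h

end Henkin

theorem completeness {Γ : Set AFml} {φ : AFml} (h : ∀ M, IsModel M Γ → ∀ ρ, φ.SatM M ρ) :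
    Proves Γ φ := by
  by_contra hn
  have hc : Con Γ (.neg φ) := fun h' =>
    hn (tc1 (by intro v; simp only [AFml.evalProp]; tauto) h')
  obtain ⟨U, H, hU⟩ := exists_henkin hc
  have hM : IsModel H.model Γ := by
    intro χ hχ ρ
    have : ρ = fun i => H.cls (Quotient.out (s := H.setoid) (ρ i)) := by
      funext i; exact (Quotient.out_eq (s := H.setoid) (ρ i)).symm
    rw [this, H.truth]
    exact H.thm (proves_subst _ (.ax hχ))
  have := h H.model hM (fun i => H.cls (.var i))
  rw [H.truth, AFml.subst_var] at this
  exact H.neg.1 hU this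

theorem exists_model {Γ : Set AFml} {φ : AFml} (h : ¬ Proves Γ φ) :
    ∃ M, IsModel M Γ ∧ ∃ ρ, ¬ φ.SatM M ρ := by
  by_contra hn
  push Not at hn
  exact h (completeness fun M hM ρ => hn M hM ρ)


end

section

/-! ## Part D : models of PA -/

/-- Renaming `n + 1 ↦ n + 2`, `0 ↦ 0`. -/
def skip1 : ℕ → ATerm
  | 0 => .var 0
  | n + 1 => .var (n + 2)

theorem satM_skip1 (M : AModel) (φ : AFml) (a b : M.C) (ρ : ℕ → M.C) :
    (φ.substAll skip1).SatM M (scons a (scons b ρ)) ↔ φ.SatM M (scons a ρ) := by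
  rw [AFml.satM_subst]
  have : (fun i => (skip1 i).valM M (scons a (scons b ρ))) = scons a ρ := by
    funext i; cases i <;> rfl
  rw [this]

/-- Renaming `n + 2 ↦ n + 3`, `0 ↦ 0`, `1 ↦ 1`. -/
def skip2 : ℕ → ATerm
  | 0 => .var 0
  | 1 => .var 1
  | n + 2 => .var (n + 3)

theorem satM_skip2 (M : AModel) (φ : AFml) (a a' b : M.C) (ρ : ℕ → M.C) :
    (φ.substAll skip2).SatM M (scons a (scons a' (scons b ρ))) ↔
      φ.SatM M (scons a (scons a' ρ)) := by
  rw [AFml.satM_subst]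
  have : (fun i => (skip2 i).valM M (scons a (scons a' (scons b ρ)))) = scons a (scons a' ρ) := by
    funext i
    match i with
    | 0 => rfl
    | 1 => rfl
    | n + 2 => rfl
  rw [this]

/-- A two element environment. -/
def env1 (M : AModel) (a : M.C) : ℕ → M.C := fun _ => a

/-- Standard elements. -/
def std (M : AModel) : ℕ → M.C
  | 0 => M.z
  | n + 1 => M.s (std M n)

theorem val_numeral (M : AModel) (ρ : ℕ → M.C) (n : ℕ) : (numeral n).valM M ρ = std M n := by
  induction n with
  | zero => rfl
  | succ n ih => simp only [numeral, ATerm.valM, ih, std]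

/-- Models of `PA`. -/
def IsPA (M : AModel) : Prop := IsModel M PA

namespace IsPA
variable {M : AModel}

theorem ind (hM : IsPA M) (φ : AFml) (ρ : ℕ → M.C) (h0 : φ.SatM M (scons M.z ρ))
    (hs : ∀ a, φ.SatM M (scons a ρ) → φ.SatM M (scons (M.s a) ρ)) :
    ∀ a, φ.SatM M (scons a ρ) := by
  have := hM _ (PAax.ind φ) ρ
  refine this ⟨?_, ?_⟩
  · rw [satM_subst0]; exact h0
  · intro a ha; rw [satM_succSubst]; exact hs a ha

theorem s_ne (hM : IsPA M) (a : M.C) : M.s a ≠ M.z :=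
  hM _ PAax.succNeZero (fun _ => M.z) a

theorem s_inj (hM : IsPA M) {a b : M.C} (h : M.s a = M.s b) : a = b :=
  hM _ PAax.succInj (fun _ => M.z) a b h

theorem add_z (hM : IsPA M) (a : M.C) : M.add a M.z = a :=
  hM _ PAax.addZero (fun _ => M.z) a

theorem add_s (hM : IsPA M) (a b : M.C) : M.add a (M.s b) = M.s (M.add a b) :=
  hM _ PAax.addSucc (fun _ => M.z) a b

theorem mul_z (hM : IsPA M) (a : M.C) : M.mul a M.z = M.z :=
  hM _ PAax.mulZero (fun _ => M.z) a

theorem mul_s (hM : IsPA M) (a b : M.C) : M.mul a (M.s b) = M.add (M.mul a b) a :=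
  hM _ PAax.mulSucc (fun _ => M.z) a b

theorem le_iff (hM : IsPA M) (a b : M.C) : M.le a b ↔ ∃ c, M.add c a = b := by
  have := hM _ PAax.leDef (fun _ => M.z) a b
  exact ⟨this.1, this.2⟩

theorem z_add (hM : IsPA M) (a : M.C) : M.add M.z a = a := by
  refine hM.ind (.eq (.add .zero (.var 0)) (.var 0)) (fun _ => M.z) (hM.add_z _) ?_ a
  intro a ha
  simp only [AFml.SatM, ATerm.valM, scons_zero] at ha ⊢
  rw [hM.add_s, ha]

theorem s_add (hM : IsPA M) (a b : M.C) : M.add (M.s a) b = M.s (M.add a b) := by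
  refine hM.ind (.eq (.add (.succ (.var 1)) (.var 0)) (.succ (.add (.var 1) (.var 0))))
    (fun _ => a) ?_ ?_ b
  · simp only [AFml.SatM, ATerm.valM, scons_zero, scons_one, hM.add_z]
  · intro b hb
    simp only [AFml.SatM, ATerm.valM, scons_zero, scons_one] at hb ⊢
    rw [hM.add_s, hM.add_s, hb]

theorem cases (hM : IsPA M) (a : M.C) : a = M.z ∨ ∃ b, a = M.s b := by
  refine hM.ind (.or (.eq (.var 0) .zero) (.ex (.eq (.var 1) (.succ (.var 0)))))
    (fun _ => M.z) (Or.inl rfl) ?_ a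
  intro b _
  exact Or.inr ⟨b, rfl⟩

theorem add_assoc (hM : IsPA M) (a b c : M.C) : M.add (M.add a b) c = M.add a (M.add b c) := by
  refine hM.ind (.eq (.add (.add (.var 1) (.var 2)) (.var 0)) (.add (.var 1) (.add (.var 2) (.var 0))))
    (scons a fun _ => b) ?_ ?_ c
  · simp only [AFml.SatM, ATerm.valM, scons_zero, scons_one, scons_two, hM.add_z]
  · intro c hc
    simp only [AFml.SatM, ATerm.valM, scons_zero, scons_one, scons_two] at hc ⊢
    rw [hM.add_s, hM.add_s, hM.add_s, hc]

theorem add_cancel (hM : IsPA M) {a b c : M.C} : M.add a c = M.add b c → a = b := by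
  refine hM.ind (.imp (.eq (.add (.var 1) (.var 0)) (.add (.var 2) (.var 0))) (.eq (.var 1) (.var 2)))
    (scons a fun _ => b) ?_ ?_ c
  · simp only [AFml.SatM, ATerm.valM, scons_zero, scons_one, scons_two, hM.add_z]
    exact id
  · intro c hc
    simp only [AFml.SatM, ATerm.valM, scons_zero, scons_one, scons_two] at hc ⊢
    rw [hM.add_s, hM.add_s]
    exact fun h => hc (hM.s_inj h)

theorem add_eq_z (hM : IsPA M) {a b : M.C} (h : M.add a b = M.z) : a = M.z ∧ b = M.z := by
  rcases hM.cases b with rfl | ⟨c, rfl⟩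
  · rw [hM.add_z] at h; exact ⟨h, rfl⟩
  · rw [hM.add_s] at h; exact absurd h (hM.s_ne _)

theorem le_refl (hM : IsPA M) (a : M.C) : M.le a a := (hM.le_iff a a).2 ⟨M.z, hM.z_add a⟩

theorem z_le (hM : IsPA M) (a : M.C) : M.le M.z a := (hM.le_iff _ a).2 ⟨a, hM.add_z a⟩

theorem le_trans (hM : IsPA M) {a b c : M.C} (h1 : M.le a b) (h2 : M.le b c) : M.le a c := by
  obtain ⟨x, rfl⟩ := (hM.le_iff a b).1 h1
  obtain ⟨y, rfl⟩ := (hM.le_iff _ c).1 h2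
  exact (hM.le_iff _ _).2 ⟨M.add y x, hM.add_assoc _ _ _⟩

theorem le_antisymm (hM : IsPA M) {a b : M.C} (h1 : M.le a b) (h2 : M.le b a) : a = b := by
  obtain ⟨x, rfl⟩ := (hM.le_iff a b).1 h1
  obtain ⟨y, hy⟩ := (hM.le_iff _ a).1 h2
  rw [← hM.add_assoc] at hy
  have : M.add y x = M.z := hM.add_cancel (hy.trans (hM.z_add a).symm)
  rw [(hM.add_eq_z this).2, hM.z_add]

theorem le_s (hM : IsPA M) {a b : M.C} (h : M.le a (M.s b)) : M.le a b ∨ a = M.s b := by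
  obtain ⟨x, hx⟩ := (hM.le_iff a _).1 h
  rcases hM.cases x with rfl | ⟨y, rfl⟩
  · rw [hM.z_add] at hx; exact Or.inr hx
  · rw [hM.s_add] at hx
    exact Or.inl ((hM.le_iff _ _).2 ⟨y, hM.s_inj hx⟩)

theorem le_self_s (hM : IsPA M) (a : M.C) : M.le a (M.s a) :=
  (hM.le_iff _ _).2 ⟨M.s M.z, by rw [hM.s_add, hM.z_add]⟩

theorem le_z (hM : IsPA M) {a : M.C} (h : M.le a M.z) : a = M.z :=
  hM.le_antisymm h (hM.z_le a)

theorem s_le_s (hM : IsPA M) {a b : M.C} : M.le (M.s a) (M.s b) ↔ M.le a b := by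
  rw [hM.le_iff, hM.le_iff]
  refine exists_congr fun c => ?_
  rw [hM.add_s]
  exact ⟨hM.s_inj, congrArg _⟩

theorem le_total (hM : IsPA M) (a b : M.C) : M.le a b ∨ M.le b a := by
  refine hM.ind (.or (.le (.var 0) (.var 1)) (.le (.var 1) (.var 0))) (fun _ => b) ?_ ?_ a
  · exact Or.inl (hM.z_le b)
  · intro c hc
    simp only [AFml.SatM, ATerm.valM, scons_zero, scons_one] at hc ⊢
    rcases hc with h | h
    · obtain ⟨x, rfl⟩ := (hM.le_iff _ _).1 h
      rcases hM.cases x with rfl | ⟨y, rfl⟩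
      · rw [hM.z_add]; exact Or.inr (hM.le_self_s c)
      · refine Or.inl ((hM.le_iff _ _).2 ⟨y, ?_⟩)
        rw [hM.s_add, hM.add_s]
    · exact Or.inr (hM.le_trans h (hM.le_self_s c))

/-- The least number principle. -/
theorem lnp (hM : IsPA M) (φ : AFml) (ρ : ℕ → M.C) (h : ∃ a, φ.SatM M (scons a ρ)) :
    ∃ a, φ.SatM M (scons a ρ) ∧ ∀ b, M.le b a → φ.SatM M (scons b ρ) → b = a := by
  by_contra hn
  push Not at hn
  have key := hM.ind (.all (.imp (.le (.var 0) (.var 1)) (.neg (φ.substAll skip1)))) ρ ?_ ?_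
  · obtain ⟨a, ha⟩ := h
    have := key a a (hM.le_refl a)
    simp only [AFml.SatM, satM_skip1] at this
    exact this ha
  · intro b hb
    simp only [AFml.SatM, satM_skip1, ATerm.valM, scons_zero, scons_one] at hb ⊢
    have hb := hM.le_z hb
    subst hb
    intro hz
    obtain ⟨c, hc1, _, hc3⟩ := hn _ hz
    exact hc3 (hM.le_z hc1)
  · intro a ha b hb
    simp only [AFml.SatM, satM_skip1, ATerm.valM, scons_zero, scons_one] at ha hb ⊢
    rcases hM.le_s hb with h1 | rfl
    · exact ha b h1
    · intro hz
      obtain ⟨c, hc1, hc2, hc3⟩ := hn _ hz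
      rcases hM.le_s hc1 with h1 | h1
      · exact ha c h1 hc2
      · exact hc3 h1

theorem std_add (hM : IsPA M) (a b : ℕ) : std M (a + b) = M.add (std M a) (std M b) := by
  induction b with
  | zero => exact (hM.add_z _).symm
  | succ b ih => rw [← Nat.add_assoc]; simp only [std]; rw [hM.add_s, ih]

theorem std_mul (hM : IsPA M) (a b : ℕ) : std M (a * b) = M.mul (std M a) (std M b) := by
  induction b with
  | zero => exact (hM.mul_z _).symm
  | succ b ih => rw [Nat.mul_succ, hM.std_add]; simp only [std]; rw [hM.mul_s, ih]

theorem std_le (hM : IsPA M) {a b : ℕ} (h : a ≤ b) : M.le (std M a) (std M b) := by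
  obtain ⟨c, rfl⟩ := Nat.exists_eq_add_of_le' h
  exact (hM.le_iff _ _).2 ⟨std M c, (hM.std_add c a).symm⟩

theorem le_std (hM : IsPA M) {x : M.C} {n : ℕ} (h : M.le x (std M n)) :
    ∃ k ≤ n, x = std M k := by
  induction n with
  | zero => exact ⟨0, Nat.le_refl 0, hM.le_z h⟩
  | succ n ih =>
    rcases hM.le_s h with h1 | h1
    · obtain ⟨k, hk, e⟩ := ih h1; exact ⟨k, by omega, e⟩
    · exact ⟨n + 1, Nat.le_refl _, h1⟩

theorem std_inj (hM : IsPA M) : ∀ {a b : ℕ}, std M a = std M b → a = b := by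
  intro a
  induction a with
  | zero =>
    intro b h
    cases b with
    | zero => rfl
    | succ b => exact absurd h.symm (hM.s_ne _)
  | succ a ih =>
    intro b h
    cases b with
    | zero => exact absurd h (hM.s_ne _)
    | succ b => rw [ih (hM.s_inj h)]

theorem std_le_iff (hM : IsPA M) {a b : ℕ} : M.le (std M a) (std M b) ↔ a ≤ b := by
  constructor
  · intro h
    obtain ⟨k, hk, e⟩ := hM.le_std h
    rw [hM.std_inj e]; exact hk
  · exact hM.std_le

theorem nonstd_ge (hM : IsPA M) {x : M.C} (h : ∀ n, x ≠ std M n) (n : ℕ) : M.le (std M n) x := by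
  rcases hM.le_total (std M n) x with h1 | h1
  · exact h1
  · obtain ⟨k, _, e⟩ := hM.le_std h1
    exact absurd e (h k)

theorem val_std (hM : IsPA M) (ρ : ℕ → ℕ) (t : ATerm) :
    t.valM M (fun i => std M (ρ i)) = std M (t.val ρ) := by
  induction t with
  | var n => rfl
  | zero => rfl
  | succ t ih => simp only [ATerm.valM, ATerm.val, ih]; rfl
  | add t s iht ihs => simp only [ATerm.valM, ATerm.val, iht, ihs, hM.std_add]
  | mul t s iht ihs => simp only [ATerm.valM, ATerm.val, iht, ihs, hM.std_mul]

theorem scons_std (M : AModel) (a : ℕ) (ρ : ℕ → ℕ) :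
    scons (std M a) (fun i => std M (ρ i)) = fun i => std M (scons a ρ i) := by
  funext i; cases i <;> rfl

/-- Absoluteness of `Δ₀` formulas. -/
theorem abs (hM : IsPA M) {φ : AFml} (h : IsDelta0 φ) : ∀ ρ : ℕ → ℕ,
    φ.SatM M (fun i => std M (ρ i)) ↔ φ.Sat ρ := by
  induction h with
  | eq t s =>
    intro ρ; simp only [AFml.SatM, AFml.Sat, hM.val_std]
    exact ⟨hM.std_inj, congrArg _⟩
  | le t s => intro ρ; simp only [AFml.SatM, AFml.Sat, hM.val_std, hM.std_le_iff]
  | neg _ ih => intro ρ; simp only [AFml.SatM, AFml.Sat, ih]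
  | and _ _ ih1 ih2 => intro ρ; simp only [AFml.SatM, AFml.Sat, ih1, ih2]
  | or _ _ ih1 ih2 => intro ρ; simp only [AFml.SatM, AFml.Sat, ih1, ih2]
  | imp _ _ ih1 ih2 => intro ρ; simp only [AFml.SatM, AFml.Sat, ih1, ih2]
  | ball t h0 ih =>
    intro ρ
    have e : ∀ a, (ATerm.lift 0 t).val (scons a ρ) = t.val ρ := by
      intro a; rw [← valM_std, ← valM_std]; exact valM_lift stdM ρ a t
    simp only [AFml.SatM, AFml.Sat, consEnv_eq, valM_lift, hM.val_std, e, ATerm.valM, ATerm.val,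
      scons_zero]
    constructor
    · intro h a ha
      rw [← ih, ← scons_std]
      exact h _ (hM.std_le ha)
    · intro h x hx
      obtain ⟨k, hk, rfl⟩ := hM.le_std hx
      rw [scons_std, ih]
      exact h k hk
  | bex t h0 ih =>
    intro ρ
    have e : ∀ a, (ATerm.lift 0 t).val (scons a ρ) = t.val ρ := by
      intro a; rw [← valM_std, ← valM_std]; exact valM_lift stdM ρ a t
    simp only [AFml.SatM, AFml.Sat, consEnv_eq, valM_lift, hM.val_std, e, ATerm.valM, ATerm.val,
      scons_zero]
    constructor
    · rintro ⟨x, hx, h⟩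
      obtain ⟨k, hk, rfl⟩ := hM.le_std hx
      rw [scons_std, ih] at h
      exact ⟨k, hk, h⟩
    · rintro ⟨a, ha, h⟩
      refine ⟨std M a, hM.std_le ha, ?_⟩
      rw [scons_std, ih]
      exact h

end IsPA

/-- Bounded existential quantifier over the variable `b`. -/
def bexF (b : ℕ) (φ : AFml) : AFml := .ex (.and (.le (.var 0) (.var (b + 1))) φ)
/-- Bounded universal quantifier over the variable `b`. -/
def ballF (b : ℕ) (φ : AFml) : AFml := .all (.imp (.le (.var 0) (.var (b + 1))) φ)

theorem delta0_bexF {b : ℕ} {φ : AFml} (h : IsDelta0 φ) : IsDelta0 (bexF b φ) := .bex (.var b) h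
theorem delta0_ballF {b : ℕ} {φ : AFml} (h : IsDelta0 φ) : IsDelta0 (ballF b φ) := .ball (.var b) h

theorem satM_bexF (M : AModel) (ρ : ℕ → M.C) (b : ℕ) (φ : AFml) :
    (bexF b φ).SatM M ρ ↔ ∃ a, M.le a (ρ b) ∧ φ.SatM M (scons a ρ) := Iff.rfl
theorem satM_ballF (M : AModel) (ρ : ℕ → M.C) (b : ℕ) (φ : AFml) :
    (ballF b φ).SatM M ρ ↔ ∀ a, M.le a (ρ b) → φ.SatM M (scons a ρ) := Iff.rfl

/-- Substitution of variables (a renaming) keeps `Δ₀`. -/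
theorem delta0_subst {φ : AFml} (h : IsDelta0 φ) : ∀ σ, IsDelta0 (φ.substAll σ) := by
  have e : ∀ (t : ATerm) (σ : ℕ → ATerm),
      (t.lift 0).substAll (liftSub σ) = (t.substAll σ).lift 0 := by
    intro t σ
    simp only [ATerm.lift_eq, ATerm.subst_comp]
    congr 1
    funext i
    simp [liftEnv, ATerm.substAll, liftSub, ATerm.lift_eq]
  induction h with
  | eq t s => intro σ; exact .eq _ _
  | le t s => intro σ; exact .le _ _
  | neg _ ih => intro σ; exact .neg (ih σ)
  | and _ _ ih1 ih2 => intro σ; exact .and (ih1 σ) (ih2 σ)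
  | or _ _ ih1 ih2 => intro σ; exact .or (ih1 σ) (ih2 σ)
  | imp _ _ ih1 ih2 => intro σ; exact .imp (ih1 σ) (ih2 σ)
  | ball t _ ih =>
    intro σ; simp only [AFml.substAll, e]; exact .ball (t.substAll σ) (ih _)
  | bex t _ ih =>
    intro σ; simp only [AFml.substAll, e]; exact .bex (t.substAll σ) (ih _)

/-- `Σ₁` normal form of a relation, uniformly over models of `PA`. -/
def NF (R : ∀ M : AModel, (ℕ → M.C) → Prop) : Prop :=
  ∃ φ, IsDelta0 φ ∧ ∀ M, IsPA M → ∀ ρ, R M ρ ↔ ∃ z, φ.SatM M (scons z ρ)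

theorem NF.congr {R S : ∀ M : AModel, (ℕ → M.C) → Prop} (h : NF R) (e : ∀ M ρ, S M ρ ↔ R M ρ) :
    NF S := by
  obtain ⟨φ, h1, h2⟩ := h
  exact ⟨φ, h1, fun M hM ρ => (e M ρ).trans (h2 M hM ρ)⟩

theorem NF.delta0 {φ : AFml} (h : IsDelta0 φ) : NF fun M ρ => φ.SatM M ρ := by
  refine ⟨φ.lift 0, by rw [AFml.lift_eq]; exact delta0_subst h _, ?_⟩
  intro M hM ρ
  simp only [satM_lift0]
  exact ⟨fun h => ⟨M.z, h⟩, fun ⟨_, h⟩ => h⟩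

theorem NF.and {R S : ∀ M : AModel, (ℕ → M.C) → Prop} (h1 : NF R) (h2 : NF S) :
    NF fun M ρ => R M ρ ∧ S M ρ := by
  obtain ⟨φ, hφ, h1⟩ := h1
  obtain ⟨ψ, hψ, h2⟩ := h2
  refine ⟨.and (bexF 0 (φ.substAll skip1)) (bexF 0 (ψ.substAll skip1)),
    .and (delta0_bexF (delta0_subst hφ _)) (delta0_bexF (delta0_subst hψ _)), ?_⟩
  intro M hM ρ
  simp only [h1 M hM, h2 M hM, AFml.SatM, satM_bexF, satM_skip1, scons_zero]
  constructor
  · rintro ⟨⟨a, ha⟩, b, hb⟩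
    rcases hM.le_total a b with h | h
    · exact ⟨b, ⟨a, h, ha⟩, b, hM.le_refl b, hb⟩
    · exact ⟨a, ⟨a, hM.le_refl a, ha⟩, b, h, hb⟩
  · rintro ⟨_, ⟨a, _, ha⟩, b, _, hb⟩
    exact ⟨⟨a, ha⟩, b, hb⟩

theorem NF.or {R S : ∀ M : AModel, (ℕ → M.C) → Prop} (h1 : NF R) (h2 : NF S) :
    NF fun M ρ => R M ρ ∨ S M ρ := by
  obtain ⟨φ, hφ, h1⟩ := h1
  obtain ⟨ψ, hψ, h2⟩ := h2
  refine ⟨.or φ ψ, .or hφ hψ, ?_⟩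
  intro M hM ρ
  simp only [h1 M hM, h2 M hM, AFml.SatM, exists_or]

theorem NF.ex {R : ∀ M : AModel, (ℕ → M.C) → Prop} (h1 : NF R) :
    NF fun M ρ => ∃ a, R M (scons a ρ) := by
  obtain ⟨φ, hφ, h1⟩ := h1
  refine ⟨bexF 0 (bexF 1 (φ.substAll skip2)),
    delta0_bexF (delta0_bexF (delta0_subst hφ _)), ?_⟩
  intro M hM ρ
  simp only [h1 M hM, satM_bexF, satM_skip2, scons_zero, scons_one]
  constructor
  · rintro ⟨a, b, hb⟩
    rcases hM.le_total a b with h | h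
    · exact ⟨b, a, h, b, hM.le_refl b, hb⟩
    · exact ⟨a, a, hM.le_refl a, b, h, hb⟩
  · rintro ⟨_, a, _, b, _, hb⟩
    exact ⟨a, b, hb⟩

mutual
theorem nf_sigma {φ : AFml} : IsSigma1 φ → NF fun M ρ => φ.SatM M ρ
  | .delta0 h => NF.delta0 h
  | .and h1 h2 => NF.and (nf_sigma h1) (nf_sigma h2)
  | .or h1 h2 => NF.or (nf_sigma h1) (nf_sigma h2)
  | .ex h => NF.ex (nf_sigma h)
  | .negPi h => nf_pi h
  | .impPiSigma h1 h2 => (NF.or (nf_pi h1) (nf_sigma h2)).congr fun M ρ => by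
      simp only [AFml.SatM]; tauto
theorem nf_pi {φ : AFml} : IsPi1 φ → NF fun M ρ => ¬ φ.SatM M ρ
  | .delta0 h => NF.delta0 (.neg h)
  | .and h1 h2 => (NF.or (nf_pi h1) (nf_pi h2)).congr fun M ρ => by
      simp only [AFml.SatM]; tauto
  | .or h1 h2 => (NF.and (nf_pi h1) (nf_pi h2)).congr fun M ρ => by
      simp only [AFml.SatM]; tauto
  | .all h => (NF.ex (nf_pi h)).congr fun M ρ => by
      simp only [AFml.SatM]; push Not; rfl
  | .negSigma h => (nf_sigma h).congr fun M ρ => by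
      simp only [AFml.SatM]; tauto
  | .impSigmaPi h1 h2 => (NF.and (nf_sigma h1) (nf_pi h2)).congr fun M ρ => by
      simp only [AFml.SatM]; tauto
end

theorem stdM_isPA : IsPA stdM := by
  intro φ hφ ρ
  change ℕ → ℕ at ρ
  refine (satM_std φ ρ).2 ?_
  cases hφ with
  | succNeZero => intro a; simp [AFml.Sat, ATerm.val]
  | succInj => intro a b; simp [AFml.Sat, ATerm.val]
  | addZero => intro a; simp [AFml.Sat, ATerm.val]
  | addSucc => intro a b; simp only [AFml.Sat, ATerm.val]; omega
  | mulZero => intro a; simp [AFml.Sat, ATerm.val]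
  | mulSucc => intro a b; simp only [AFml.Sat, ATerm.val]; ring
  | leDef =>
    intro a b
    simp only [iffF, AFml.Sat, ATerm.val, consEnv]
    exact ⟨fun h => ⟨b - a, by omega⟩, fun ⟨c, hc⟩ => by omega⟩
  | ind φ =>
    refine (satM_std _ ρ).1 ?_
    rintro ⟨h0, hs⟩ a
    have h0 := (satM_subst0 stdM φ ρ .zero).1 h0
    have hs' : ∀ a : ℕ, φ.SatM stdM (scons a ρ) → φ.SatM stdM (scons (a + 1) ρ) := by
      intro a ha
      exact (satM_succSubst stdM φ ρ a).1 (hs a ha)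
    induction a using Nat.rec with
    | zero => exact h0
    | succ n ih => exact hs' n ih

theorem std_stdM (n : ℕ) : std stdM n = n := by
  induction n with
  | zero => rfl
  | succ n ih => simp only [std, ih]; rfl


end

section

/-! ## Part E : definability in the standard model -/

theorem val_subst (t : ATerm) (ρ : ℕ → ℕ) (σ : ℕ → ATerm) :
    (t.substAll σ).val ρ = t.val fun i => (σ i).val ρ := by
  induction t with
  | var n => rfl
  | zero => rfl
  | succ t ih => simp only [ATerm.substAll, ATerm.val, ih]
  | add t s iht ihs => simp only [ATerm.substAll, ATerm.val, iht, ihs]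
  | mul t s iht ihs => simp only [ATerm.substAll, ATerm.val, iht, ihs]

theorem sat_subst (φ : AFml) (ρ : ℕ → ℕ) (σ : ℕ → ATerm) :
    (φ.substAll σ).Sat ρ ↔ φ.Sat fun i => (σ i).val ρ := by
  have := AFml.satM_subst stdM φ ρ σ
  rw [satM_std] at this
  refine this.trans ?_
  have e : (fun i => (σ i).valM stdM ρ) = fun i => (σ i).val ρ := by
    funext i; exact valM_std _ _
  rw [e]
  exact satM_std _ _

theorem sat_ren (φ : AFml) (ρ : ℕ → ℕ) (f : ℕ → ℕ) :
    (φ.substAll fun i => .var (f i)).Sat ρ ↔ φ.Sat fun i => ρ (f i) := sat_subst _ _ _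

theorem sat_bexF (ρ : ℕ → ℕ) (b : ℕ) (φ : AFml) :
    (bexF b φ).Sat ρ ↔ ∃ a, a ≤ ρ b ∧ φ.Sat (scons a ρ) := by
  simp only [bexF, AFml.Sat, consEnv_eq]; rfl
theorem sat_ballF (ρ : ℕ → ℕ) (b : ℕ) (φ : AFml) :
    (ballF b φ).Sat ρ ↔ ∀ a, a ≤ ρ b → φ.Sat (scons a ρ) := by
  simp only [ballF, AFml.Sat, consEnv_eq]; rfl

/-- Functions given by terms. -/
class D0T (f : (ℕ → ℕ) → ℕ) : Prop where
  out : ∃ t : ATerm, ∀ ρ, t.val ρ = f ρ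

/-- Relations given by bounded formulas. -/
class D0 (R : (ℕ → ℕ) → Prop) : Prop where
  out : ∃ φ, IsDelta0 φ ∧ ∀ ρ, φ.Sat ρ ↔ R ρ

instance D0T.var (k : ℕ) : D0T fun ρ => ρ k := ⟨.var k, fun _ => rfl⟩
theorem val_numN (n : ℕ) (ρ : ℕ → ℕ) : (numeral n).val ρ = n := by
  induction n with
  | zero => rfl
  | succ n ih => simp only [numeral, ATerm.val, ih]
instance D0T.const (k : ℕ) : D0T fun _ => k := ⟨numeral k, fun _ => val_numN _ _⟩
instance D0T.add (f g : (ℕ → ℕ) → ℕ) [hf : D0T f] [hg : D0T g] : D0T fun ρ => f ρ + g ρ := by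
  obtain ⟨t, ht⟩ := hf.out
  obtain ⟨s, hs⟩ := hg.out
  exact ⟨.add t s, fun ρ => by simp only [ATerm.val, ht, hs]⟩
instance D0T.mul (f g : (ℕ → ℕ) → ℕ) [hf : D0T f] [hg : D0T g] : D0T fun ρ => f ρ * g ρ := by
  obtain ⟨t, ht⟩ := hf.out
  obtain ⟨s, hs⟩ := hg.out
  exact ⟨.mul t s, fun ρ => by simp only [ATerm.val, ht, hs]⟩
instance D0.eq (f g : (ℕ → ℕ) → ℕ) [hf : D0T f] [hg : D0T g] : D0 fun ρ => f ρ = g ρ := by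
  obtain ⟨t, ht⟩ := hf.out
  obtain ⟨s, hs⟩ := hg.out
  exact ⟨.eq t s, .eq _ _, fun ρ => by simp only [AFml.Sat, ht, hs]⟩
instance D0.le (f g : (ℕ → ℕ) → ℕ) [hf : D0T f] [hg : D0T g] : D0 fun ρ => f ρ ≤ g ρ := by
  obtain ⟨t, ht⟩ := hf.out
  obtain ⟨s, hs⟩ := hg.out
  exact ⟨.le t s, .le _ _, fun ρ => by simp only [AFml.Sat, ht, hs]⟩
instance D0.lt (f g : (ℕ → ℕ) → ℕ) [hf : D0T f] [hg : D0T g] : D0 fun ρ => f ρ < g ρ := by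
  obtain ⟨t, ht⟩ := hf.out
  obtain ⟨s, hs⟩ := hg.out
  exact ⟨.le (.succ t) s, .le _ _, fun ρ => by simp only [AFml.Sat, ATerm.val, ht, hs]; rfl⟩
instance D0.not (P : (ℕ → ℕ) → Prop) [hP : D0 P] : D0 fun ρ => ¬ P ρ := by
  obtain ⟨φ, h1, h2⟩ := hP.out
  exact ⟨.neg φ, .neg h1, fun ρ => by simp only [AFml.Sat, h2]⟩
instance D0.and (P Q : (ℕ → ℕ) → Prop) [hP : D0 P] [hQ : D0 Q] : D0 fun ρ => P ρ ∧ Q ρ := by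
  obtain ⟨φ, h1, h2⟩ := hP.out
  obtain ⟨ψ, h3, h4⟩ := hQ.out
  exact ⟨.and φ ψ, .and h1 h3, fun ρ => by simp only [AFml.Sat, h2, h4]⟩
instance D0.or (P Q : (ℕ → ℕ) → Prop) [hP : D0 P] [hQ : D0 Q] : D0 fun ρ => P ρ ∨ Q ρ := by
  obtain ⟨φ, h1, h2⟩ := hP.out
  obtain ⟨ψ, h3, h4⟩ := hQ.out
  exact ⟨.or φ ψ, .or h1 h3, fun ρ => by simp only [AFml.Sat, h2, h4]⟩
instance D0.bex (k : ℕ) (Q : ℕ → (ℕ → ℕ) → Prop) [hQ : D0 fun ρ => Q (ρ 0) (fun i => ρ (i + 1))] :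
    D0 fun ρ => ∃ i, i ≤ ρ k ∧ Q i ρ := by
  obtain ⟨φ, h1, h2⟩ := hQ.out
  exact ⟨bexF k φ, delta0_bexF h1, fun ρ => by
    rw [sat_bexF]; simp only [h2]; rfl⟩
theorem D0.ren {P : (ℕ → ℕ) → Prop} (hP : D0 P) (f : ℕ → ℕ) : D0 fun ρ => P fun i => ρ (f i) := by
  obtain ⟨φ, h1, h2⟩ := hP.out
  exact ⟨_, delta0_subst h1 fun i => .var (f i), fun ρ => by rw [sat_ren, h2]⟩
theorem D0.congr {P Q : (ℕ → ℕ) → Prop} (hP : D0 P) (h : ∀ ρ, Q ρ ↔ P ρ) : D0 Q := by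
  have : Q = P := funext fun ρ => propext (h ρ)
  rw [this]; exact hP

/-- `Σ₁` relations. -/
class S1 (R : (ℕ → ℕ) → Prop) : Prop where
  out : ∃ φ, IsDelta0 φ ∧ ∀ ρ : ℕ → ℕ, R ρ ↔ ∃ a, φ.Sat (scons a ρ)

/-- Functions with a `Σ₁` graph. -/
class S1T (f : (ℕ → ℕ) → ℕ) : Prop where
  out : S1 fun ρ => ρ 0 = f fun i => ρ (i + 1)

theorem S1.congr {P Q : (ℕ → ℕ) → Prop} (hP : S1 P) (h : ∀ ρ, Q ρ ↔ P ρ) : S1 Q := by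
  have : Q = P := funext fun ρ => propext (h ρ)
  rw [this]; exact hP

theorem S1.of_D0 {P : (ℕ → ℕ) → Prop} (hP : D0 P) : S1 P := by
  obtain ⟨φ, h1, h2⟩ := hP.out
  refine ⟨φ.substAll fun i => .var (i + 1), delta0_subst h1 _, fun ρ => ?_⟩
  simp only [sat_ren, scons_succ, h2]
  exact ⟨fun h => ⟨0, h⟩, fun ⟨_, h⟩ => h⟩

theorem S1.ren {P : (ℕ → ℕ) → Prop} (hP : S1 P) (f : ℕ → ℕ) : S1 fun ρ => P fun i => ρ (f i) := by
  obtain ⟨φ, h1, h2⟩ := hP.out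
  refine ⟨φ.substAll fun i => .var (Nat.casesOn i 0 fun j => f j + 1), delta0_subst h1 _, fun ρ => ?_⟩
  rw [h2]
  refine exists_congr fun a => ?_
  rw [sat_ren]
  have : (fun i => scons a ρ (Nat.casesOn i 0 fun j => f j + 1)) = scons a fun i => ρ (f i) := by
    funext i; cases i <;> rfl
  rw [this]

theorem sat_skip1 (φ : AFml) (a b : ℕ) (ρ : ℕ → ℕ) :
    (φ.substAll skip1).Sat (scons a (scons b ρ)) ↔ φ.Sat (scons a ρ) := by
  rw [sat_subst]
  have : (fun i => (skip1 i).val (scons a (scons b ρ))) = scons a ρ := by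
    funext i; cases i <;> rfl
  rw [this]
theorem sat_skip2 (φ : AFml) (a a' b : ℕ) (ρ : ℕ → ℕ) :
    (φ.substAll skip2).Sat (scons a (scons a' (scons b ρ))) ↔
      φ.Sat (scons a (scons a' ρ)) := by
  rw [sat_subst]
  have : (fun i => (skip2 i).val (scons a (scons a' (scons b ρ)))) = scons a (scons a' ρ) := by
    funext i
    match i with
    | 0 => rfl
    | 1 => rfl
    | n + 2 => rfl
  rw [this]

instance S1.and (P Q : (ℕ → ℕ) → Prop) [hP : S1 P] [hQ : S1 Q] : S1 fun ρ => P ρ ∧ Q ρ := by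
  obtain ⟨φ, h1, h2⟩ := hP.out
  obtain ⟨ψ, h3, h4⟩ := hQ.out
  refine ⟨.and (bexF 0 (φ.substAll skip1)) (bexF 0 (ψ.substAll skip1)),
    .and (delta0_bexF (delta0_subst h1 _)) (delta0_bexF (delta0_subst h3 _)), fun ρ => ?_⟩
  simp only [h2, h4, AFml.Sat, sat_bexF, sat_skip1, scons_zero]
  constructor
  · rintro ⟨⟨a, ha⟩, b, hb⟩
    exact ⟨max a b, ⟨a, le_max_left _ _, ha⟩, b, le_max_right _ _, hb⟩
  · rintro ⟨_, ⟨a, _, ha⟩, b, _, hb⟩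
    exact ⟨⟨a, ha⟩, b, hb⟩
instance S1.or (P Q : (ℕ → ℕ) → Prop) [hP : S1 P] [hQ : S1 Q] : S1 fun ρ => P ρ ∨ Q ρ := by
  obtain ⟨φ, h1, h2⟩ := hP.out
  obtain ⟨ψ, h3, h4⟩ := hQ.out
  refine ⟨.or φ ψ, .or h1 h3, fun ρ => ?_⟩
  simp only [h2, h4, AFml.Sat, exists_or]
instance S1.ex (Q : ℕ → (ℕ → ℕ) → Prop) [hQ : S1 fun ρ => Q (ρ 0) (fun i => ρ (i + 1))] :
    S1 fun ρ => ∃ i, Q i ρ := by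
  obtain ⟨φ, h1, h2⟩ := hQ.out
  refine ⟨bexF 0 (bexF 1 (φ.substAll skip2)),
    delta0_bexF (delta0_bexF (delta0_subst h1 _)), fun ρ => ?_⟩
  have h2 : ∀ i ρ, Q i ρ ↔ ∃ a, φ.Sat (scons a (scons i ρ)) := fun i ρ => h2 (scons i ρ)
  simp only [h2, sat_bexF, sat_skip2, scons_zero, scons_one]
  constructor
  · rintro ⟨a, b, hb⟩
    exact ⟨max a b, a, le_max_left _ _, b, le_max_right _ _, hb⟩
  · rintro ⟨_, a, _, b, _, hb⟩
    exact ⟨a, b, hb⟩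

theorem S1.ball0 (Q : ℕ → (ℕ → ℕ) → Prop) (k : ℕ)
    (hQ : S1 fun ρ => Q (ρ 0) (fun i => ρ (i + 1))) : S1 fun ρ => ∀ i, i ≤ ρ k → Q i ρ := by
  obtain ⟨φ, h1, h2⟩ := hQ.out
  refine ⟨ballF (k + 1) (bexF 1 (φ.substAll skip2)),
    delta0_ballF (delta0_bexF (delta0_subst h1 _)), fun ρ => ?_⟩
  have h2 : ∀ i ρ, Q i ρ ↔ ∃ a, φ.Sat (scons a (scons i ρ)) := fun i ρ => h2 (scons i ρ)
  simp only [h2, sat_ballF, sat_bexF, sat_skip2, scons_zero, scons_succ]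
  constructor
  · intro h
    have : ∀ i, ∃ a, i ≤ ρ k → φ.Sat (scons a (scons i ρ)) := by
      intro i
      by_cases hi : i ≤ ρ k
      · obtain ⟨a, ha⟩ := h i hi; exact ⟨a, fun _ => ha⟩
      · exact ⟨0, fun h => absurd h hi⟩
    choose f hf using this
    refine ⟨(Finset.range (ρ k + 1)).sup f, fun i hi => ⟨f i, ?_, hf i hi⟩⟩
    exact Finset.le_sup (f := f) (Finset.mem_range.2 (by omega))
  · rintro ⟨w, hw⟩ i hi
    obtain ⟨a, _, ha⟩ := hw i hi
    exact ⟨a, ha⟩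

theorem S1.comp (t : (ℕ → ℕ) → ℕ) (Q : ℕ → (ℕ → ℕ) → Prop) (ht : S1T t)
    (hQ : S1 fun ρ => Q (ρ 0) (fun i => ρ (i + 1))) : S1 fun ρ => Q (t ρ) ρ := by
  have h1 := ht.out
  have := S1.ex (fun a ρ => a = t ρ ∧ Q a ρ)
  refine this.congr fun ρ => ?_
  simp

theorem S1T.ren {t : (ℕ → ℕ) → ℕ} (ht : S1T t) (f : ℕ → ℕ) : S1T fun ρ => t fun i => ρ (f i) := by
  have := ht.out.ren fun i => Nat.casesOn i 0 fun j => f j + 1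
  exact ⟨this⟩

/-- Definable unary relations, and so on. -/
abbrev Def1 (P : ℕ → Prop) : Prop := S1 fun ρ => P (ρ 0)
abbrev Def2 (P : ℕ → ℕ → Prop) : Prop := S1 fun ρ => P (ρ 0) (ρ 1)
abbrev Def3 (P : ℕ → ℕ → ℕ → Prop) : Prop := S1 fun ρ => P (ρ 0) (ρ 1) (ρ 2)
abbrev Def4 (P : ℕ → ℕ → ℕ → ℕ → Prop) : Prop := S1 fun ρ => P (ρ 0) (ρ 1) (ρ 2) (ρ 3)

theorem Def1.comp {P : ℕ → Prop} (h : Def1 P) (t : (ℕ → ℕ) → ℕ) [ht : S1T t] :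
    S1 fun ρ => P (t ρ) := S1.comp t (fun a _ => P a) ht h
theorem Def2.comp {P : ℕ → ℕ → Prop} (h : Def2 P) (t s : (ℕ → ℕ) → ℕ) [ht : S1T t] [hs : S1T s] :
    S1 fun ρ => P (t ρ) (s ρ) := by
  refine S1.comp t (fun a ρ => P a (s ρ)) ht ?_
  refine S1.comp (fun ρ => s fun i => ρ (i + 1)) (fun b ρ => P (ρ 0) b) (hs.ren _) ?_
  exact S1.ren h fun i => Nat.casesOn i 1 fun _ => 0
theorem Def3.comp {P : ℕ → ℕ → ℕ → Prop} (h : Def3 P) (t s r : (ℕ → ℕ) → ℕ)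
    [ht : S1T t] [hs : S1T s] [hr : S1T r] : S1 fun ρ => P (t ρ) (s ρ) (r ρ) := by
  refine S1.comp t (fun a ρ => P a (s ρ) (r ρ)) ht ?_
  refine S1.comp (fun ρ => s fun i => ρ (i + 1)) (fun b ρ => P (ρ 0) b (r fun i => ρ (i + 1)))
    (hs.ren _) ?_
  refine S1.comp (fun ρ => r fun i => ρ (i + 2)) (fun b ρ => P (ρ 1) (ρ 0) b) (hr.ren _) ?_
  exact S1.ren h fun i => Nat.casesOn i 2 fun j => Nat.casesOn j 1 fun _ => 0
theorem Def4.comp {P : ℕ → ℕ → ℕ → ℕ → Prop} (h : Def4 P) (t s r q : (ℕ → ℕ) → ℕ)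
    [ht : S1T t] [hs : S1T s] [hr : S1T r] [hq : S1T q] :
    S1 fun ρ => P (t ρ) (s ρ) (r ρ) (q ρ) := by
  refine S1.comp t (fun a ρ => P a (s ρ) (r ρ) (q ρ)) ht ?_
  refine S1.comp (fun ρ => s fun i => ρ (i + 1))
    (fun b ρ => P (ρ 0) b (r fun i => ρ (i + 1)) (q fun i => ρ (i + 1))) (hs.ren _) ?_
  refine S1.comp (fun ρ => r fun i => ρ (i + 2)) (fun b ρ => P (ρ 1) (ρ 0) b (q fun i => ρ (i + 2)))
    (hr.ren _) ?_
  refine S1.comp (fun ρ => q fun i => ρ (i + 3)) (fun b ρ => P (ρ 2) (ρ 1) (ρ 0) b) (hq.ren _) ?_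
  exact S1.ren h fun i => Nat.casesOn i 3 fun j => Nat.casesOn j 2 fun j => Nat.casesOn j 1 fun _ => 0

instance S1T.var (k : ℕ) : S1T fun ρ => ρ k := ⟨S1.of_D0 (D0.eq (fun ρ => ρ 0) fun ρ => ρ (k + 1))⟩
instance S1T.const (k : ℕ) : S1T fun _ => k := ⟨S1.of_D0 (D0.eq (fun ρ => ρ 0) fun _ => k)⟩
instance S1T.add (t s : (ℕ → ℕ) → ℕ) [S1T t] [S1T s] : S1T fun ρ => t ρ + s ρ := by
  have h : Def3 fun a b c => c = a + b := S1.of_D0 inferInstance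
  have ht : S1T fun ρ => t fun i => ρ (i + 1) := S1T.ren inferInstance _
  have hs : S1T fun ρ => s fun i => ρ (i + 1) := S1T.ren inferInstance _
  exact ⟨h.comp (fun ρ => t fun i => ρ (i + 1)) (fun ρ => s fun i => ρ (i + 1)) fun ρ => ρ 0⟩
instance S1T.mul (t s : (ℕ → ℕ) → ℕ) [S1T t] [S1T s] : S1T fun ρ => t ρ * s ρ := by
  have h : Def3 fun a b c => c = a * b := S1.of_D0 inferInstance
  have ht : S1T fun ρ => t fun i => ρ (i + 1) := S1T.ren inferInstance _
  have hs : S1T fun ρ => s fun i => ρ (i + 1) := S1T.ren inferInstance _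
  exact ⟨h.comp (fun ρ => t fun i => ρ (i + 1)) (fun ρ => s fun i => ρ (i + 1)) fun ρ => ρ 0⟩

theorem D0_pair : D0 fun ρ => ρ 2 = Nat.pair (ρ 0) (ρ 1) := by
  have : D0 fun ρ => (ρ 0 < ρ 1 ∧ ρ 2 = ρ 1 * ρ 1 + ρ 0) ∨
    (ρ 1 ≤ ρ 0 ∧ ρ 2 = ρ 0 * ρ 0 + ρ 0 + ρ 1) := inferInstance
  refine this.congr fun ρ => ?_
  unfold Nat.pair
  split_ifs <;> omega

instance S1T.pair (t s : (ℕ → ℕ) → ℕ) [S1T t] [S1T s] : S1T fun ρ => Nat.pair (t ρ) (s ρ) := by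
  have h : Def3 fun a b c => c = Nat.pair a b := S1.of_D0 D0_pair
  have ht : S1T fun ρ => t fun i => ρ (i + 1) := S1T.ren inferInstance _
  have hs : S1T fun ρ => s fun i => ρ (i + 1) := S1T.ren inferInstance _
  exact ⟨h.comp (fun ρ => t fun i => ρ (i + 1)) (fun ρ => s fun i => ρ (i + 1)) fun ρ => ρ 0⟩

instance S1.eq (t s : (ℕ → ℕ) → ℕ) [ht : S1T t] [hs : S1T s] : S1 fun ρ => t ρ = s ρ :=
  S1.comp t (fun a ρ => a = s ρ) ht hs.out
instance S1.le (t s : (ℕ → ℕ) → ℕ) [ht : S1T t] [hs : S1T s] : S1 fun ρ => t ρ ≤ s ρ :=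
  Def2.comp (P := fun a b => a ≤ b) (S1.of_D0 inferInstance) t s
instance S1.lt (t s : (ℕ → ℕ) → ℕ) [ht : S1T t] [hs : S1T s] : S1 fun ρ => t ρ < s ρ :=
  Def2.comp (P := fun a b => a < b) (S1.of_D0 inferInstance) t s
instance S1.ne (t s : (ℕ → ℕ) → ℕ) [ht : S1T t] [hs : S1T s] : S1 fun ρ => t ρ ≠ s ρ :=
  Def2.comp (P := fun a b => a ≠ b) (S1.of_D0 (D0.not fun ρ => ρ 0 = ρ 1)) t s

instance S1.ball (Q : ℕ → (ℕ → ℕ) → Prop) (t : (ℕ → ℕ) → ℕ) [ht : S1T t]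
    [hQ : S1 fun ρ => Q (ρ 0) (fun i => ρ (i + 1))] : S1 fun ρ => ∀ i, i < t ρ → Q i ρ := by
  refine S1.comp t (fun b ρ => ∀ i, i < b → Q i ρ) ht ?_
  have h1 : S1 fun ρ => Q (ρ 0) fun i => ρ (i + 2) :=
    hQ.ren fun i => Nat.casesOn i 0 fun j => j + 2
  have := S1.ball0 (fun i ρ => ρ 0 ≤ i ∨ Q i fun j => ρ (j + 1)) 0 inferInstance
  refine this.congr fun ρ => ?_
  constructor
  · intro h i hi
    by_cases h1 : ρ 0 ≤ i
    · exact Or.inl h1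
    · exact Or.inr (h i (by omega))
  · intro h i hi
    rcases h i (by omega) with h1 | h1
    · omega
    · exact h1

/-! ### Sequences -/

/-- The graph of the beta function. -/
def BetaR (q i x : ℕ) : Prop := Nat.beta q i = x

theorem beta_iff (q i x : ℕ) : BetaR q i x ↔ ∃ a, a ≤ q ∧ ∃ b, b ≤ q ∧ ∃ k, k ≤ q ∧
    q = Nat.pair a b ∧ a = k * ((i + 1) * b + 1) + x ∧ x < (i + 1) * b + 1 := by
  unfold BetaR Nat.beta
  constructor
  · rintro rfl
    refine ⟨q.unpair.1, Nat.unpair_left_le _, q.unpair.2, Nat.unpair_right_le _,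
      q.unpair.1 / ((i + 1) * q.unpair.2 + 1),
      (Nat.div_le_self _ _).trans (Nat.unpair_left_le _), by simp, ?_, Nat.mod_lt _ (by omega)⟩
    exact (Nat.div_add_mod' _ _).symm
  · rintro ⟨a, _, b, _, k, _, rfl, h, h2⟩
    simp only [Nat.unpair_pair]
    rw [h, Nat.mul_add_mod', Nat.mod_eq_of_lt h2]


end

section

instance D0.pair (i j k : ℕ) : D0 fun ρ => ρ k = Nat.pair (ρ i) (ρ j) :=
  D0_pair.ren fun n => Nat.casesOn n i fun n => Nat.casesOn n j fun _ => k

theorem D0_beta : D0 fun ρ => BetaR (ρ 0) (ρ 1) (ρ 2) := by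
  simp only [beta_iff]
  infer_instance

instance D0.beta (i j k : ℕ) : D0 fun ρ => BetaR (ρ i) (ρ j) (ρ k) :=
  D0_beta.ren fun n => Nat.casesOn n i fun n => Nat.casesOn n j fun _ => k

instance S1.beta (t s r : (ℕ → ℕ) → ℕ) [S1T t] [S1T s] [S1T r] :
    S1 fun ρ => BetaR (t ρ) (s ρ) (r ρ) := Def3.comp (S1.of_D0 D0_beta) t s r

theorem exists_beta (n : ℕ) (f : ℕ → ℕ) : ∃ q, ∀ i < n, Nat.beta q i = f i := by
  refine ⟨Nat.unbeta ((List.range n).map f), fun i hi => ?_⟩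
  have := Nat.beta_unbeta_coe ((List.range n).map f) ⟨i, by simpa using hi⟩
  rw [this]; simp

/-- Membership in the finite set coded by `g`. -/
def In (g x : ℕ) : Prop := ∃ n, n ≤ g ∧ ∃ q, q ≤ g ∧ g = Nat.pair n q ∧
  ∃ i, i ≤ n ∧ i < n ∧ BetaR q i x

theorem D0_In : D0 fun ρ => In (ρ 0) (ρ 1) := by
  unfold In; infer_instance

instance D0.in (i j : ℕ) : D0 fun ρ => In (ρ i) (ρ j) :=
  D0_In.ren fun n => Nat.casesOn n i fun _ => j

instance S1.in (t s : (ℕ → ℕ) → ℕ) [S1T t] [S1T s] : S1 fun ρ => In (t ρ) (s ρ) :=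
  Def2.comp (S1.of_D0 D0_In) t s
instance S1.not_in (t s : (ℕ → ℕ) → ℕ) [S1T t] [S1T s] : S1 fun ρ => ¬ In (t ρ) (s ρ) :=
  Def2.comp (P := fun a b => ¬ In a b) (S1.of_D0 (D0.not _ (hP := D0_In))) t s

theorem exists_In (F : Finset ℕ) : ∃ g, ∀ x, In g x ↔ x ∈ F := by
  obtain ⟨q, hq⟩ := exists_beta F.toList.length fun i => F.toList.getD i 0
  refine ⟨Nat.pair F.toList.length q, fun x => ?_⟩
  rw [← Finset.mem_toList, List.mem_iff_getElem]
  unfold In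
  constructor
  · rintro ⟨n, _, q', _, e, i, _, hi, hb⟩
    rw [Nat.pair_eq_pair] at e
    obtain ⟨rfl, rfl⟩ := e
    refine ⟨i, hi, ?_⟩
    rw [← hb, hq i hi]; exact (List.getD_eq_getElem _ _ hi).symm
  · rintro ⟨i, hi, rfl⟩
    refine ⟨_, Nat.left_le_pair _ _, _, Nat.right_le_pair _ _, rfl, i, hi.le, hi, ?_⟩
    unfold BetaR
    rw [hq i hi]; exact List.getD_eq_getElem _ _ hi

/-- Inductive closure. -/
inductive Clo (A : ℕ → Prop) (R : ℕ → ℕ → ℕ → Prop) : ℕ → Prop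
  | ax {x} : A x → Clo A R x
  | r {x y z} : R x y z → Clo A R y → Clo A R z → Clo A R x

/-- Derivations for the closure. -/
def CloSeq (A : ℕ → Prop) (R : ℕ → ℕ → ℕ → Prop) (n : ℕ) (f : ℕ → ℕ) : Prop :=
  ∀ i < n, A (f i) ∨ ∃ j < i, ∃ k < i, R (f i) (f j) (f k)

theorem clo_seq {A : ℕ → Prop} {R : ℕ → ℕ → ℕ → Prop} {x : ℕ} (h : Clo A R x) :
    ∃ n f, CloSeq A R n f ∧ ∃ i < n, f i = x := by
  induction h with
  | @ax x h => exact ⟨1, fun _ => x, fun i _ => Or.inl h, 0, by omega, rfl⟩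
  | @r x y z h _ _ ih1 ih2 =>
    obtain ⟨n1, f1, h1, i1, hi1, e1⟩ := ih1
    obtain ⟨n2, f2, h2, i2, hi2, e2⟩ := ih2
    refine ⟨n1 + n2 + 1, fun i => if i < n1 then f1 i else if i < n1 + n2 then f2 (i - n1) else x,
      ?_, n1 + n2, by omega, by simp⟩
    intro i hi
    by_cases c1 : i < n1
    · rcases h1 i c1 with h | ⟨j, hj, k, hk, h⟩
      · left; simpa [c1] using h
      · right; refine ⟨j, hj, k, hk, ?_⟩
        simpa [c1, hj.trans c1, hk.trans c1] using h
    · by_cases c2 : i < n1 + n2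
      · rcases h2 (i - n1) (by omega) with h | ⟨j, hj, k, hk, h⟩
        · left; simpa [c1, c2] using h
        · right; refine ⟨n1 + j, by omega, n1 + k, by omega, ?_⟩
          have a1 : n1 + j < n1 + n2 := by omega
          have a2 : n1 + k < n1 + n2 := by omega
          simpa [c1, c2, show j < n2 by omega, show k < n2 by omega] using h
      · right
        refine ⟨i1, by omega, n1 + i2, by omega, ?_⟩
        simpa [c1, c2, hi1, hi2, e1, e2] using h

theorem clo_of_seq {A : ℕ → Prop} {R : ℕ → ℕ → ℕ → Prop} {n : ℕ} {f : ℕ → ℕ}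
    (h : CloSeq A R n f) (i : ℕ) : i < n → Clo A R (f i) := by
  induction i using Nat.strong_induction_on with
  | _ i ih =>
    intro hi
    rcases h i hi with h | ⟨j, hj, k, hk, h⟩
    · exact .ax h
    · exact .r h (ih j hj (by omega)) (ih k hk (by omega))

theorem Def1.clo {A : ℕ → Prop} {R : ℕ → ℕ → ℕ → Prop} (hA : Def1 A) (hR : Def3 R) :
    Def1 (Clo A R) := by
  have iA : ∀ t : (ℕ → ℕ) → ℕ, [S1T t] → S1 fun ρ => A (t ρ) := fun t _ => hA.comp t
  have iR : ∀ t s r : (ℕ → ℕ) → ℕ, [S1T t] → [S1T s] → [S1T r] → S1 fun ρ => R (t ρ) (s ρ) (r ρ) :=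
    fun t s r _ _ _ => hR.comp t s r
  have : Def1 fun x => ∃ n q, (∃ i, i < n ∧ BetaR q i x) ∧ ∀ i, i < n →
      ∃ a, BetaR q i a ∧ (A a ∨ ∃ j, j < i ∧ ∃ k, k < i ∧ ∃ b, BetaR q j b ∧ ∃ c, BetaR q k c ∧ R a b c) :=
    inferInstance
  refine this.congr fun ρ => ?_
  generalize ρ 0 = x
  have e : ∀ n q, (∀ i, i < n → ∃ a, BetaR q i a ∧
      (A a ∨ ∃ j, j < i ∧ ∃ k, k < i ∧ ∃ b, BetaR q j b ∧ ∃ c, BetaR q k c ∧ R a b c)) ↔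
      CloSeq A R n (Nat.beta q) := by
    intro n q
    unfold CloSeq BetaR
    simp only [exists_eq_left']
  simp only [e]
  constructor
  · intro h
    obtain ⟨n, f, h1, i, hi, rfl⟩ := clo_seq h
    obtain ⟨q, hq⟩ := exists_beta n f
    refine ⟨n, q, ⟨i, hi, hq i hi⟩, fun i hi => ?_⟩
    rcases h1 i hi with h | ⟨j, hj, k, hk, h⟩
    · left; rwa [hq i hi]
    · right; refine ⟨j, hj, k, hk, ?_⟩
      rwa [hq i hi, hq j (by omega), hq k (by omega)]
  · rintro ⟨n, q, ⟨i, hi, rfl⟩, h⟩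
    exact clo_of_seq h i hi

/-! ### Primitive recursive functions -/

/-- Functions with definable graph. -/
abbrev DefF1 (f : ℕ → ℕ) : Prop := Def2 fun x y => y = f x

theorem DefF1.comp {f : ℕ → ℕ} (h : DefF1 f) (t : (ℕ → ℕ) → ℕ) [ht : S1T t] :
    S1T fun ρ => f (t ρ) := by
  have ht' : S1T fun ρ => t fun i => ρ (i + 1) := S1T.ren inferInstance _
  exact ⟨Def2.comp h (fun ρ => t fun i => ρ (i + 1)) fun ρ => ρ 0⟩

theorem DefF1.of (f : ℕ → ℕ) (h : S1T fun ρ => f (ρ 0)) : DefF1 f :=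
  h.out.ren fun i => Nat.casesOn i 1 fun _ => 0

/-- Graphs of functions given by recursion. -/
theorem Def3.prec {b : ℕ → ℕ} {h : ℕ → ℕ} (hb : DefF1 b) (hh : DefF1 h) :
    Def3 fun z n y => y = Nat.rec (b z) (fun k IH => h (Nat.pair z (Nat.pair k IH))) n := by
  have ib : ∀ t : (ℕ → ℕ) → ℕ, [S1T t] → S1T fun ρ => b (t ρ) := fun t _ => hb.comp t
  have ih : ∀ t : (ℕ → ℕ) → ℕ, [S1T t] → S1T fun ρ => h (t ρ) := fun t _ => hh.comp t
  let A : ℕ → Prop := fun w => ∃ z, w = Nat.pair z (Nat.pair 0 (b z))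
  let R : ℕ → ℕ → ℕ → Prop := fun w w1 _ => ∃ z k y, w1 = Nat.pair z (Nat.pair k y) ∧
    w = Nat.pair z (Nat.pair (k + 1) (h (Nat.pair z (Nat.pair k y))))
  have hA : Def1 A := by unfold Def1; infer_instance
  have hR : Def3 R := by unfold Def3; infer_instance
  have hC := Def1.clo hA hR
  refine (hC.comp fun ρ => Nat.pair (ρ 0) (Nat.pair (ρ 1) (ρ 2))).congr fun ρ => ?_
  generalize ρ 0 = z
  generalize ρ 1 = n
  generalize ρ 2 = y
  constructor
  · rintro rfl
    induction n with
    | zero => exact .ax ⟨z, rfl⟩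
    | succ n ih => exact .r (y := _) (z := _) ⟨z, n, _, rfl, rfl⟩ ih ih
  · intro hc
    have : ∀ w, Clo A R w → ∃ z n, w = Nat.pair z (Nat.pair n
        (Nat.rec (b z) (fun k IH => h (Nat.pair z (Nat.pair k IH))) n)) := by
      intro w hw
      induction hw with
      | ax h => obtain ⟨z, rfl⟩ := h; exact ⟨z, 0, rfl⟩
      | r h1 _ _ ih1 _ =>
        obtain ⟨z, k, y, rfl, rfl⟩ := h1
        obtain ⟨z', n', e⟩ := ih1
        simp only [Nat.pair_eq_pair] at e
        obtain ⟨rfl, rfl, rfl⟩ := e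
        exact ⟨z, k + 1, rfl⟩
    obtain ⟨z', n', e⟩ := this _ hc
    simp only [Nat.pair_eq_pair] at e
    obtain ⟨rfl, rfl, rfl⟩ := e
    rfl

theorem DefF1.primrec {f : ℕ → ℕ} (hf : Nat.Primrec f) : DefF1 f := by
  induction hf with
  | zero => exact DefF1.of _ (S1T.const 0)
  | succ => exact DefF1.of _ (inferInstanceAs (S1T fun ρ => ρ 0 + 1))
  | left =>
    have : Def2 fun x y => ∃ b, x = Nat.pair y b := inferInstance
    refine this.congr fun ρ => ⟨?_, ?_⟩
    · intro h; exact ⟨(ρ 0).unpair.2, by rw [h]; simp⟩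
    · rintro ⟨b, h⟩; rw [h]; simp
  | right =>
    have : Def2 fun x y => ∃ b, x = Nat.pair b y := inferInstance
    refine this.congr fun ρ => ⟨?_, ?_⟩
    · intro h; exact ⟨(ρ 0).unpair.1, by rw [h]; simp⟩
    · rintro ⟨b, h⟩; rw [h]; simp
  | @pair f g _ _ ih1 ih2 =>
    have h1 : S1T fun ρ => f (ρ 0) := ih1.comp _
    have h2 : S1T fun ρ => g (ρ 0) := ih2.comp _
    exact DefF1.of _ inferInstance
  | @comp f g _ _ ih1 ih2 =>
    have h2 : S1T fun ρ => g (ρ 0) := ih2.comp _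
    exact DefF1.of _ (ih1.comp _)
  | @prec f g _ _ ih1 ih2 =>
    have h := Def3.prec ih1 ih2
    have i : ∀ t s r : (ℕ → ℕ) → ℕ, [S1T t] → [S1T s] → [S1T r] → S1 fun ρ =>
      r ρ = Nat.rec (f (t ρ)) (fun k IH => g (Nat.pair (t ρ) (Nat.pair k IH))) (s ρ) :=
      fun t s r _ _ _ => h.comp t s r
    have : Def2 fun x y => ∃ z n, x = Nat.pair z n ∧
      y = Nat.rec (f z) (fun k IH => g (Nat.pair z (Nat.pair k IH))) n := inferInstance
    refine this.congr fun ρ => ⟨?_, ?_⟩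
    · intro h; exact ⟨(ρ 0).unpair.1, (ρ 0).unpair.2, by simp, by rw [h]⟩
    · rintro ⟨z, n, h1, h2⟩; rw [h1, h2]; simp [Nat.unpaired]


end

section

/-! ## Part F : arithmetization of syntax -/

/-- Triples. -/
def tri (a b c : ℕ) : ℕ := Nat.pair a (Nat.pair b c)
theorem tri_inj {a b c a' b' c' : ℕ} : tri a b c = tri a' b' c' ↔ a = a' ∧ b = b' ∧ c = c' := by
  simp [tri, Nat.pair_eq_pair]
instance S1T.tri (t s r : (ℕ → ℕ) → ℕ) [S1T t] [S1T s] [S1T r] :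
    S1T fun ρ => tri (t ρ) (s ρ) (r ρ) := by unfold PLN.tri; infer_instance

theorem Def1.inst {P : ℕ → Prop} (h : Def1 P) : ∀ t : (ℕ → ℕ) → ℕ, [S1T t] → S1 fun ρ => P (t ρ) :=
  fun t _ => h.comp t
theorem Def2.inst {P : ℕ → ℕ → Prop} (h : Def2 P) : ∀ t s : (ℕ → ℕ) → ℕ, [S1T t] → [S1T s] →
    S1 fun ρ => P (t ρ) (s ρ) := fun t s _ _ => h.comp t s
theorem Def3.inst {P : ℕ → ℕ → ℕ → Prop} (h : Def3 P) : ∀ t s r : (ℕ → ℕ) → ℕ, [S1T t] → [S1T s] →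
    [S1T r] → S1 fun ρ => P (t ρ) (s ρ) (r ρ) := fun t s r _ _ _ => h.comp t s r

/-! ### Substitution -/

/-- Axioms for the graph of term substitution. -/
def TA (VarR : ℕ → ℕ → ℕ → Prop) (w : ℕ) : Prop := ∃ e x y, w = tri e x y ∧
  ((∃ n, VarR e n y ∧ x = Nat.pair 0 n) ∨
    (∃ y', VarR e 0 y' ∧ x = Nat.pair 1 0 ∧ y = Nat.pair 1 0))
/-- Rules for the graph of term substitution. -/
def TR (w w1 w2 : ℕ) : Prop := ∃ e x1 y1, w1 = tri e x1 y1 ∧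
  (w = tri e (Nat.pair 2 x1) (Nat.pair 2 y1) ∨ ∃ x2 y2, w2 = tri e x2 y2 ∧
    (w = tri e (Nat.pair 3 (Nat.pair x1 x2)) (Nat.pair 3 (Nat.pair y1 y2)) ∨
     w = tri e (Nat.pair 4 (Nat.pair x1 x2)) (Nat.pair 4 (Nat.pair y1 y2))))
/-- The graph of term substitution. -/
def TG (VarR : ℕ → ℕ → ℕ → Prop) (e x y : ℕ) : Prop := Clo (TA VarR) TR (tri e x y)
/-- Axioms for the graph of formula substitution. -/
def FA (VarR : ℕ → ℕ → ℕ → Prop) (w : ℕ) : Prop := ∃ e x1 y1 x2 y2, TG VarR e x1 y1 ∧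
  TG VarR e x2 y2 ∧
  (w = tri e (Nat.pair 0 (Nat.pair x1 x2)) (Nat.pair 0 (Nat.pair y1 y2)) ∨
   w = tri e (Nat.pair 1 (Nat.pair x1 x2)) (Nat.pair 1 (Nat.pair y1 y2)))
/-- Rules for the graph of formula substitution. -/
def FR (UpR : ℕ → ℕ → Prop) (w w1 w2 : ℕ) : Prop := ∃ e x1 y1, w1 = tri e x1 y1 ∧
  (w = tri e (Nat.pair 2 x1) (Nat.pair 2 y1) ∨
   (∃ e0, UpR e0 e ∧ (w = tri e0 (Nat.pair 6 x1) (Nat.pair 6 y1) ∨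
     w = tri e0 (Nat.pair 7 x1) (Nat.pair 7 y1))) ∨
   ∃ x2 y2, w2 = tri e x2 y2 ∧
    (w = tri e (Nat.pair 3 (Nat.pair x1 x2)) (Nat.pair 3 (Nat.pair y1 y2)) ∨
     w = tri e (Nat.pair 4 (Nat.pair x1 x2)) (Nat.pair 4 (Nat.pair y1 y2)) ∨
     w = tri e (Nat.pair 5 (Nat.pair x1 x2)) (Nat.pair 5 (Nat.pair y1 y2))))
/-- The graph of formula substitution. -/
def FG (VarR : ℕ → ℕ → ℕ → Prop) (UpR : ℕ → ℕ → Prop) (e x y : ℕ) : Prop :=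
  Clo (FA VarR) (FR UpR) (tri e x y)

theorem def_TG {VarR : ℕ → ℕ → ℕ → Prop} (hV : Def3 VarR) : Def3 (TG VarR) := by
  have iV := hV.inst
  have h1 : Def1 (TA VarR) := by unfold TA; infer_instance
  have h2 : Def3 TR := by unfold TR; infer_instance
  exact (Def1.clo h1 h2).comp _

theorem def_FG {VarR : ℕ → ℕ → ℕ → Prop} (hV : Def3 VarR) {UpR : ℕ → ℕ → Prop} (hU : Def2 UpR) :
    Def3 (FG VarR UpR) := by
  have iV := (def_TG hV).inst
  have iU := hU.inst
  have h1 : Def1 (FA VarR) := by unfold FA; infer_instance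
  have h2 : Def3 (FR UpR) := by unfold FR; infer_instance
  exact (Def1.clo h1 h2).comp _

section
variable {α : Type} {enc : α → ℕ} {env : α → ℕ → ATerm} {up : α → α}
  {VarR : ℕ → ℕ → ℕ → Prop} {UpR : ℕ → ℕ → Prop}

theorem TG_iff (hE : Function.Injective enc)
    (hV : ∀ e n y, VarR e n y ↔ ∃ a, e = enc a ∧ y = (env a n).code) (e x y : ℕ) :
    TG VarR e x y ↔ ∃ a t, e = enc a ∧ x = ATerm.code t ∧ y = (t.substAll (env a)).code := by
  constructor
  · intro h
    have : ∀ w, Clo (TA VarR) TR w → ∃ a t, w = tri (enc a) (ATerm.code t) (t.substAll (env a)).code := by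
      intro w hw
      induction hw with
      | ax h =>
        obtain ⟨e, x, y, rfl, ⟨n, h, rfl⟩ | ⟨y', h, rfl, rfl⟩⟩ := h
        · obtain ⟨a, rfl, rfl⟩ := (hV _ _ _).1 h
          exact ⟨a, .var n, rfl⟩
        · obtain ⟨a, rfl, rfl⟩ := (hV _ _ _).1 h
          exact ⟨a, .zero, rfl⟩
      | r h _ _ ih1 ih2 =>
        obtain ⟨e, x1, y1, rfl, h⟩ := h
        obtain ⟨a, t, e1⟩ := ih1
        obtain ⟨rfl, rfl, rfl⟩ := tri_inj.1 e1
        rcases h with rfl | ⟨x2, y2, rfl, h⟩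
        · exact ⟨a, .succ t, rfl⟩
        · obtain ⟨a', s, e2⟩ := ih2
          obtain ⟨e3, rfl, rfl⟩ := tri_inj.1 e2
          obtain rfl := hE e3
          rcases h with rfl | rfl
          · exact ⟨a, .add t s, rfl⟩
          · exact ⟨a, .mul t s, rfl⟩
    obtain ⟨a, t, e⟩ := this _ h
    obtain ⟨rfl, rfl, rfl⟩ := tri_inj.1 e
    exact ⟨a, t, rfl, rfl, rfl⟩
  · rintro ⟨a, t, rfl, rfl, rfl⟩
    have hz : ∀ n, VarR (enc a) n (env a n).code := fun n => (hV _ _ _).2 ⟨a, rfl, rfl⟩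
    unfold TG
    induction t with
    | var n => exact .ax ⟨_, _, _, rfl, Or.inl ⟨n, hz n, rfl⟩⟩
    | zero => exact .ax ⟨_, _, _, rfl, Or.inr ⟨_, hz 0, rfl, rfl⟩⟩
    | succ t ih => exact .r ⟨_, _, _, rfl, Or.inl rfl⟩ ih ih
    | add t s ih1 ih2 => exact .r ⟨_, _, _, rfl, Or.inr ⟨_, _, rfl, Or.inl rfl⟩⟩ ih1 ih2
    | mul t s ih1 ih2 => exact .r ⟨_, _, _, rfl, Or.inr ⟨_, _, rfl, Or.inr rfl⟩⟩ ih1 ih2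

theorem FG_iff (hE : Function.Injective enc)
    (hV : ∀ e n y, VarR e n y ↔ ∃ a, e = enc a ∧ y = (env a n).code)
    (hU : ∀ e e', UpR e e' ↔ ∃ a, e = enc a ∧ e' = enc (up a))
    (hup : ∀ a, liftSub (env a) = env (up a)) (e x y : ℕ) :
    FG VarR UpR e x y ↔ ∃ a φ, e = enc a ∧ x = AFml.code φ ∧ y = (φ.substAll (env a)).code := by
  have hT := TG_iff (VarR := VarR) hE hV
  constructor
  · intro h
    have : ∀ w, Clo (FA VarR) (FR UpR) w →
        ∃ a φ, w = tri (enc a) (AFml.code φ) (φ.substAll (env a)).code := by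
      intro w hw
      induction hw with
      | ax h =>
        obtain ⟨e, x1, y1, x2, y2, h1, h2, h⟩ := h
        obtain ⟨a, t, rfl, rfl, rfl⟩ := (hT _ _ _).1 h1
        obtain ⟨a', s, e3, rfl, rfl⟩ := (hT _ _ _).1 h2
        obtain rfl := hE e3
        rcases h with rfl | rfl
        · exact ⟨a, .eq t s, rfl⟩
        · exact ⟨a, .le t s, rfl⟩
      | r h _ _ ih1 ih2 =>
        obtain ⟨e, x1, y1, rfl, h⟩ := h
        obtain ⟨a, φ, e1⟩ := ih1
        obtain ⟨rfl, rfl, rfl⟩ := tri_inj.1 e1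
        rcases h with rfl | ⟨e0, h, h'⟩ | ⟨x2, y2, rfl, h⟩
        · exact ⟨a, .neg φ, rfl⟩
        · obtain ⟨a0, rfl, e3⟩ := (hU _ _).1 h
          obtain rfl := hE e3
          rcases h' with rfl | rfl
          · exact ⟨a0, .all φ, by simp only [AFml.substAll, hup]; rfl⟩
          · exact ⟨a0, .ex φ, by simp only [AFml.substAll, hup]; rfl⟩
        · obtain ⟨a', s, e2⟩ := ih2
          obtain ⟨e3, rfl, rfl⟩ := tri_inj.1 e2
          obtain rfl := hE e3
          rcases h with rfl | rfl | rfl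
          · exact ⟨a, .and φ s, rfl⟩
          · exact ⟨a, .or φ s, rfl⟩
          · exact ⟨a, .imp φ s, rfl⟩
    obtain ⟨a, t, e⟩ := this _ h
    obtain ⟨rfl, rfl, rfl⟩ := tri_inj.1 e
    exact ⟨a, t, rfl, rfl, rfl⟩
  · rintro ⟨a, φ, rfl, rfl, rfl⟩
    unfold FG
    induction φ generalizing a with
    | eq t s =>
      exact .ax ⟨_, _, _, _, _, (hT _ _ _).2 ⟨a, t, rfl, rfl, rfl⟩,
        (hT _ _ _).2 ⟨a, s, rfl, rfl, rfl⟩, Or.inl rfl⟩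
    | le t s =>
      exact .ax ⟨_, _, _, _, _, (hT _ _ _).2 ⟨a, t, rfl, rfl, rfl⟩,
        (hT _ _ _).2 ⟨a, s, rfl, rfl, rfl⟩, Or.inr rfl⟩
    | neg φ ih => exact .r ⟨_, _, _, rfl, Or.inl rfl⟩ (ih a) (ih a)
    | and φ ψ ih1 ih2 =>
      exact .r ⟨_, _, _, rfl, Or.inr (Or.inr ⟨_, _, rfl, Or.inl rfl⟩)⟩ (ih1 a) (ih2 a)
    | or φ ψ ih1 ih2 =>
      exact .r ⟨_, _, _, rfl, Or.inr (Or.inr ⟨_, _, rfl, Or.inr (Or.inl rfl)⟩)⟩ (ih1 a) (ih2 a)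
    | imp φ ψ ih1 ih2 =>
      exact .r ⟨_, _, _, rfl, Or.inr (Or.inr ⟨_, _, rfl, Or.inr (Or.inr rfl)⟩)⟩ (ih1 a) (ih2 a)
    | all φ ih =>
      refine .r ⟨_, _, _, rfl, Or.inr (Or.inl ⟨_, (hU _ _).2 ⟨a, rfl, rfl⟩, Or.inl ?_⟩)⟩
        (ih (up a)) (ih (up a))
      simp only [AFml.substAll, hup]; rfl
    | ex φ ih =>
      refine .r ⟨_, _, _, rfl, Or.inr (Or.inl ⟨_, (hU _ _).2 ⟨a, rfl, rfl⟩, Or.inr ?_⟩)⟩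
        (ih (up a)) (ih (up a))
      simp only [AFml.substAll, hup]; rfl
end

/-! ### Lifting -/

/-- Lifting of variables. -/
def LV (c n y : ℕ) : Prop := (n < c ∧ y = Nat.pair 0 n) ∨ (c ≤ n ∧ y = Nat.pair 0 (n + 1))
theorem def_LV : Def3 LV := by unfold LV; infer_instance
theorem LV_iff (e n y : ℕ) : LV e n y ↔ ∃ a, e = id a ∧ y = (liftEnv a n).code := by
  unfold LV liftEnv
  simp only [id, exists_eq_left', ATerm.code]
  split_ifs <;> constructor
  · rintro (h | h)
    · exact h.2
    · omega
  · intro h; left; omega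
  · rintro (h | h)
    · omega
    · exact h.2
  · intro h; right; omega

/-- Graph of lifting for terms. -/
def LT (c x y : ℕ) : Prop := TG LV c x y
/-- Graph of lifting for formulas. -/
def LF (c x y : ℕ) : Prop := FG LV (fun c d => d = c + 1) c x y
theorem def_LT : Def3 LT := def_TG def_LV
theorem def_LF : Def3 LF := def_FG def_LV inferInstance
theorem LT_iff (c x y : ℕ) : LT c x y ↔ ∃ t, x = ATerm.code t ∧ y = (t.lift c).code := by
  unfold LT
  rw [TG_iff (enc := id) (env := liftEnv) Function.injective_id LV_iff]
  simp [ATerm.lift_eq]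
theorem LF_iff (c x y : ℕ) : LF c x y ↔ ∃ φ, x = AFml.code φ ∧ y = (φ.lift c).code := by
  unfold LF
  rw [FG_iff (enc := id) (env := liftEnv) (up := fun c => c + 1) Function.injective_id LV_iff
    (by simp) liftSub_liftEnv]
  simp [AFml.lift_eq]

/-- Codes of terms. -/
def IsT (x : ℕ) : Prop := ∃ y, LT 0 x y
/-- Codes of formulas. -/
def IsF (x : ℕ) : Prop := ∃ y, LF 0 x y
theorem def_IsT : Def1 IsT := by have := def_LT.inst; unfold IsT; infer_instance
theorem def_IsF : Def1 IsF := by have := def_LF.inst; unfold IsF; infer_instance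
theorem IsT_iff (x : ℕ) : IsT x ↔ ∃ t, x = ATerm.code t := by
  unfold IsT; simp only [LT_iff]
  exact ⟨fun ⟨_, t, h, _⟩ => ⟨t, h⟩, fun ⟨t, h⟩ => ⟨_, t, h, rfl⟩⟩
theorem IsF_iff (x : ℕ) : IsF x ↔ ∃ t, x = AFml.code t := by
  unfold IsF; simp only [LF_iff]
  exact ⟨fun ⟨_, t, h, _⟩ => ⟨t, h⟩, fun ⟨t, h⟩ => ⟨_, t, h, rfl⟩⟩

/-! ### Substitution for one variable -/

/-- Encoding of the parameter. -/
def sEnc (a : ℕ × ATerm) : ℕ := Nat.pair a.1 a.2.code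
/-- The substitution. -/
def sEnv (a : ℕ × ATerm) (n : ℕ) : ATerm :=
  if n < a.1 then .var n else if n = a.1 then a.2 else .var (n - 1)
/-- Going under a binder. -/
def sUp (a : ℕ × ATerm) : ℕ × ATerm := (a.1 + 1, a.2.lift 0)

theorem sEnc_inj : Function.Injective sEnc := by
  rintro ⟨c, t⟩ ⟨d, s⟩ h
  simp only [sEnc, Nat.pair_eq_pair] at h
  rw [h.1, ATerm.code_inj h.2]

theorem sEnv_mk (c : ℕ) (t : ATerm) (n : ℕ) :
    sEnv (c, t) n = if n < c then .var n else if n = c then t else .var (n - 1) := rfl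

theorem sEnv_up (a : ℕ × ATerm) : liftSub (sEnv a) = sEnv (sUp a) := by
  obtain ⟨c, t⟩ := a
  funext i
  cases i with
  | zero => simp [liftSub, sEnv, sUp]
  | succ i =>
    change (sEnv (c, t) i).lift 0 = sEnv (c + 1, t.lift 0) (i + 1)
    rw [sEnv_mk, sEnv_mk]
    rcases lt_trichotomy i c with h | h | h
    · rw [if_pos h, if_pos (by omega)]; simp [ATerm.lift]
    · rw [if_neg (by omega), if_pos h, if_neg (by omega), if_pos (by omega)]
    · rw [if_neg (by omega), if_neg (by omega), if_neg (by omega), if_neg (by omega)]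
      simp only [ATerm.lift]
      congr 1
      simp; omega

theorem sEnv_zero (t : ATerm) : sEnv (0, t) = subst0Env t := by
  funext i; cases i <;> simp [sEnv, subst0Env]

/-- Substitution for variables. -/
def SV (e n y : ℕ) : Prop := ∃ c t, e = Nat.pair c t ∧ IsT t ∧ ((n < c ∧ y = Nat.pair 0 n) ∨
  (n = c ∧ y = t) ∨ ∃ k, n = k + 1 ∧ c ≤ k ∧ y = Nat.pair 0 k)
theorem def_SV : Def3 SV := by have := def_IsT.inst; unfold SV; infer_instance
theorem SV_iff (e n y : ℕ) : SV e n y ↔ ∃ a, e = sEnc a ∧ y = (sEnv a n).code := by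
  unfold SV
  simp only [IsT_iff]
  constructor
  · rintro ⟨c, _, rfl, ⟨t, rfl⟩, h⟩
    refine ⟨(c, t), rfl, ?_⟩
    simp only [sEnv]
    rcases h with ⟨h, rfl⟩ | ⟨rfl, rfl⟩ | ⟨k, rfl, h, rfl⟩
    · rw [if_pos h]; rfl
    · simp
    · rw [if_neg (by omega), if_neg (by omega)]; rfl
  · rintro ⟨⟨c, t⟩, rfl, rfl⟩
    refine ⟨c, _, rfl, ⟨t, rfl⟩, ?_⟩
    simp only [sEnv]
    rcases lt_trichotomy n c with h | h | h
    · left; rw [if_pos h]; exact ⟨h, rfl⟩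
    · right; left; rw [if_neg (by omega), if_pos h]; exact ⟨h, rfl⟩
    · right; right
      rw [if_neg (by omega), if_neg (by omega)]
      exact ⟨n - 1, by omega, by omega, rfl⟩

/-- Going under a binder, on codes. -/
def SU (e d : ℕ) : Prop := ∃ c t t', e = Nat.pair c t ∧ LT 0 t t' ∧ d = Nat.pair (c + 1) t'
theorem def_SU : Def2 SU := by have := def_LT.inst; unfold SU; infer_instance
theorem SU_iff (e d : ℕ) : SU e d ↔ ∃ a, e = sEnc a ∧ d = sEnc (sUp a) := by
  unfold SU
  simp only [LT_iff]
  constructor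
  · rintro ⟨c, _, _, rfl, ⟨t, rfl, rfl⟩, rfl⟩
    exact ⟨(c, t), rfl, rfl⟩
  · rintro ⟨⟨c, t⟩, rfl, rfl⟩
    exact ⟨c, _, _, rfl, ⟨t, rfl, rfl⟩, rfl⟩

/-- The graph of substitution `(φ, t) ↦ φ.subst0 t`. -/
def Sb (t x y : ℕ) : Prop := FG SV SU (Nat.pair 0 t) x y
theorem def_Sb : Def3 Sb := by
  have := (def_FG def_SV def_SU).inst; unfold Sb; infer_instance
theorem Sb_iff (s x y : ℕ) : Sb s x y ↔ ∃ t φ, s = ATerm.code t ∧ x = AFml.code φ ∧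
    y = (φ.subst0 t).code := by
  unfold Sb
  rw [FG_iff sEnc_inj SV_iff SU_iff sEnv_up]
  constructor
  · rintro ⟨⟨c, t⟩, φ, h, rfl, rfl⟩
    simp only [sEnc, Nat.pair_eq_pair] at h
    obtain ⟨rfl, rfl⟩ := h
    exact ⟨t, φ, rfl, rfl, by rw [sEnv_zero]; rfl⟩
  · rintro ⟨t, φ, rfl, rfl, rfl⟩
    exact ⟨(0, t), φ, rfl, rfl, by rw [sEnv_zero]; rfl⟩


end

section

instance S1T.fst (t : (ℕ → ℕ) → ℕ) [S1T t] : S1T fun ρ => (t ρ).unpair.1 :=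
  (DefF1.primrec Nat.Primrec.left).comp t
instance S1T.snd (t : (ℕ → ℕ) → ℕ) [S1T t] : S1T fun ρ => (t ρ).unpair.2 :=
  (DefF1.primrec Nat.Primrec.right).comp t

theorem Def3.compT {f : ℕ → ℕ → ℕ} (h : Def3 fun a b c => c = f a b) (t s : (ℕ → ℕ) → ℕ)
    [S1T t] [S1T s] : S1T fun ρ => f (t ρ) (s ρ) := by
  have ht : S1T fun ρ => t fun i => ρ (i + 1) := S1T.ren inferInstance _
  have hs : S1T fun ρ => s fun i => ρ (i + 1) := S1T.ren inferInstance _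
  exact ⟨Def3.comp h (fun ρ => t fun i => ρ (i + 1)) (fun ρ => s fun i => ρ (i + 1)) fun ρ => ρ 0⟩

instance S1T.sub (t s : (ℕ → ℕ) → ℕ) [S1T t] [S1T s] : S1T fun ρ => t ρ - s ρ := by
  have : Def3 fun a b c => (a = c + b) ∨ (a < b ∧ c = 0) := inferInstance
  exact Def3.compT (this.congr fun ρ => by omega) t s
instance S1T.min (t s : (ℕ → ℕ) → ℕ) [S1T t] [S1T s] : S1T fun ρ => min (t ρ) (s ρ) := by
  have : Def3 fun a b c => (a ≤ b ∧ c = a) ∨ (b ≤ a ∧ c = b) := inferInstance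
  exact Def3.compT (this.congr fun ρ => by omega) t s
instance S1T.max (t s : (ℕ → ℕ) → ℕ) [S1T t] [S1T s] : S1T fun ρ => max (t ρ) (s ρ) := by
  have : Def3 fun a b c => (a ≤ b ∧ c = b) ∨ (b ≤ a ∧ c = a) := inferInstance
  exact Def3.compT (this.congr fun ρ => by omega) t s

theorem DefF1.rec {f g : ℕ → ℕ} (hg : DefF1 g) (hf : ∀ n, f (n + 1) = g (f n)) : DefF1 f := by
  have h1 : DefF1 fun _ => f 0 := DefF1.of _ inferInstance
  have ig : ∀ t : (ℕ → ℕ) → ℕ, [S1T t] → S1T fun ρ => g (t ρ) := fun t _ => hg.comp t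
  have h2 : DefF1 fun w => g w.unpair.2.unpair.2 := DefF1.of _ inferInstance
  have h3 := (Def3.prec h1 h2).comp (fun _ => 0) (fun ρ => ρ 0) fun ρ => ρ 1
  refine h3.congr fun ρ => ?_
  have : ∀ n, f n = Nat.rec (f 0) (fun k IH => g (Nat.pair 0 (Nat.pair k IH)).unpair.2.unpair.2) n := by
    intro n
    induction n with
    | zero => rfl
    | succ n ih => rw [hf]; simp only [Nat.unpair_pair] at ih ⊢; rw [← ih]
  show ρ 1 = f (ρ 0) ↔ _
  exact ⟨fun h => h.trans (this _), fun h => h.trans (this _).symm⟩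

instance S1T.pow2 (t : (ℕ → ℕ) → ℕ) [S1T t] : S1T fun ρ => 2 ^ (t ρ) := by
  have : DefF1 fun n => 2 * n := DefF1.of _ inferInstance
  exact (DefF1.rec (f := fun n => 2 ^ n) this fun n => by ring).comp t
instance S1T.num (t : (ℕ → ℕ) → ℕ) [S1T t] : S1T fun ρ => (numeral (t ρ)).code := by
  have : DefF1 fun n => Nat.pair 2 n := DefF1.of _ inferInstance
  exact (DefF1.rec (f := fun n => (numeral n).code) this fun n => rfl).comp t

/-! ### Three valued evaluation -/

/-- Propositionally atomic formulas. -/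
def AFml.IsAt : AFml → Prop
  | .eq _ _ => True
  | .le _ _ => True
  | .all _ => True
  | .ex _ => True
  | _ => False

/-- Kleene's three valued evaluation. -/
def kval (atm : AFml → ℕ) : AFml → ℕ
  | .neg φ => 2 - kval atm φ
  | .and φ ψ => min (kval atm φ) (kval atm ψ)
  | .or φ ψ => max (kval atm φ) (kval atm ψ)
  | .imp φ ψ => max (2 - kval atm φ) (kval atm ψ)
  | φ => atm φ

theorem kval_at {atm : AFml → ℕ} {φ : AFml} (h : φ.IsAt) : kval atm φ = atm φ := by
  cases φ <;> first | rfl | exact h.elim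

/-- Codes of propositionally atomic formulas. -/
def IsAtC (x : ℕ) : Prop := ∃ y, x = Nat.pair 0 y ∨ x = Nat.pair 1 y ∨ x = Nat.pair 6 y ∨ x = Nat.pair 7 y
theorem def_IsAtC : Def1 IsAtC := by unfold IsAtC; infer_instance
theorem IsAtC_iff (φ : AFml) : IsAtC φ.code ↔ φ.IsAt := by
  unfold IsAtC
  cases φ <;> simp [AFml.code, AFml.IsAt, Nat.pair_eq_pair]

/-- Rules for the graph of the evaluation. -/
def KR (w w1 w2 : ℕ) : Prop := ∃ e x1 r1, w1 = tri e x1 r1 ∧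
  (w = tri e (Nat.pair 2 x1) (2 - r1) ∨ ∃ x2 r2, w2 = tri e x2 r2 ∧
   (w = tri e (Nat.pair 3 (Nat.pair x1 x2)) (min r1 r2) ∨
    w = tri e (Nat.pair 4 (Nat.pair x1 x2)) (max r1 r2) ∨
    w = tri e (Nat.pair 5 (Nat.pair x1 x2)) (max (2 - r1) r2)))
/-- The graph of the evaluation. -/
def KV (AtR : ℕ → ℕ → ℕ → Prop) (e x r : ℕ) : Prop :=
  Clo (fun w => ∃ e x r, w = tri e x r ∧ AtR e x r) KR (tri e x r)
theorem def_KV {AtR : ℕ → ℕ → ℕ → Prop} (h : Def3 AtR) : Def3 (KV AtR) := by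
  have iV := h.inst
  have h1 : Def1 fun w => ∃ e x r, w = tri e x r ∧ AtR e x r := inferInstance
  have h2 : Def3 KR := by unfold KR; infer_instance
  exact (Def1.clo h1 h2).comp _

theorem KV_iff {α : Type} {enc : α → ℕ} {atm : α → AFml → ℕ} {AtR : ℕ → ℕ → ℕ → Prop}
    (hE : Function.Injective enc)
    (hA : ∀ e x r, AtR e x r ↔ ∃ a φ, e = enc a ∧ AFml.IsAt φ ∧ x = φ.code ∧ r = atm a φ)
    (e x r : ℕ) : KV AtR e x r ↔ ∃ a φ, e = enc a ∧ x = AFml.code φ ∧ r = kval (atm a) φ := by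
  constructor
  · intro h
    have : ∀ w, Clo (fun w => ∃ e x r, w = tri e x r ∧ AtR e x r) KR w →
        ∃ a φ, w = tri (enc a) (AFml.code φ) (kval (atm a) φ) := by
      intro w hw
      induction hw with
      | ax h =>
        obtain ⟨e, x, r, rfl, h⟩ := h
        obtain ⟨a, φ, rfl, h1, rfl, rfl⟩ := (hA _ _ _).1 h
        exact ⟨a, φ, by rw [kval_at h1]⟩
      | r h _ _ ih1 ih2 =>
        obtain ⟨e, x1, y1, rfl, h⟩ := h
        obtain ⟨a, φ, e1⟩ := ih1
        obtain ⟨rfl, rfl, rfl⟩ := tri_inj.1 e1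
        rcases h with rfl | ⟨x2, y2, rfl, h⟩
        · exact ⟨a, .neg φ, rfl⟩
        · obtain ⟨a', s, e2⟩ := ih2
          obtain ⟨e3, rfl, rfl⟩ := tri_inj.1 e2
          obtain rfl := hE e3
          rcases h with rfl | rfl | rfl
          · exact ⟨a, .and φ s, rfl⟩
          · exact ⟨a, .or φ s, rfl⟩
          · exact ⟨a, .imp φ s, rfl⟩
    obtain ⟨a, t, e⟩ := this _ h
    obtain ⟨rfl, rfl, rfl⟩ := tri_inj.1 e
    exact ⟨a, t, rfl, rfl, rfl⟩
  · rintro ⟨a, φ, rfl, rfl, rfl⟩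
    unfold KV
    have base : ∀ φ : AFml, φ.IsAt → Clo (fun w => ∃ e x r, w = tri e x r ∧ AtR e x r) KR
        (tri (enc a) φ.code (kval (atm a) φ)) := by
      intro φ h
      rw [kval_at h]
      exact .ax ⟨_, _, _, rfl, (hA _ _ _).2 ⟨a, φ, rfl, h, rfl, rfl⟩⟩
    induction φ with
    | eq t s => exact base _ trivial
    | le t s => exact base _ trivial
    | neg φ ih => exact .r ⟨_, _, _, rfl, Or.inl rfl⟩ ih ih
    | and φ ψ ih1 ih2 =>
      exact .r ⟨_, _, _, rfl, Or.inr ⟨_, _, rfl, Or.inl rfl⟩⟩ ih1 ih2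
    | or φ ψ ih1 ih2 =>
      exact .r ⟨_, _, _, rfl, Or.inr ⟨_, _, rfl, Or.inr (Or.inl rfl)⟩⟩ ih1 ih2
    | imp φ ψ ih1 ih2 =>
      exact .r ⟨_, _, _, rfl, Or.inr ⟨_, _, rfl, Or.inr (Or.inr rfl)⟩⟩ ih1 ih2
    | all φ ih => exact base _ trivial
    | ex φ ih => exact base _ trivial

theorem kval_congr {a b : AFml → ℕ} (φ : AFml)
    (h : ∀ ψ : AFml, ψ.code ≤ φ.code → a ψ = b ψ) : kval a φ = kval b φ := by
  induction φ with
  | eq t s => exact h _ le_rfl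
  | le t s => exact h _ le_rfl
  | all φ ih => exact h _ le_rfl
  | ex φ ih => exact h _ le_rfl
  | neg φ ih =>
    simp only [kval]
    rw [ih fun ψ hψ => h ψ (hψ.trans (Nat.right_le_pair _ _))]
  | and φ ψ ih1 ih2 =>
    simp only [kval]
    rw [ih1 fun ψ hψ => h ψ (hψ.trans ((Nat.left_le_pair _ _).trans (Nat.right_le_pair _ _))),
      ih2 fun ψ hψ => h ψ (hψ.trans ((Nat.right_le_pair _ _).trans (Nat.right_le_pair _ _)))]
  | or φ ψ ih1 ih2 =>
    simp only [kval]
    rw [ih1 fun ψ hψ => h ψ (hψ.trans ((Nat.left_le_pair _ _).trans (Nat.right_le_pair _ _))),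
      ih2 fun ψ hψ => h ψ (hψ.trans ((Nat.right_le_pair _ _).trans (Nat.right_le_pair _ _)))]
  | imp φ ψ ih1 ih2 =>
    simp only [kval]
    rw [ih1 fun ψ hψ => h ψ (hψ.trans ((Nat.left_le_pair _ _).trans (Nat.right_le_pair _ _))),
      ih2 fun ψ hψ => h ψ (hψ.trans ((Nat.right_le_pair _ _).trans (Nat.right_le_pair _ _)))]

open Classical in
theorem kval_two (v : AFml → Prop) (φ : AFml) :
    kval (fun ψ => if v ψ then 2 else 0) φ = if φ.evalProp v then 2 else 0 := by
  induction φ with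
  | eq t s => rfl
  | le t s => rfl
  | all φ ih => rfl
  | ex φ ih => rfl
  | neg φ ih => simp only [kval, AFml.evalProp, ih]; by_cases h : φ.evalProp v <;> simp [h]
  | and φ ψ ih1 ih2 =>
    simp only [kval, AFml.evalProp, ih1, ih2]
    by_cases h : φ.evalProp v <;> by_cases h' : ψ.evalProp v <;> simp [h, h']
  | or φ ψ ih1 ih2 =>
    simp only [kval, AFml.evalProp, ih1, ih2]
    by_cases h : φ.evalProp v <;> by_cases h' : ψ.evalProp v <;> simp [h, h']
  | imp φ ψ ih1 ih2 =>
    simp only [kval, AFml.evalProp, ih1, ih2]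
    by_cases h : φ.evalProp v <;> by_cases h' : ψ.evalProp v <;> simp [h, h']

/-! ### Tautologies -/

/-- The atoms under a valuation given by bits. -/
def TAt (w x r : ℕ) : Prop := IsF x ∧ IsAtC x ∧
  (((∃ a b, w = (2 * a + 1) * 2 ^ x + b ∧ b < 2 ^ x) ∧ r = 2) ∨
   ((∃ a b, w = (2 * a) * 2 ^ x + b ∧ b < 2 ^ x) ∧ r = 0))
theorem def_TAt : Def3 TAt := by
  have := def_IsF.inst
  have := def_IsAtC.inst
  unfold TAt; infer_instance

theorem tb_aux (w p c : ℕ) (hp : 0 < p) :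
    (∃ b, w = c * p + b ∧ b < p) ↔ w / p = c := by
  constructor
  · rintro ⟨b, rfl, hb⟩
    rw [Nat.mul_comm, Nat.mul_add_div hp, Nat.div_eq_of_lt hb]; rfl
  · rintro rfl
    exact ⟨w % p, (Nat.div_add_mod' _ _).symm, Nat.mod_lt _ hp⟩

theorem TAt_iff (e x r : ℕ) : TAt e x r ↔ ∃ a φ, e = id a ∧ AFml.IsAt φ ∧ x = φ.code ∧
    r = if Nat.testBit a φ.code then 2 else 0 := by
  unfold TAt
  rw [IsF_iff]
  simp only [tb_aux _ _ _ (Nat.two_pow_pos _)]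
  have key : ∀ x : ℕ, ((((∃ a, e / 2 ^ x = 2 * a + 1) ∧ r = 2) ∨ ((∃ a, e / 2 ^ x = 2 * a) ∧ r = 0)) ↔
      r = if Nat.testBit e x then 2 else 0) := by
    intro x
    rw [Nat.testBit_eq_decide_div_mod_eq]
    generalize e / 2 ^ x = d
    rcases Nat.even_or_odd' d with ⟨k, rfl | rfl⟩
    · simp
      intro a h _; omega
    · have : (2 * k + 1) % 2 = 1 := by omega
      simp [this]
      intro a h _; omega
  constructor
  · rintro ⟨⟨φ, rfl⟩, h2, h3⟩
    exact ⟨e, φ, rfl, (IsAtC_iff φ).1 h2, rfl, (key _).1 h3⟩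
  · rintro ⟨_, φ, rfl, h, rfl, h3⟩
    exact ⟨⟨φ, rfl⟩, (IsAtC_iff φ).2 h, (key _).2 h3⟩

/-- Codes of tautologies. -/
def Ta (x : ℕ) : Prop := IsF x ∧ ∀ w, w < 2 ^ (x + 1) → KV TAt w x 2
theorem def_Ta : Def1 Ta := by
  have := def_IsF.inst
  have := (def_KV def_TAt).inst
  unfold Ta; infer_instance
theorem Ta_iff (φ : AFml) : Ta φ.code ↔ ATaut φ := by
  classical
  unfold Ta
  have hk := fun w x r => KV_iff (α := ℕ) (enc := id)
    (atm := fun a φ => if Nat.testBit a φ.code then 2 else 0) Function.injective_id TAt_iff w x r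
  simp only [hk]
  constructor
  · rintro ⟨_, h⟩ v
    let f : Fin (φ.code + 1) → Bool := fun i => decide (∃ ψ : AFml, ψ.code = i ∧ v ψ)
    obtain ⟨w, φ', e1, e2, e3⟩ := h (Nat.ofBits f) (Nat.ofBits_lt_two_pow f)
    obtain rfl := AFml.code_inj e2
    have e1 : w = Nat.ofBits f := e1.symm
    subst e1
    rw [kval_congr (b := fun ψ => if v ψ then 2 else 0), kval_two] at e3
    · by_contra hn
      simp [hn] at e3
    · intro ψ hψ
      have : (Nat.ofBits f).testBit ψ.code = decide (v ψ) := by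
        rw [Nat.testBit_ofBits_lt f _ (by omega)]
        simp only [f]
        congr 1
        refine propext ⟨?_, fun h => ⟨ψ, rfl, h⟩⟩
        rintro ⟨ψ', h1, h2⟩
        rw [AFml.code_inj h1] at h2; exact h2
      rw [this]; simp
  · intro h
    refine ⟨(IsF_iff _).2 ⟨φ, rfl⟩, fun w _ => ⟨w, φ, rfl, rfl, ?_⟩⟩
    have := kval_two (fun ψ => w.testBit ψ.code = true) φ
    rw [if_pos (h _)] at this
    refine this.symm.trans ?_
    congr 1
    funext ψ
    congr


end

section

/-! ### Theorems of the theory -/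

/-- Codes of axioms. -/
def ThA (p : ℕ → ℕ) (x : ℕ) : Prop :=
  (IsF x ∧ p x = 1) ∨ Ta x ∨
  (∃ f t y, Sb t f y ∧ x = Nat.pair 5 (Nat.pair (Nat.pair 6 f) y)) ∨
  (∃ f t y, Sb t f y ∧ x = Nat.pair 5 (Nat.pair y (Nat.pair 7 f))) ∨
  (∃ f g, IsF f ∧ IsF g ∧ x = Nat.pair 5 (Nat.pair (Nat.pair 6 (Nat.pair 5 (Nat.pair f g)))
    (Nat.pair 5 (Nat.pair (Nat.pair 6 f) (Nat.pair 6 g))))) ∨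
  (∃ f y, LF 0 f y ∧ x = Nat.pair 5 (Nat.pair f (Nat.pair 6 y))) ∨
  (∃ f, IsF f ∧ ∃ a b, a = Nat.pair 7 f ∧ b = Nat.pair 2 (Nat.pair 6 (Nat.pair 2 f)) ∧
    x = Nat.pair 3 (Nat.pair (Nat.pair 5 (Nat.pair a b)) (Nat.pair 5 (Nat.pair b a)))) ∨
  (∃ t, IsT t ∧ x = Nat.pair 0 (Nat.pair t t)) ∨
  (∃ f t s y z, Sb t f y ∧ Sb s f z ∧
    x = Nat.pair 5 (Nat.pair (Nat.pair 0 (Nat.pair t s)) (Nat.pair 5 (Nat.pair y z))))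
/-- The rules. -/
def ThR (w w1 w2 : ℕ) : Prop := w1 = Nat.pair 5 (Nat.pair w2 w) ∨ w = Nat.pair 6 w1
/-- Codes of theorems. -/
def Thm (p : ℕ → ℕ) (x : ℕ) : Prop := Clo (ThA p) ThR x

set_option synthInstance.maxHeartbeats 400000 in
set_option synthInstance.maxSize 4000 in
theorem def_Thm {p : ℕ → ℕ} (hp : DefF1 p) : Def1 (Thm p) := by
  have := def_IsF.inst
  have := def_IsT.inst
  have := def_Ta.inst
  have := def_Sb.inst
  have := def_LF.inst
  have ip : ∀ t : (ℕ → ℕ) → ℕ, [S1T t] → S1T fun ρ => p (t ρ) := fun t _ => hp.comp t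
  have h1 : Def1 (ThA p) := by unfold ThA; infer_instance
  have h2 : Def3 ThR := by unfold ThR; infer_instance
  exact Def1.clo h1 h2

theorem Thm_iff {Γ : Set AFml} {p : ℕ → ℕ} (hp : ∀ φ : AFml, φ ∈ Γ ↔ p φ.code = 1) (x : ℕ) :
    Thm p x ↔ ∃ φ, x = AFml.code φ ∧ Proves Γ φ := by
  constructor
  · intro h
    induction h with
    | ax h =>
      rcases h with ⟨h1, h2⟩ | h | ⟨f, t, y, h, rfl⟩ | ⟨f, t, y, h, rfl⟩ | ⟨f, g, h1, h2, rfl⟩ |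
        ⟨f, y, h, rfl⟩ | ⟨f, h, a, b, rfl, rfl, rfl⟩ | ⟨t, h, rfl⟩ | ⟨f, t, s, y, z, h1, h2, rfl⟩
      · obtain ⟨φ, rfl⟩ := (IsF_iff _).1 h1
        exact ⟨φ, rfl, .ax ((hp φ).2 h2)⟩
      · obtain ⟨φ, rfl⟩ := (IsF_iff _).1 h.1
        exact ⟨φ, rfl, .taut ((Ta_iff φ).1 h)⟩
      · obtain ⟨t, φ, rfl, rfl, rfl⟩ := (Sb_iff _ _ _).1 h
        exact ⟨_, rfl, .allE φ t⟩
      · obtain ⟨t, φ, rfl, rfl, rfl⟩ := (Sb_iff _ _ _).1 h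
        exact ⟨_, rfl, .exI φ t⟩
      · obtain ⟨φ, rfl⟩ := (IsF_iff _).1 h1
        obtain ⟨ψ, rfl⟩ := (IsF_iff _).1 h2
        exact ⟨_, rfl, .allImp φ ψ⟩
      · obtain ⟨φ, rfl, rfl⟩ := (LF_iff _ _ _).1 h
        exact ⟨_, rfl, .vacAll φ⟩
      · obtain ⟨φ, rfl⟩ := (IsF_iff _).1 h
        exact ⟨_, rfl, .exDef φ⟩
      · obtain ⟨t, rfl⟩ := (IsT_iff _).1 h
        exact ⟨_, rfl, .eqRefl t⟩
      · obtain ⟨t, φ, rfl, rfl, rfl⟩ := (Sb_iff _ _ _).1 h1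
        obtain ⟨s, φ', rfl, e, rfl⟩ := (Sb_iff _ _ _).1 h2
        obtain rfl := AFml.code_inj e
        exact ⟨_, rfl, .eqSubst φ t s⟩
    | r h _ _ ih1 ih2 =>
      obtain ⟨φ, rfl, h1⟩ := ih1
      obtain ⟨ψ, rfl, h2⟩ := ih2
      rcases h with h | rfl
      · cases φ with
        | imp a b =>
          simp only [AFml.code, Nat.pair_eq_pair, true_and] at h
          obtain ⟨e1, rfl⟩ := h
          obtain rfl := AFml.code_inj e1
          exact ⟨_, rfl, .mp h1 h2⟩
        | _ => simp [AFml.code, Nat.pair_eq_pair] at h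
      · exact ⟨_, rfl, .gen h1⟩
  · rintro ⟨φ, rfl, h⟩
    unfold Thm
    induction h with
    | ax h => exact .ax (Or.inl ⟨(IsF_iff _).2 ⟨_, rfl⟩, (hp _).1 h⟩)
    | taut h => exact .ax (Or.inr (Or.inl ((Ta_iff _).2 h)))
    | mp _ _ ih1 ih2 => exact .r (Or.inl rfl) ih1 ih2
    | allE φ t =>
      exact .ax (.inr (.inr (.inl ⟨_, _, _, (Sb_iff _ _ _).2 ⟨t, φ, rfl, rfl, rfl⟩, rfl⟩)))
    | exI φ t =>
      exact .ax (.inr (.inr (.inr (.inl ⟨_, _, _, (Sb_iff _ _ _).2 ⟨t, φ, rfl, rfl, rfl⟩, rfl⟩))))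
    | allImp φ ψ =>
      exact .ax (.inr (.inr (.inr (.inr (.inl ⟨_, _, (IsF_iff _).2 ⟨φ, rfl⟩, (IsF_iff _).2 ⟨ψ, rfl⟩,
        rfl⟩)))))
    | vacAll φ =>
      exact .ax (.inr (.inr (.inr (.inr (.inr (.inl ⟨_, _, (LF_iff _ _ _).2 ⟨φ, rfl, rfl⟩, rfl⟩))))))
    | exDef φ =>
      exact .ax (.inr (.inr (.inr (.inr (.inr (.inr (.inl ⟨_, (IsF_iff _).2 ⟨φ, rfl⟩, _, _,
        rfl, rfl, rfl⟩)))))))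
    | gen _ ih => exact .r (Or.inr rfl) ih ih
    | eqRefl t =>
      exact .ax (.inr (.inr (.inr (.inr (.inr (.inr (.inr (.inl ⟨_, (IsT_iff _).2 ⟨t, rfl⟩,
        rfl⟩))))))))
    | eqSubst φ t s =>
      exact .ax (.inr (.inr (.inr (.inr (.inr (.inr (.inr (.inr ⟨_, _, _, _, _,
        (Sb_iff _ _ _).2 ⟨t, φ, rfl, rfl, rfl⟩, (Sb_iff _ _ _).2 ⟨s, φ, rfl, rfl, rfl⟩,
        rfl⟩))))))))

theorem exists_thm {Γ : Set AFml} (h : PrAxiomatized Γ) : ∃ Th : ℕ → Prop, Def1 Th ∧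
    ∀ x, Th x ↔ ∃ φ, x = AFml.code φ ∧ Proves Γ φ := by
  obtain ⟨p, hp, h⟩ := h
  have h1 : Nat.Primrec fun n => Encodable.encode (p n) := Primrec.nat_iff.1 (Primrec.encode.comp hp)
  refine ⟨Thm fun n => Encodable.encode (p n), def_Thm (DefF1.primrec h1), fun x => Thm_iff ?_ x⟩
  intro φ
  rw [h]
  cases p φ.code <;> simp

/-! ### The atoms of the evaluation -/

/-- `Q(⌜Q⌝, n)`. -/
def PQ (Q : AFml) (n : ℕ) : AFml := (Q.subst0 (gnum Q)).subst0 (numeral n)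

/-- The graph of `PQ`. -/
def HH (e n z : ℕ) : Prop := ∃ y, Sb (numeral e).code e y ∧ Sb (numeral n).code y z
theorem def_HH : Def3 HH := by
  have := def_Sb.inst
  unfold HH; infer_instance
theorem HH_iff (e n z : ℕ) : HH e n z ↔ ∃ Q, e = AFml.code Q ∧ z = (PQ Q n).code := by
  unfold HH
  simp only [Sb_iff]
  constructor
  · rintro ⟨y, ⟨t, Q, h1, rfl, rfl⟩, t', φ, h2, h3, rfl⟩
    obtain rfl := ATerm.code_inj h1
    obtain rfl := ATerm.code_inj h2
    obtain rfl := AFml.code_inj h3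
    exact ⟨Q, rfl, rfl⟩
  · rintro ⟨Q, rfl, rfl⟩
    exact ⟨_, ⟨_, Q, rfl, rfl, rfl⟩, _, _, rfl, rfl, rfl⟩

/-- The graph of the iteration of `PQ`. -/
def It : ℕ → ℕ → ℕ → ℕ → Prop
  | 0, _, n, z => z = n
  | k + 1, e, n, z => ∃ z', It k e n z' ∧ HH e z' z
theorem def_It (k : ℕ) : Def3 (It k) := by
  induction k with
  | zero => exact (inferInstance : Def3 fun _ n z => z = n)
  | succ k ih =>
    have := ih.inst
    have := def_HH.inst
    exact (inferInstance : Def3 fun e n z => ∃ z', It k e n z' ∧ HH e z' z)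
theorem It_iff (k : ℕ) (Q φ : AFml) (z : ℕ) :
    It k Q.code φ.code z ↔ z = (iterPred (Q.subst0 (gnum Q)) k φ).code := by
  induction k generalizing z with
  | zero => rfl
  | succ k ih =>
    simp only [It, ih, HH_iff]
    constructor
    · rintro ⟨_, rfl, Q', h, rfl⟩
      obtain rfl := AFml.code_inj h
      rfl
    · rintro rfl
      exact ⟨_, rfl, Q, rfl, rfl⟩

open Classical in
/-- The values of the atoms. -/
noncomputable def atm (a : AFml × ℕ) (φ : AFml) : ℕ :=
  if φ = botFml then 0 else
  if ∃ n, n < φ.code + 1 ∧ φ = PQ a.1 n ∧ In a.2 n then 0 else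
  if ∃ n, n < φ.code + 1 ∧ φ = PQ a.1 n then 2 else 1

/-- The graph of `atm`. -/
def AtM (E x r : ℕ) : Prop := ∃ e g, E = Nat.pair e g ∧ IsF e ∧ IsF x ∧ IsAtC x ∧
  ((x = botFml.code ∧ r = 0) ∨ (x ≠ botFml.code ∧
   (((∃ n, n < x + 1 ∧ HH e n x ∧ In g n) ∧ r = 0) ∨
    ((∀ n, n < x + 1 → (∃ z, HH e n z ∧ z ≠ x) ∨ ¬ In g n) ∧
     (((∃ n, n < x + 1 ∧ HH e n x) ∧ r = 2) ∨
      ((∀ n, n < x + 1 → ∃ z, HH e n z ∧ z ≠ x) ∧ r = 1))))))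
theorem def_AtM : Def3 AtM := by
  have := def_HH.inst
  have := def_IsF.inst
  have := def_IsAtC.inst
  unfold AtM
  infer_instance

/-- The codes of the parameters. -/
def encM (a : AFml × ℕ) : ℕ := Nat.pair a.1.code a.2
theorem encM_inj : Function.Injective encM := by
  rintro ⟨a, b⟩ ⟨c, d⟩ h
  simp only [encM, Nat.pair_eq_pair] at h
  obtain ⟨h1, rfl⟩ := h
  rw [AFml.code_inj h1]

theorem AtM_iff (e x r : ℕ) : AtM e x r ↔
    ∃ a φ, e = encM a ∧ AFml.IsAt φ ∧ x = φ.code ∧ r = atm a φ := by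
  have key : ∀ (Q φ : AFml) (g : ℕ), ((φ.code = botFml.code ∧ r = 0) ∨ (φ.code ≠ botFml.code ∧
   (((∃ n, n < φ.code + 1 ∧ HH Q.code n φ.code ∧ In g n) ∧ r = 0) ∨
    ((∀ n, n < φ.code + 1 → (∃ z, HH Q.code n z ∧ z ≠ φ.code) ∨ ¬ In g n) ∧
     (((∃ n, n < φ.code + 1 ∧ HH Q.code n φ.code) ∧ r = 2) ∨
      ((∀ n, n < φ.code + 1 → ∃ z, HH Q.code n z ∧ z ≠ φ.code) ∧ r = 1)))))) ↔
      r = atm (Q, g) φ := by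
    intro Q φ g
    have h1 : ∀ n, HH Q.code n φ.code ↔ φ = PQ Q n := by
      intro n; rw [HH_iff]
      constructor
      · rintro ⟨Q', h, h'⟩
        obtain rfl := AFml.code_inj h
        exact AFml.code_inj h'
      · rintro rfl; exact ⟨Q, rfl, rfl⟩
    have h2 : ∀ n, (∃ z, HH Q.code n z ∧ z ≠ φ.code) ↔ ¬ φ = PQ Q n := by
      intro n; simp only [HH_iff]
      constructor
      · rintro ⟨z, ⟨Q', h, rfl⟩, h'⟩ rfl
        obtain rfl := AFml.code_inj h
        exact h' rfl
      · intro h; exact ⟨_, ⟨Q, rfl, rfl⟩, fun h' => h (AFml.code_inj h').symm⟩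
    have h3 : φ.code = botFml.code ↔ φ = botFml := ⟨fun h => AFml.code_inj h, fun h => by rw [h]⟩
    simp only [h1, h2, h3, ne_eq]
    have h4 : (∀ n, n < φ.code + 1 → ¬ φ = PQ Q n ∨ ¬ In g n) ↔
      ¬ ∃ n, n < φ.code + 1 ∧ φ = PQ Q n ∧ In g n := by push Not; simp only [imp_iff_not_or]
    have h5 : (∀ n, n < φ.code + 1 → ¬ φ = PQ Q n) ↔
      ¬ ∃ n, n < φ.code + 1 ∧ φ = PQ Q n := by push Not; rfl
    rw [h4, h5]
    unfold atm
    by_cases c1 : φ = botFml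
    · simp [c1]
    by_cases c2 : ∃ n, n < φ.code + 1 ∧ φ = PQ Q n ∧ In g n
    · simp only [c1, c2, if_true, if_false, not_true, false_and, or_false, false_or, true_and, not_false_eq_true]
    by_cases c3 : ∃ n, n < φ.code + 1 ∧ φ = PQ Q n
    · simp only [c1, c2, c3, if_true, if_false, not_true, false_and, or_false, false_or, true_and, not_false_eq_true]
    · simp only [c1, c2, c3, if_false, false_and, false_or, true_and, not_false_eq_true]
  unfold AtM
  simp only [IsF_iff]
  constructor
  · rintro ⟨e, g, rfl, ⟨Q, rfl⟩, ⟨φ, rfl⟩, h2, h3⟩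
    exact ⟨(Q, g), φ, rfl, (IsAtC_iff φ).1 h2, rfl, (key _ _ _).1 h3⟩
  · rintro ⟨⟨Q, g⟩, φ, rfl, h, rfl, h3⟩
    exact ⟨_, g, rfl, ⟨Q, rfl⟩, ⟨φ, rfl⟩, (IsAtC_iff φ).2 h, (key _ _ _).2 h3⟩

/-- The graph of the evaluation. -/
def Kv (e g x r : ℕ) : Prop := KV AtM (Nat.pair e g) x r
theorem Kv_iff (Q : AFml) (g : ℕ) (x r : ℕ) :
    Kv Q.code g x r ↔ ∃ φ, x = AFml.code φ ∧ r = kval (atm (Q, g)) φ := by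
  unfold Kv
  rw [KV_iff encM_inj AtM_iff]
  constructor
  · rintro ⟨⟨Q', g'⟩, φ, h, rfl, rfl⟩
    have : encM (Q, g) = encM (Q', g') := h
    obtain h := encM_inj this
    obtain ⟨rfl, rfl⟩ := Prod.mk.inj h
    exact ⟨φ, rfl, rfl⟩
  · rintro ⟨φ, rfl, rfl⟩
    exact ⟨(Q, g), φ, rfl, rfl, rfl⟩

/-- `g` refutes a theorem. -/
def KK (Th : ℕ → Prop) (g e : ℕ) : Prop := ∃ x, Th x ∧ Kv e g x 0
/-- `g` is a bad pattern below `k`. -/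
def Bad (m g k e : ℕ) : Prop := ∃ n x r, n ≤ k ∧ x ≤ k ∧ It m e n x ∧ In g x ∧ Kv e g n r ∧ r ≠ 0
theorem def_KK {Th : ℕ → Prop} (h : Def1 Th) : Def2 (KK Th) := by
  have := h.inst
  have := (def_KV def_AtM).inst
  unfold KK Kv; infer_instance
theorem def_Bad (m : ℕ) : Def3 (Bad m) := by
  have := (def_It m).inst
  have := (def_KV def_AtM).inst
  unfold Bad Kv; infer_instance


end

section

/-! ### The predicate -/

/-- Insert a formula with the variables `i`, `j`. -/
def pc2 (φ : AFml) (i j : ℕ) : AFml := φ.substAll fun n => .var (if n = 0 then i else j)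
/-- A binary relation defined by a formula. -/
def P2 (M : AModel) (φ : AFml) (a b : M.C) : Prop := φ.SatM M (scons a fun _ => b)

theorem satM_pc2 (M : AModel) (φ : AFml) (i j : ℕ) (ρ : ℕ → M.C) :
    (pc2 φ i j).SatM M ρ ↔ P2 M φ (ρ i) (ρ j) := by
  unfold pc2 P2
  rw [AFml.satM_subst]
  have : (fun n => (ATerm.var (if n = 0 then i else j)).valM M ρ) = scons (ρ i) fun _ => ρ j := by
    funext n; cases n <;> rfl
  rw [this]
theorem delta0_pc2 {φ : AFml} (h : IsDelta0 φ) (i j : ℕ) : IsDelta0 (pc2 φ i j) := delta0_subst h _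
theorem freeLt_pc2 (φ : AFml) {i j K : ℕ} (h1 : i < K) (h2 : j < K) : (pc2 φ i j).FreeLt K := by
  refine AFml.freeLt_subst' φ fun n => ?_
  show (if n = 0 then i else j) < K
  split_ifs <;> assumption
theorem P2_std {M : AModel} (hM : IsPA M) {φ : AFml} (h : IsDelta0 φ) (a b : ℕ) :
    P2 M φ (std M a) (std M b) ↔ φ.Sat (scons a fun _ => b) := by
  unfold P2
  rw [← hM.abs h]
  have : (fun i => std M (scons a (fun _ => b) i)) = scons (std M a) fun _ => std M b := by
    funext i; cases i <;> rfl
  rw [this]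

/-- The `Δ₀` formulas used in the construction. -/
structure Pcs where
  th : AFml
  nm : AFml
  ka : AFml
  bd : AFml
  dm : AFml
  sg : AFml
  dth : IsDelta0 th
  dnm : IsDelta0 nm
  dka : IsDelta0 ka
  dbd : IsDelta0 bd
  ddm : IsDelta0 dm
  dsg : IsDelta0 sg

variable (S : Pcs)

/-- `x` has a proof bounded by `u`. -/
def thF (u x : ℕ) : AFml := .and (.le (.var x) (.var u)) (bexF u (pc2 S.th (x + 1) 0))
/-- `y` is a trigger. -/
def trF (y e : ℕ) : AFml := .and (pc2 S.ka y e) (.and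
  (ballF y (.imp (pc2 S.nm 0 (y + 1)) (.neg (thF S (y + 1) 0))))
  (ballF y (.imp (pc2 S.bd 0 (e + 1)) (bexF 0 (.and (pc2 S.dm 0 1)
    (.neg (iffF (pc2 S.nm 0 (y + 2)) (pc2 S.nm 0 1))))))))
/-- The matrix of the predicate. -/
def matF : AFml := .and (.eq (.var 2) (.var 2)) (.or
  (.and (trF S 0 1) (.and (ballF 0 (.imp (pc2 S.sg 0 0) (.eq (.var 0) (.var 1))))
    (.and (ballF 0 (.imp (trF S 0 2) (.eq (.var 0) (.var 1)))) (.neg (pc2 S.nm 2 0)))))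
  (.or (.and (pc2 S.sg 0 0) (ballF 0 (.neg (trF S 0 2))))
    (.and (thF S 0 2) (.and (ballF 0 (.neg (pc2 S.sg 0 0))) (ballF 0 (.neg (trF S 0 2)))))))
/-- The predicate, with a parameter for its own code. -/
def PhiF : AFml := .ex (matF S)
/-- The predicate. -/
def PF : AFml := (PhiF S).subst0 (gnum (PhiF S))

/-- Semantics of `thF`. -/
def ThM (M : AModel) (u x : M.C) : Prop := M.le x u ∧ ∃ t, M.le t u ∧ P2 M S.th x t
/-- Semantics of `trF`. -/
def TrM (M : AModel) (y e : M.C) : Prop := P2 M S.ka y e ∧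
  (∀ x, M.le x y → P2 M S.nm x y → ¬ ThM S M y x) ∧
  (∀ b, M.le b y → P2 M S.bd b e → ∃ x, M.le x b ∧ P2 M S.dm x b ∧ ¬ (P2 M S.nm x y ↔ P2 M S.nm x b))
/-- Semantics of `matF`. -/
def MatM (M : AModel) (u e x : M.C) : Prop :=
  (TrM S M u e ∧ (∀ z, M.le z u → P2 M S.sg z z → z = u) ∧ (∀ y, M.le y u → TrM S M y e → y = u) ∧
    ¬ P2 M S.nm x u) ∨
  (P2 M S.sg u u ∧ ∀ y, M.le y u → ¬ TrM S M y e) ∨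
  (ThM S M u x ∧ (∀ z, M.le z u → ¬ P2 M S.sg z z) ∧ ∀ y, M.le y u → ¬ TrM S M y e)

theorem satM_thF (M : AModel) (u x : ℕ) (ρ : ℕ → M.C) :
    (thF S u x).SatM M ρ ↔ ThM S M (ρ u) (ρ x) := by
  simp only [thF, AFml.SatM, satM_bexF, satM_pc2]; rfl
theorem satM_trF (M : AModel) (y e : ℕ) (ρ : ℕ → M.C) :
    (trF S y e).SatM M ρ ↔ TrM S M (ρ y) (ρ e) := by
  have hb : ∀ p q : Prop, ((p → q) ∧ (q → p)) ↔ (p ↔ q) := fun p q => iff_def.symm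
  simp only [trF, AFml.SatM, satM_bexF, satM_ballF, satM_pc2, satM_thF, iffF, TrM, hb]; rfl
theorem satM_matF (M : AModel) (ρ : ℕ → M.C) :
    (matF S).SatM M ρ ↔ MatM S M (ρ 0) (ρ 1) (ρ 2) := by
  simp only [matF, AFml.SatM, satM_ballF, satM_pc2, satM_thF, satM_trF, MatM, true_and]; rfl

theorem delta0_thF (u x : ℕ) : IsDelta0 (thF S u x) :=
  .and (.le _ _) (delta0_bexF (delta0_pc2 S.dth _ _))
theorem delta0_trF (y e : ℕ) : IsDelta0 (trF S y e) :=
  .and (delta0_pc2 S.dka _ _) (.and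
   (delta0_ballF (.imp (delta0_pc2 S.dnm _ _) (.neg (delta0_thF S _ _))))
   (delta0_ballF (.imp (delta0_pc2 S.dbd _ _) (delta0_bexF (.and (delta0_pc2 S.ddm _ _)
    (.neg (.and (.imp (delta0_pc2 S.dnm _ _) (delta0_pc2 S.dnm _ _))
      (.imp (delta0_pc2 S.dnm _ _) (delta0_pc2 S.dnm _ _)))))))))
theorem delta0_matF : IsDelta0 (matF S) :=
  .and (.eq _ _) (.or (.and (delta0_trF S _ _) (.and (delta0_ballF (.imp (delta0_pc2 S.dsg _ _) (.eq _ _)))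
    (.and (delta0_ballF (.imp (delta0_trF S _ _) (.eq _ _))) (.neg (delta0_pc2 S.dnm _ _)))))
    (.or (.and (delta0_pc2 S.dsg _ _) (delta0_ballF (.neg (delta0_trF S _ _))))
     (.and (delta0_thF S _ _) (.and (delta0_ballF (.neg (delta0_pc2 S.dsg _ _)))
      (delta0_ballF (.neg (delta0_trF S _ _)))))))

theorem freeLt_bexF {b : ℕ} {φ : AFml} {K : ℕ} (h : b < K) (h2 : φ.FreeLt (K + 1)) :
    (bexF b φ).FreeLt K := ⟨⟨Nat.succ_pos _, Nat.succ_lt_succ h⟩, h2⟩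
theorem freeLt_ballF {b : ℕ} {φ : AFml} {K : ℕ} (h : b < K) (h2 : φ.FreeLt (K + 1)) :
    (ballF b φ).FreeLt K := ⟨⟨Nat.succ_pos _, Nat.succ_lt_succ h⟩, h2⟩
theorem freeLt_thF {u x K : ℕ} (h1 : u < K) (h2 : x < K) : (thF S u x).FreeLt K :=
  ⟨⟨h2, h1⟩, freeLt_bexF h1 (freeLt_pc2 _ (by omega) (by omega))⟩
theorem freeLt_trF {y e K : ℕ} (h1 : y < K) (h2 : e < K) : (trF S y e).FreeLt K :=
  ⟨freeLt_pc2 _ h1 h2, freeLt_ballF h1 ⟨freeLt_pc2 _ (by omega) (by omega), freeLt_thF S (by omega) (by omega)⟩,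
   freeLt_ballF h1 ⟨freeLt_pc2 _ (by omega) (by omega), freeLt_bexF (by omega) ⟨freeLt_pc2 _ (by omega) (by omega),
    ⟨freeLt_pc2 _ (by omega) (by omega), freeLt_pc2 _ (by omega) (by omega)⟩,
    ⟨freeLt_pc2 _ (by omega) (by omega), freeLt_pc2 _ (by omega) (by omega)⟩⟩⟩⟩
theorem freeLt_matF : (matF S).FreeLt 3 := by
  have hv : ∀ i j K : ℕ, i < K → j < K → (AFml.eq (.var i) (.var j)).FreeLt K := fun i j K a b => ⟨a, b⟩
  exact ⟨hv _ _ _ (by omega) (by omega),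
   ⟨freeLt_trF S (by omega) (by omega),
    freeLt_ballF (by omega) ⟨freeLt_pc2 _ (by omega) (by omega), hv _ _ _ (by omega) (by omega)⟩,
    freeLt_ballF (by omega) ⟨freeLt_trF S (by omega) (by omega), hv _ _ _ (by omega) (by omega)⟩,
    freeLt_pc2 _ (by omega) (by omega)⟩,
   ⟨freeLt_pc2 _ (by omega) (by omega), freeLt_ballF (by omega) (freeLt_trF S (by omega) (by omega))⟩,
   freeLt_thF S (by omega) (by omega),
   freeLt_ballF (by omega) (freeLt_pc2 _ (by omega) (by omega)),
   freeLt_ballF (by omega) (freeLt_trF S (by omega) (by omega))⟩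

theorem sigma1_PF : IsSigma1 (PF S) := .ex (.delta0 (delta0_subst (delta0_matF S) _))
theorem freeLt_PhiF : (PhiF S).FreeLt 2 := freeLt_matF S
theorem freeLt_PF : (PF S).FreeLt 1 := by
  unfold PF gnum
  generalize (PhiF S).code = a
  exact freeLt_subst0 (freeLt_PhiF S) (numeral_freeLt _ _)
theorem freeLt_PQ (n : ℕ) : (PQ (PhiF S) n).FreeLt 0 :=
  freeLt_subst0 (freeLt_PF S) (numeral_freeLt _ _)

theorem satM_PQ (M : AModel) (ρ : ℕ → M.C) (n : ℕ) : (PQ (PhiF S) n).SatM M ρ ↔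
    ∃ u, MatM S M u (std M (PhiF S).code) (std M n) := by
  unfold PQ
  rw [satM_subst0, satM_subst0, val_numeral, gnum, val_numeral]
  generalize (PhiF S).code = a
  exact exists_congr fun u => satM_matF S M _

/-! ### Recovering the argument -/

theorem PQ_shape (n : ℕ) : ∃ φ, PQ (PhiF S) n = .ex (.and (.eq (numeral n) (numeral n)) φ) := by
  unfold PQ gnum
  generalize (PhiF S).code = a
  have h : ∀ n, (numeral n).lift 0 = numeral n := by
    intro n
    induction n with
    | zero => rfl
    | succ n ih => simp [numeral, ATerm.lift, ih]
  obtain ⟨R, hR⟩ : ∃ R, PhiF S = .ex (.and (.eq (.var 2) (.var 2)) R) := ⟨_, rfl⟩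
  rw [hR]
  refine ⟨(R.substAll (liftSub (subst0Env (numeral a)))).substAll (liftSub (subst0Env (numeral n))), ?_⟩
  have h2 : liftSub (subst0Env (numeral n)) 1 = numeral n := h n
  have h3 : liftSub (subst0Env (numeral a)) 2 = .var 1 := rfl
  simp only [AFml.subst0, AFml.substAll, ATerm.substAll, h3, h2]
theorem numeral_inj {a b : ℕ} (h : numeral a = numeral b) : a = b := by
  induction a generalizing b with
  | zero => cases b with
    | zero => rfl
    | succ b => simp [numeral] at h
  | succ a ih => cases b with
    | zero => simp [numeral] at h
    | succ b => simp only [numeral, ATerm.succ.injEq] at h; rw [ih h]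
theorem PQ_inj {a b : ℕ} (h : PQ (PhiF S) a = PQ (PhiF S) b) : a = b := by
  obtain ⟨φ, h1⟩ := PQ_shape S a
  obtain ⟨ψ, h2⟩ := PQ_shape S b
  rw [h1, h2] at h
  simp only [AFml.ex.injEq, AFml.and.injEq, AFml.eq.injEq] at h
  exact numeral_inj h.1.1
theorem le_numeral_code (n : ℕ) : n ≤ (numeral n).code := by
  induction n with
  | zero => exact Nat.zero_le _
  | succ n ih =>
    show n + 1 ≤ Nat.pair 2 (numeral n).code
    have := Nat.add_le_pair 2 (numeral n).code
    omega
theorem le_PQ_code (n : ℕ) : n ≤ (PQ (PhiF S) n).code := by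
  obtain ⟨φ, h1⟩ := PQ_shape S n
  rw [h1]
  simp only [AFml.code]
  refine (le_numeral_code n).trans ?_
  refine (Nat.left_le_pair (numeral n).code (numeral n).code).trans ?_
  exact (Nat.right_le_pair 0 _).trans ((Nat.left_le_pair _ _).trans ((Nat.right_le_pair _ _).trans
    (Nat.right_le_pair _ _)))
theorem PQ_ne_bot (n : ℕ) : PQ (PhiF S) n ≠ botFml := by
  obtain ⟨φ, h1⟩ := PQ_shape S n
  rw [h1]; simp [botFml]

theorem atm_bot (Q : AFml) (g : ℕ) : atm (Q, g) botFml = 0 := by simp [atm]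
open Classical in
theorem atm_PQ (g n : ℕ) : atm (PhiF S, g) (PQ (PhiF S) n) = if In g n then 0 else 2 := by
  have h1 : (∃ k, k < (PQ (PhiF S) n).code + 1 ∧ PQ (PhiF S) n = PQ (PhiF S) k ∧ In g k) ↔ In g n := by
    constructor
    · rintro ⟨k, _, h, h'⟩
      rwa [PQ_inj S h]
    · intro h; exact ⟨n, Nat.lt_succ_of_le (le_PQ_code S n), rfl, h⟩
  have h2 : (∃ k, k < (PQ (PhiF S) n).code + 1 ∧ PQ (PhiF S) n = PQ (PhiF S) k) :=
    ⟨n, Nat.lt_succ_of_le (le_PQ_code S n), rfl⟩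
  simp only [atm, PQ_ne_bot, if_false, h1, h2, if_true]

/-- Correctness of the evaluation in a model. -/
theorem kval_model {M : AModel} (hM : IsPA M) (g K : ℕ) (ρ : ℕ → M.C)
    (h : ∀ n ≤ K, (In g n ↔ ¬ (PQ (PhiF S) n).SatM M ρ)) (φ : AFml) (hφ : φ.code ≤ K) :
    (kval (atm (PhiF S, g)) φ = 0 → ¬ φ.SatM M ρ) ∧
    (2 ≤ kval (atm (PhiF S, g)) φ → φ.SatM M ρ) := by
  have at0 : ∀ φ : AFml, φ.code ≤ K → (atm (PhiF S, g) φ = 0 → ¬ φ.SatM M ρ) ∧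
      (2 ≤ atm (PhiF S, g) φ → φ.SatM M ρ) := by
    intro φ hφ
    by_cases c1 : φ = botFml
    · subst c1
      rw [atm_bot]
      refine ⟨fun _ h => ?_, fun h => by omega⟩
      exact hM.s_ne _ (Eq.symm h)
    by_cases c2 : ∃ n, φ = PQ (PhiF S) n
    · obtain ⟨n, rfl⟩ := c2
      rw [atm_PQ]
      have := h n ((le_PQ_code S n).trans hφ)
      by_cases c : In g n
      · simp only [c, if_true]
        exact ⟨fun _ => this.1 c, fun h => by omega⟩
      · simp only [c, if_false]
        refine ⟨fun h => by omega, fun _ => ?_⟩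
        by_contra hc
        exact c (this.2 hc)
    · have h3 : ¬ ∃ n, n < φ.code + 1 ∧ φ = PQ (PhiF S) n ∧ In g n := fun ⟨n, _, h, _⟩ => c2 ⟨n, h⟩
      have h4 : ¬ ∃ n, n < φ.code + 1 ∧ φ = PQ (PhiF S) n := fun ⟨n, _, h⟩ => c2 ⟨n, h⟩
      simp only [atm, c1, h3, h4, if_false]
      exact ⟨fun h => by omega, fun h => by omega⟩
  induction φ with
  | eq t s => exact at0 _ hφ
  | le t s => exact at0 _ hφ
  | all φ ih => exact at0 _ hφ
  | ex φ ih => exact at0 _ hφ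
  | neg φ ih =>
    have ih := ih ((Nat.right_le_pair _ _).trans hφ)
    simp only [kval, AFml.SatM]
    refine ⟨fun h => ?_, fun h => ih.1 (by omega)⟩
    rw [not_not]; exact ih.2 (by omega)
  | and φ ψ ih1 ih2 =>
    have ih1 := ih1 ((Nat.left_le_pair _ _).trans ((Nat.right_le_pair _ _).trans hφ))
    have ih2 := ih2 ((Nat.right_le_pair _ _).trans ((Nat.right_le_pair _ _).trans hφ))
    simp only [kval, AFml.SatM]
    refine ⟨fun h h' => ?_, fun h => ⟨ih1.2 (by omega), ih2.2 (by omega)⟩⟩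
    have : kval (atm (PhiF S, g)) φ = 0 ∨ kval (atm (PhiF S, g)) ψ = 0 := by omega
    rcases this with h1 | h1
    · exact ih1.1 h1 h'.1
    · exact ih2.1 h1 h'.2
  | or φ ψ ih1 ih2 =>
    have ih1 := ih1 ((Nat.left_le_pair _ _).trans ((Nat.right_le_pair _ _).trans hφ))
    have ih2 := ih2 ((Nat.right_le_pair _ _).trans ((Nat.right_le_pair _ _).trans hφ))
    simp only [kval, AFml.SatM]
    refine ⟨fun h h' => h'.elim (ih1.1 (by omega)) (ih2.1 (by omega)), fun h => ?_⟩
    have : 2 ≤ kval (atm (PhiF S, g)) φ ∨ 2 ≤ kval (atm (PhiF S, g)) ψ := by omega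
    rcases this with h1 | h1
    · exact .inl (ih1.2 h1)
    · exact .inr (ih2.2 h1)
  | imp φ ψ ih1 ih2 =>
    have ih1 := ih1 ((Nat.left_le_pair _ _).trans ((Nat.right_le_pair _ _).trans hφ))
    have ih2 := ih2 ((Nat.right_le_pair _ _).trans ((Nat.right_le_pair _ _).trans hφ))
    simp only [kval, AFml.SatM]
    refine ⟨fun h h' => ih2.1 (by omega) (h' (ih1.2 (by omega))), fun h h' => ?_⟩
    have : kval (atm (PhiF S, g)) φ = 0 ∨ 2 ≤ kval (atm (PhiF S, g)) ψ := by omega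
    rcases this with h1 | h1
    · exact absurd h' (ih1.1 h1)
    · exact ih2.2 h1

/-! ### The two cases in a model -/

theorem cases_M {M : AModel} (hM : IsPA M) (hsg : ∃ z, P2 M S.sg z z) (e : M.C) :
    (∃ z, P2 M S.sg z z ∧ (∀ y, M.le y z → ¬ TrM S M y e) ∧ ∀ x, ∃ u, MatM S M u e x) ∨
    ∃ u, TrM S M u e ∧ (∀ y, M.le y u → TrM S M y e → y = u) ∧
      (∀ z, M.le z u → P2 M S.sg z z → z = u) ∧
      ∀ x, (∃ u, MatM S M u e x) ↔ ¬ P2 M S.nm x u := by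
  obtain ⟨z0, hz0, hz1⟩ := hM.lnp (pc2 S.sg 0 0) (fun _ => e)
    (by simpa only [satM_pc2, scons_zero] using hsg)
  simp only [satM_pc2, scons_zero] at hz0 hz1
  have hz1 : ∀ z, P2 M S.sg z z → M.le z0 z := fun z hz => by
    rcases hM.le_total z0 z with h | h
    · exact h
    · rw [hz1 z h hz]; exact hM.le_refl _
  by_cases ht : ∃ y, M.le y z0 ∧ TrM S M y e
  · right
    obtain ⟨y, hy, hy2⟩ := ht
    obtain ⟨u, hu, hu1⟩ := hM.lnp (trF S 0 1) (fun _ => e)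
      ⟨y, (satM_trF S M _ _ _).2 hy2⟩
    simp only [satM_trF, scons_zero, scons_one] at hu hu1
    have hu1 : ∀ z, TrM S M z e → M.le u z := fun z hz => by
      rcases hM.le_total u z with h | h
      · exact h
      · rw [hu1 z h hz]; exact hM.le_refl _
    have huz : M.le u z0 := hM.le_trans (hu1 _ hy2) hy
    refine ⟨u, hu, fun y h1 h2 => hM.le_antisymm h1 (hu1 _ h2), ?_, ?_⟩
    · intro z h1 h2
      exact hM.le_antisymm h1 (hM.le_trans huz (hz1 _ h2))
    · intro x
      constructor
      · rintro ⟨u', ⟨h1, h2, h3, h4⟩ | ⟨h1, h2⟩ | ⟨⟨h1, t, ht, ht2⟩, h2, h3⟩⟩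
        · rwa [h3 u (hu1 _ h1) hu]
        · exact absurd hu (h2 _ (hM.le_trans huz (hz1 _ h1)))
        · intro hnm
          rcases hM.le_total u u' with h | h
          · exact h3 _ h hu
          · exact hu.2.1 x (hM.le_trans h1 h) hnm ⟨hM.le_trans h1 h, t, hM.le_trans ht h, ht2⟩
      · intro hx
        exact ⟨u, Or.inl ⟨hu, fun z h1 h2 => hM.le_antisymm h1 (hM.le_trans huz (hz1 _ h2)),
          fun y h1 h2 => hM.le_antisymm h1 (hu1 _ h2), hx⟩⟩
  · left
    have : ∀ y, M.le y z0 → ¬ TrM S M y e := fun y h1 h2 => ht ⟨y, h1, h2⟩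
    exact ⟨z0, hz0, this, fun x => ⟨z0, Or.inr (Or.inl ⟨hz0, this⟩)⟩⟩


end

section

/-! ### The concrete formulas -/

theorem Def1.d0 {P : ℕ → Prop} (h : Def1 P) : ∃ R : ℕ → ℕ → Prop,
    (∀ i j, D0 fun ρ => R (ρ i) (ρ j)) ∧ ∀ x, P x ↔ ∃ a, R a x := by
  obtain ⟨φ, h1, h2⟩ := h.out
  refine ⟨fun a x => φ.Sat (scons a fun _ => x), fun i j => ?_, fun x => h2 fun _ => x⟩
  have : D0 fun ρ => φ.Sat ρ := ⟨φ, h1, fun _ => Iff.rfl⟩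
  refine (this.ren fun n => Nat.casesOn n i fun _ => j).congr fun ρ => ?_
  have : scons (ρ i) (fun _ => ρ j) = fun n => ρ (Nat.casesOn n i fun _ => j) := by
    funext n; cases n <;> rfl
  beta_reduce
  rw [this]
theorem Def2.d0 {P : ℕ → ℕ → Prop} (h : Def2 P) : ∃ R : ℕ → ℕ → ℕ → Prop,
    (∀ i j k, D0 fun ρ => R (ρ i) (ρ j) (ρ k)) ∧ ∀ x y, P x y ↔ ∃ a, R a x y := by
  obtain ⟨φ, h1, h2⟩ := h.out
  refine ⟨fun a x y => φ.Sat (scons a (scons x fun _ => y)), fun i j k => ?_,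
    fun x y => h2 (scons x fun _ => y)⟩
  have : D0 fun ρ => φ.Sat ρ := ⟨φ, h1, fun _ => Iff.rfl⟩
  refine (this.ren fun n => Nat.casesOn n i fun n => Nat.casesOn n j fun _ => k).congr fun ρ => ?_
  have : scons (ρ i) (scons (ρ j) fun _ => ρ k) =
      fun n => ρ (Nat.casesOn n i fun n => Nat.casesOn n j fun _ => k) := by
    funext n
    match n with
    | 0 => rfl
    | 1 => rfl
    | n + 2 => rfl
  beta_reduce
  rw [this]
theorem Def3.d0 {P : ℕ → ℕ → ℕ → Prop} (h : Def3 P) : ∃ R : ℕ → ℕ → ℕ → ℕ → Prop,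
    (∀ i j k l, D0 fun ρ => R (ρ i) (ρ j) (ρ k) (ρ l)) ∧ ∀ x y z, P x y z ↔ ∃ a, R a x y z := by
  obtain ⟨φ, h1, h2⟩ := h.out
  refine ⟨fun a x y z => φ.Sat (scons a (scons x (scons y fun _ => z))), fun i j k l => ?_,
    fun x y z => h2 (scons x (scons y fun _ => z))⟩
  have : D0 fun ρ => φ.Sat ρ := ⟨φ, h1, fun _ => Iff.rfl⟩
  refine (this.ren fun n => Nat.casesOn n i fun n => Nat.casesOn n j fun n =>
    Nat.casesOn n k fun _ => l).congr fun ρ => ?_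
  have : scons (ρ i) (scons (ρ j) (scons (ρ k) fun _ => ρ l)) =
      fun n => ρ (Nat.casesOn n i fun n => Nat.casesOn n j fun n => Nat.casesOn n k fun _ => l) := by
    funext n
    match n with
    | 0 => rfl
    | 1 => rfl
    | 2 => rfl
    | n + 3 => rfl
  beta_reduce
  rw [this]

/-- Truth of a binary formula in `ℕ`. -/
def N2 (φ : AFml) (a b : ℕ) : Prop := φ.Sat (scons a fun _ => b)

theorem D0.get {R : ℕ → ℕ → Prop} (h : D0 fun ρ => R (ρ 0) (ρ 1)) :
    ∃ φ, IsDelta0 φ ∧ ∀ a b, N2 φ a b ↔ R a b := by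
  obtain ⟨φ, h1, h2⟩ := h.out
  exact ⟨φ, h1, fun a b => h2 (scons a fun _ => b)⟩

instance D0.pairI (i j k : ℕ) : D0 fun ρ => ρ k = Nat.pair (ρ i) (ρ j) :=
  D0_pair.ren fun n => Nat.casesOn n i fun n => Nat.casesOn n j fun _ => k
instance D0.inI (i j : ℕ) : D0 fun ρ => In (ρ i) (ρ j) :=
  D0_In.ren fun n => Nat.casesOn n i fun _ => j

/-- The required properties of the pieces. -/
structure Good (S : Pcs) (Th : ℕ → Prop) (m : ℕ) : Prop where
  th : ∀ x, Th x ↔ ∃ t, N2 S.th x t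
  nm : ∀ x y, N2 S.nm x y ↔ In y.unpair.1 x
  ka1 : ∀ y e, N2 S.ka y e → KK Th y.unpair.1 e
  ka2 : ∀ g e, KK Th g e → ∃ t, N2 S.ka (Nat.pair g t) e
  bd1 : ∀ b e, N2 S.bd b e → Bad m b.unpair.1 b.unpair.2.unpair.1 e
  bd2 : ∀ g k e, Bad m g k e → ∃ t, N2 S.bd (Nat.pair g (Nat.pair k t)) e
  dm : ∀ x b, N2 S.dm x b ↔ x ≤ b.unpair.2.unpair.1

theorem pair_ex {y : ℕ} {Q : ℕ → ℕ → Prop} : (∃ g, g ≤ y ∧ ∃ t, t ≤ y ∧ y = Nat.pair g t ∧ Q g t) ↔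
    Q y.unpair.1 y.unpair.2 := by
  constructor
  · rintro ⟨g, _, t, _, rfl, h⟩; simpa using h
  · intro h
    exact ⟨_, Nat.unpair_left_le _, _, Nat.unpair_right_le _, by simp, h⟩

theorem exists_pcs {Th : ℕ → Prop} (hTh : Def1 Th) (m : ℕ) {sg : AFml} (hsg : IsDelta0 sg) :
    ∃ S : Pcs, S.sg = sg ∧ Good S Th m := by
  obtain ⟨T0, d1, t1⟩ := hTh.d0
  obtain ⟨K0, d2, t2⟩ := (def_KK hTh).d0
  obtain ⟨B0, d3, t3⟩ := (def_Bad m).d0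
  obtain ⟨th, a1, b1⟩ := D0.get (R := fun x t => T0 t x) (d1 1 0)
  obtain ⟨nm, a2, b2⟩ := D0.get (R := fun x y => ∃ g, g ≤ y ∧ ∃ t, t ≤ y ∧ y = Nat.pair g t ∧ In g x)
    inferInstance
  obtain ⟨ka, a3, b3⟩ := D0.get (R := fun y e => ∃ g, g ≤ y ∧ ∃ t, t ≤ y ∧ y = Nat.pair g t ∧ K0 t g e)
    inferInstance
  obtain ⟨bd, a4, b4⟩ := D0.get (R := fun b e => ∃ g, g ≤ b ∧ ∃ w, w ≤ b ∧ b = Nat.pair g w ∧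
    ∃ k, k ≤ w ∧ ∃ t, t ≤ w ∧ w = Nat.pair k t ∧ B0 t g k e) inferInstance
  obtain ⟨dm, a5, b5⟩ := D0.get (R := fun x b => ∃ g, g ≤ b ∧ ∃ w, w ≤ b ∧ b = Nat.pair g w ∧
    ∃ k, k ≤ w ∧ ∃ t, t ≤ w ∧ w = Nat.pair k t ∧ x ≤ k) inferInstance
  simp only [pair_ex] at b2 b3
  have e4 : ∀ b e, N2 bd b e ↔ B0 b.unpair.2.unpair.2 b.unpair.1 b.unpair.2.unpair.1 e := by
    intro b e
    rw [b4, pair_ex (Q := fun g w => ∃ k, k ≤ w ∧ ∃ t, t ≤ w ∧ w = Nat.pair k t ∧ B0 t g k e),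
      pair_ex (Q := fun k t => B0 t b.unpair.1 k e)]
  have e5 : ∀ x b, N2 dm x b ↔ x ≤ b.unpair.2.unpair.1 := by
    intro x b
    rw [b5, pair_ex (Q := fun g w => ∃ k, k ≤ w ∧ ∃ t, t ≤ w ∧ w = Nat.pair k t ∧ x ≤ k),
      pair_ex (Q := fun k t => x ≤ k)]
  refine ⟨⟨th, nm, ka, bd, dm, sg, a1, a2, a3, a4, a5, hsg⟩, rfl, ⟨?_, b2, ?_, ?_, ?_, ?_, e5⟩⟩
  · intro x; rw [t1]; simp only [b1]
  · intro y e h; rw [t2]; exact ⟨_, (b3 _ _).1 h⟩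
  · intro g e h
    obtain ⟨t, ht⟩ := (t2 _ _).1 h
    exact ⟨t, (b3 _ _).2 (by simpa using ht)⟩
  · intro b e h; rw [t3]; exact ⟨_, (e4 _ _).1 h⟩
  · intro g k e h
    obtain ⟨t, ht⟩ := (t3 _ _ _).1 h
    exact ⟨t, (e4 _ _).2 (by simpa using ht)⟩

/-! ### Standard triggers -/

/-- `x` has a proof bounded by `u`. -/
def ThN (S : Pcs) (u x : ℕ) : Prop := x ≤ u ∧ ∃ t, t ≤ u ∧ N2 S.th x t
/-- `y` is a standard trigger. -/
def TrN (S : Pcs) (y e : ℕ) : Prop := N2 S.ka y e ∧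
  (∀ x, x ≤ y → N2 S.nm x y → ¬ ThN S y x) ∧
  (∀ b, b ≤ y → N2 S.bd b e → ∃ x, x ≤ b ∧ N2 S.dm x b ∧ ¬ (N2 S.nm x y ↔ N2 S.nm x b))

theorem P2_stdM (φ : AFml) (a b : ℕ) : P2 stdM φ a b ↔ N2 φ a b := satM_std φ _
theorem TrM_stdM (S : Pcs) (y e : ℕ) : TrM S stdM y e ↔ TrN S y e := by
  have h := fun φ a b => (P2_stdM φ a b).eq
  unfold TrM TrN ThM ThN
  simp only [← h]
  exact Iff.rfl
theorem TrM_std (S : Pcs) {M : AModel} (hM : IsPA M) (y e : ℕ) :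
    TrM S M (std M y) (std M e) ↔ TrN S y e := by
  have h1 := satM_trF S stdM 0 1 (scons y fun _ => e)
  have h2 := hM.abs (delta0_trF S 0 1) (scons y fun _ => e)
  rw [satM_trF] at h2
  have h3 := satM_std (trF S 0 1) (scons y fun _ => e)
  exact h2.trans (h3.symm.trans (h1.trans (TrM_stdM S y e)))
theorem MatM_std (S : Pcs) {M : AModel} (hM : IsPA M) (u e x : ℕ) :
    MatM S M (std M u) (std M e) (std M x) ↔ MatM S stdM u e x := by
  have h1 := satM_matF S stdM (scons u (scons e fun _ => x))
  have h2 := hM.abs (delta0_matF S) (scons u (scons e fun _ => x))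
  rw [satM_matF] at h2
  have h3 := satM_std (matF S) (scons u (scons e fun _ => x))
  exact h2.trans (h3.symm.trans h1)
theorem P2_std' {M : AModel} (hM : IsPA M) {φ : AFml} (h : IsDelta0 φ) (a b : ℕ) :
    P2 M φ (std M a) (std M b) ↔ N2 φ a b := P2_std hM h a b

/-- The standing assumptions. -/
structure Setup (Γ : Set AFml) (S : Pcs) (Th : ℕ → Prop) (m : ℕ) : Prop where
  good : Good S Th m
  thm : ∀ x, Th x ↔ ∃ φ, x = AFml.code φ ∧ Proves Γ φ
  pa : PA ⊆ Γ
  cons : ¬ Proves Γ botFml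
  sgM : ∀ M, IsModel M Γ → ∃ z, P2 M S.sg z z
  sgN : ∀ z, ¬ N2 S.sg z z

theorem exists_setup {Γ : Set AFml} (hext : PA ⊆ Γ) (hcons : ¬ Proves Γ botFml)
    (hpr : PrAxiomatized Γ) (hill : ¬ Sigma1Sound Γ) (m : ℕ) : ∃ S Th, Setup Γ S Th m := by
  obtain ⟨Th, hd, hT⟩ := exists_thm hpr
  unfold Sigma1Sound at hill
  push Not at hill
  obtain ⟨σ, h1, h2, h3, h4⟩ := hill
  obtain ⟨s0, h5, h6⟩ := nf_sigma h1
  let τ : ℕ → ATerm := fun n => if n = 0 then .var 0 else .zero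
  have hτ : ∀ (M : AModel) (a b : M.C), P2 M (s0.substAll τ) a b ↔ s0.SatM M (scons a fun _ => M.z) := by
    intro M a b
    unfold P2
    rw [AFml.satM_subst]
    have : (fun i => (τ i).valM M (scons a fun _ => b)) = scons a fun _ => M.z := by
      funext n; cases n <;> rfl
    rw [this]
  obtain ⟨S, e, hS⟩ := exists_pcs hd m (delta0_subst h5 τ)
  refine ⟨S, Th, hS, hT, hext, hcons, fun M hM => ?_, fun z hz => ?_⟩
  · have hPA : IsPA M := fun φ hφ => hM φ (hext hφ)
    obtain ⟨z, hz⟩ := (h6 M hPA fun _ => M.z).1 (soundness hM h3 _)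
    exact ⟨z, by rw [e, hτ]; exact hz⟩
  · have hz' := (P2_stdM S.sg z z).2 hz
    rw [e] at hz'
    have hz'' := (hτ stdM z z).1 hz'
    apply h4
    exact (satM_std _ _).1 ((h6 stdM stdM_isPA fun _ => stdM.z).2 ⟨z, hz''⟩)

variable {Γ : Set AFml} {S : Pcs} {Th : ℕ → Prop} {m : ℕ}

theorem Setup.isPA (hS : Setup Γ S Th m) {M : AModel} (hM : IsModel M Γ) : IsPA M :=
  fun φ hφ => hM φ (hS.pa hφ)

/-- No standard triggers. -/
theorem Setup.noTr (hS : Setup Γ S Th m) (y : ℕ) : ¬ TrN S y (PhiF S).code := by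
  intro hy
  obtain ⟨M, hM, ρ, _⟩ := exists_model hS.cons
  have hPA := hS.isPA hM
  rw [← TrM_std S hPA] at hy
  rcases cases_M S hPA (hS.sgM M hM) (std M (PhiF S).code) with ⟨z, h1, h2, _⟩ | ⟨u, h1, h2, _, h3⟩
  · have : ∀ n, z ≠ std M n := by
      rintro n rfl
      exact hS.sgN n ((P2_std' hPA S.dsg _ _).1 h1)
    exact h2 _ (hPA.nonstd_ge this y) hy
  · have : ∃ n, u = std M n := by
      by_contra hn
      push Not at hn
      exact hn y (h2 _ (hPA.nonstd_ge hn y) hy).symm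
    obtain ⟨n, rfl⟩ := this
    rw [TrM_std S hPA] at h1
    obtain ⟨x, hx, hk⟩ := hS.good.ka1 _ _ h1.1
    obtain ⟨φ, rfl, hφ⟩ := (hS.thm _).1 hx
    obtain ⟨φ', e, hk⟩ := (Kv_iff _ _ _ _).1 hk
    obtain rfl := AFml.code_inj e
    refine (kval_model S hPA n.unpair.1 φ.code ρ ?_ φ le_rfl).1 hk.symm (soundness hM hφ ρ)
    intro k _
    rw [satM_PQ, h3, P2_std' hPA S.dnm, hS.good.nm, not_not]

theorem Setup.PQ_std (hS : Setup Γ S Th m) (n : ℕ) : (∃ u, MatM S stdM u (PhiF S).code n) ↔ Th n := by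
  have nt : ∀ y, ¬ TrM S stdM y (PhiF S).code := fun y h => hS.noTr y ((TrM_stdM S _ _).1 h)
  have ns : ∀ z, ¬ P2 stdM S.sg z z := fun z h => hS.sgN z ((P2_stdM _ _ _).1 h)
  rw [hS.good.th]
  constructor
  · rintro ⟨u, ⟨h, _⟩ | ⟨h, _⟩ | ⟨⟨_, t, _, h⟩, _⟩⟩
    · exact absurd h (nt _)
    · exact absurd h (ns _)
    · exact ⟨t, (P2_stdM _ _ _).1 h⟩
  · rintro ⟨t, h⟩
    exact ⟨(max n t : ℕ), .inr (.inr ⟨⟨(le_max_left n t : n ≤ max n t), t,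
      (le_max_right n t : t ≤ max n t), (P2_stdM _ _ _).2 h⟩,
      fun z _ => ns z, fun y _ => nt y⟩)⟩

theorem Setup.prov (hS : Setup Γ S Th m) : IsProvPred Γ (PF S) := by
  refine ⟨freeLt_PF S, fun φ => ?_⟩
  have e : (PF S).appNum φ = PQ (PhiF S) φ.code := rfl
  have e2 : Proves Γ φ ↔ Th φ.code := by
    rw [hS.thm]
    constructor
    · intro h; exact ⟨φ, rfl, h⟩
    · rintro ⟨ψ, e, h⟩; rwa [AFml.code_inj e]
  rw [e, e2, ← hS.PQ_std]
  constructor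
  · rintro ⟨u, hu⟩
    refine completeness fun M hM ρ => ?_
    rw [satM_PQ]
    exact ⟨std M u, (MatM_std S hM _ _ _).2 hu⟩
  · intro h
    have := soundness (M := stdM) stdM_isPA h fun _ => stdM.z
    rw [satM_PQ] at this
    simpa only [std_stdM] using this

theorem Setup.acc (hS : Setup Γ S Th m) {φ : AFml} {M : AModel} (hM : IsModel M Γ)
    (ρ : ℕ → M.C) (h : φ.SatM M ρ) : (iterPred (PF S) (m + 1) φ).SatM M ρ := by
  have hPA := hS.isPA hM
  set x := (iterPred (PF S) m φ).code with hx
  show (PQ (PhiF S) x).SatM M ρ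
  by_contra hn
  rw [satM_PQ] at hn
  rcases cases_M S hPA (hS.sgM M hM) (std M (PhiF S).code) with ⟨z, _, _, h2⟩ | ⟨u, h1, _, _, h3⟩
  · exact hn (h2 _)
  · have hnm : P2 M S.nm (std M x) u := by
      by_contra hc
      exact hn ((h3 _).2 hc)
    have hu : ∀ n, u ≠ std M n := by
      rintro n rfl
      exact hS.noTr n ((TrM_std S hPA _ _).1 h1)
    classical
    let k := max φ.code x
    obtain ⟨g, hg⟩ := exists_In ((Finset.range (k + 1)).filter fun z => P2 M S.nm (std M z) u)
    have hg : ∀ z, z ≤ k → (In g z ↔ P2 M S.nm (std M z) u) := by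
      intro z hz
      rw [hg]
      simp only [Finset.mem_filter, Finset.mem_range]
      exact ⟨fun h => h.2, fun h => ⟨by omega, h⟩⟩
    by_cases hv : kval (atm (PhiF S, g)) φ = 0
    · refine (kval_model S hPA g φ.code ρ ?_ φ le_rfl).1 hv h
      intro n hn
      rw [satM_PQ, h3, not_not]
      exact hg n (hn.trans (le_max_left _ _))
    · have hb : Bad m g k (PhiF S).code :=
        ⟨φ.code, x, _, le_max_left _ _, le_max_right _ _, (It_iff m _ _ _).2 hx,
          (hg x (le_max_right _ _)).2 hnm, (Kv_iff _ _ _ _).2 ⟨φ, rfl, rfl⟩, hv⟩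
      obtain ⟨t, ht⟩ := hS.good.bd2 _ _ _ hb
      obtain ⟨y, hy1, hy2, hy3⟩ := h1.2.2 (std M (Nat.pair g (Nat.pair k t))) (hPA.nonstd_ge hu _)
        ((P2_std' hPA S.dbd _ _).2 ht)
      obtain ⟨y, hy, rfl⟩ := hPA.le_std hy1
      rw [P2_std' hPA S.ddm, hS.good.dm] at hy2
      simp only [Nat.unpair_pair] at hy2
      apply hy3
      rw [P2_std' hPA S.dnm, hS.good.nm]
      simp only [Nat.unpair_pair]
      exact (hg y hy2).symm


end

section

/-! ### The modal part -/

theorem evalTC_interp {P : AFml} {f : MFml → AFml} (hf : IsInterp P f) {M : AModel}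
    (h01 : ¬ M.z = M.s M.z) (ρ : ℕ → M.C) (A : MFml) :
    A.evalTC (fun B => (f B).SatM M ρ) ↔ (f A).SatM M ρ := by
  obtain ⟨_, hb, hn, ha, ho, hi, _⟩ := hf
  induction A with
  | var i => rfl
  | box A ih => rfl
  | bot => rw [hb]; exact ⟨False.elim, h01⟩
  | neg A ih => rw [hn]; exact not_congr ih
  | and A B ih1 ih2 => rw [ha]; exact and_congr ih1 ih2
  | or A B ih1 ih2 => rw [ho]; exact or_congr ih1 ih2
  | imp A B ih1 ih2 => rw [hi]; exact imp_congr ih1 ih2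

theorem interp_boxIter {P : AFml} {f : MFml → AFml} (hf : IsInterp P f) (k : ℕ) (A : MFml) :
    f (boxIter k A) = iterPred P k (f A) := by
  induction k with
  | zero => rfl
  | succ k ih =>
    show f (.box (boxIter k A)) = P.appNum (iterPred P k (f A))
    rw [hf.2.2.2.2.2.2, ih]

theorem NAProves.allBox {m : ℕ} {A : MFml} (h : NAProves (m + 1) 0 A) :
    A.evalTC (fun B => ∃ C, B = .box C) := by
  induction h with
  | taut h => exact h _
  | acc A => exact fun _ => ⟨_, rfl⟩
  | mp _ _ ih1 ih2 => exact ih1 ih2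
  | nec _ _ => exact ⟨_, rfl⟩
  | ros _ ih => exact absurd ⟨_, rfl⟩ ih

theorem IsPA.z_ne_one {M : AModel} (hM : IsPA M) : ¬ M.z = M.s M.z := by
  intro h
  have := hM _ PAax.succNeZero (fun _ => M.z) M.z
  exact this h.symm

theorem Setup.sound {Γ : Set AFml} {S : Pcs} {Th : ℕ → Prop} {m : ℕ} (hS : Setup Γ S Th m)
    {f : MFml → AFml} (hf : IsInterp (PF S) f) {A : MFml} (h : NAProves (m + 1) 0 A) :
    Proves Γ (f A) := by
  induction h with
  | taut h =>
    refine completeness fun M hM ρ => ?_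
    exact (evalTC_interp hf (hS.isPA hM).z_ne_one ρ _).1 (h _)
  | acc A =>
    refine completeness fun M hM ρ => ?_
    rw [hf.2.2.2.2.2.1, interp_boxIter hf, interp_boxIter hf]
    exact fun h => hS.acc hM ρ h
  | mp _ _ ih1 ih2 => rw [hf.2.2.2.2.2.1] at ih1; exact .mp ih1 ih2
  | nec _ ih =>
    rw [hf.2.2.2.2.2.2]
    refine completeness fun M hM ρ => ?_
    exact soundness (hS.isPA hM) ((hS.prov.2 _).1 ih) ρ
  | ros h _ => exact absurd ⟨_, rfl⟩ h.allBox

/-- Lindenbaum's lemma for the logic. -/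
theorem exists_val {m : ℕ} {A : MFml} (hA : ¬ NAProves m 0 A) :
    ∃ v : MFml → Prop, (∀ B, NAProves m 0 B → B.evalTC v) ∧ ¬ A.evalTC v := by
  let 𝒞 : Set (Set MFml) := {X | (∀ B, NAProves m 0 B → B ∈ X) ∧
    (∀ B C, MFml.imp B C ∈ X → B ∈ X → C ∈ X) ∧ A ∉ X}
  obtain ⟨X, _, hX⟩ := zorn_subset_nonempty 𝒞 (by
    intro c hc hch hne
    refine ⟨⋃₀ c, ⟨?_, ?_, ?_⟩, fun s hs => Set.subset_sUnion_of_mem hs⟩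
    · intro B hB
      obtain ⟨s, hs⟩ := hne
      exact ⟨s, hs, (hc hs).1 B hB⟩
    · rintro B C ⟨s, hs, h1⟩ ⟨t, ht, h2⟩
      rcases hch.total hs ht with h | h
      · exact ⟨t, ht, (hc ht).2.1 B C (h h1) h2⟩
      · exact ⟨s, hs, (hc hs).2.1 B C h1 (h h2)⟩
    · rintro ⟨s, hs, h⟩
      exact (hc hs).2.2 h) {B | NAProves m 0 B} ⟨fun _ h => h, fun _ _ h1 h2 => .mp h1 h2, hA⟩
  obtain ⟨hL, hmp, hAX⟩ := hX.prop
  have tt : ∀ B, MTaut B → B ∈ X := fun B h => hL B (.taut h)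
  have key : ∀ B, B ∉ X → MFml.imp B A ∈ X := by
    intro B hB
    by_contra hn
    have hY : {C | MFml.imp B C ∈ X} ∈ 𝒞 := by
      refine ⟨fun C hC => ?_, fun C D h1 h2 => ?_, hn⟩
      · exact hmp C _ (tt _ fun v => by simp only [MFml.evalTC]; tauto) (hL C hC)
      · exact hmp _ _ (hmp _ _ (tt (.imp (.imp B (.imp C D)) (.imp (.imp B C) (.imp B D)))
          fun v => by simp only [MFml.evalTC]; tauto) h1) h2
    have hsub : X ⊆ {C | MFml.imp B C ∈ X} := fun C hC =>
      hmp C _ (tt _ fun v => by simp only [MFml.evalTC]; tauto) hC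
    have := hX.le_of_ge hY hsub (tt (.imp B B) fun v => by simp only [MFml.evalTC]; tauto)
    exact hB this
  have t1 : ∀ {B C}, MTaut (.imp B C) → B ∈ X → C ∈ X := fun h => hmp _ _ (tt _ h)
  have t2 : ∀ {B C D}, MTaut (.imp B (.imp C D)) → B ∈ X → C ∈ X → D ∈ X :=
    fun h h1 h2 => hmp _ _ (t1 h h1) h2
  have hneg : ∀ B, MFml.neg B ∈ X ↔ B ∉ X := by
    intro B
    constructor
    · intro h1 h2
      exact hAX (t2 (fun v => by simp only [MFml.evalTC]; tauto) h1 h2)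
    · intro h
      by_contra h'
      exact hAX (t2 (fun v => by simp only [MFml.evalTC]; tauto) (key _ h) (key _ h'))
  have truth : ∀ B : MFml, B.evalTC (fun C => C ∈ X) ↔ B ∈ X := by
    intro B
    induction B with
    | var i => rfl
    | box B _ => rfl
    | bot =>
      refine ⟨False.elim, fun h => hAX (t1 (fun v => ?_) h)⟩
      simp only [MFml.evalTC]; tauto
    | neg B ih => rw [hneg]; exact not_congr ih
    | and B C ih1 ih2 =>
      refine (and_congr ih1 ih2).trans ⟨fun h => ?_, fun h => ⟨?_, ?_⟩⟩
      · exact t2 (fun v => by simp only [MFml.evalTC]; tauto) h.1 h.2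
      · exact t1 (fun v => by simp only [MFml.evalTC]; tauto) h
      · exact t1 (fun v => by simp only [MFml.evalTC]; tauto) h
    | or B C ih1 ih2 =>
      refine (or_congr ih1 ih2).trans ⟨fun h => ?_, fun h => ?_⟩
      · rcases h with h | h
        · exact t1 (fun v => by simp only [MFml.evalTC]; tauto) h
        · exact t1 (fun v => by simp only [MFml.evalTC]; tauto) h
      · by_contra hn
        push Not at hn
        have h1 := (hneg B).2 hn.1
        have h2 := t2 (D := C) (fun v => by simp only [MFml.evalTC]; tauto) h h1
        exact hn.2 h2
    | imp B C ih1 ih2 =>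
      refine (imp_congr ih1 ih2).trans ⟨fun h => ?_, fun h => hmp _ _ h⟩
      by_cases hB : B ∈ X
      · exact t1 (fun v => by simp only [MFml.evalTC]; tauto) (h hB)
      · exact t1 (fun v => by simp only [MFml.evalTC]; tauto) ((hneg B).2 hB)
  exact ⟨fun C => C ∈ X, fun B hB => (truth B).2 (hL B hB), fun h => hAX ((truth A).1 h)⟩

/-- The finite set of subformulas. -/
def subs : MFml → Finset MFml
  | .var i => {.var i}
  | .bot => {.bot}
  | .neg A => insert (.neg A) (subs A)
  | .and A B => insert (.and A B) (subs A ∪ subs B)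
  | .or A B => insert (.or A B) (subs A ∪ subs B)
  | .imp A B => insert (.imp A B) (subs A ∪ subs B)
  | .box A => insert (.box A) (subs A)

theorem mem_subs_self (A : MFml) : A ∈ subs A := by cases A <;> simp [subs]
theorem subs_trans {A B : MFml} (h : B ∈ subs A) : subs B ⊆ subs A := by
  induction A with
  | var i => simp only [subs, Finset.mem_singleton] at h; rw [h]
  | bot => simp only [subs, Finset.mem_singleton] at h; rw [h]
  | neg A ih | box A ih =>
    simp only [subs, Finset.mem_insert] at h ⊢
    rcases h with rfl | h
    · simp [subs]
    · exact (ih h).trans (Finset.subset_insert _ _)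
  | and A C ih1 ih2 | or A C ih1 ih2 | imp A C ih1 ih2 =>
    simp only [subs, Finset.mem_insert, Finset.mem_union] at h ⊢
    rcases h with rfl | h | h
    · simp [subs]
    · exact (ih1 h).trans (Finset.subset_union_left.trans (Finset.subset_insert _ _))
    · exact (ih2 h).trans (Finset.subset_union_right.trans (Finset.subset_insert _ _))
theorem sizeOf_subs {A B : MFml} (h : B ∈ subs A) : sizeOf B ≤ sizeOf A := by
  induction A with
  | var i => simp only [subs, Finset.mem_singleton] at h; rw [h]
  | bot => simp only [subs, Finset.mem_singleton] at h; rw [h]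
  | neg A ih | box A ih =>
    simp only [subs, Finset.mem_insert] at h
    rcases h with rfl | h
    · exact le_rfl
    · have := ih h
      simp; omega
  | and A C ih1 ih2 | or A C ih1 ih2 | imp A C ih1 ih2 =>
    simp only [subs, Finset.mem_insert, Finset.mem_union] at h
    rcases h with rfl | h | h
    · exact le_rfl
    · have := ih1 h
      simp; omega
    · have := ih2 h
      simp; omega

/-- The exact interpretation. -/
noncomputable def fI (S : Pcs) : MFml → AFml
  | .var i => PQ (PhiF S) (Nat.pair 8 i)
  | .bot => botFml
  | .neg A => .neg (fI S A)
  | .and A B => .and (fI S A) (fI S B)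
  | .or A B => .or (fI S A) (fI S B)
  | .imp A B => .imp (fI S A) (fI S B)
  | .box A => PQ (PhiF S) (fI S A).code

theorem isInterp_fI (S : Pcs) : IsInterp (PF S) (fI S) :=
  ⟨fun i => freeLt_PQ S _, rfl, fun _ => rfl, fun _ _ => rfl, fun _ _ => rfl, fun _ _ => rfl,
    fun _ => rfl⟩

theorem code_ne_eight (φ : AFml) (i : ℕ) : φ.code ≠ Nat.pair 8 i := by
  cases φ <;> simp [AFml.code]

theorem fI_inv (S : Pcs) {B : MFml} {ψ : AFml} (h : fI S B = PQ (PhiF S) ψ.code) :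
    ∃ C, B = .box C ∧ fI S C = ψ := by
  cases B with
  | var i => exact absurd (PQ_inj S h).symm (code_ne_eight _ _)
  | box C => exact ⟨C, rfl, AFml.code_inj (PQ_inj S h)⟩
  | bot => exact absurd h.symm (PQ_ne_bot S _)
  | neg A | and A B | or A B | imp A B =>
    obtain ⟨φ, h1⟩ := PQ_shape S ψ.code
    rw [h1] at h
    simp [fI] at h

theorem fI_inj (S : Pcs) {A B : MFml} (h : fI S A = fI S B) : A = B := by
  induction A generalizing B with
  | box A ih =>
    obtain ⟨C, rfl, hC⟩ := fI_inv S (B := B) (ψ := fI S A) h.symm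
    rw [ih hC.symm]
  | var i =>
    obtain ⟨φ, h1⟩ := PQ_shape S (Nat.pair 8 i)
    cases B with
    | var j =>
      have := PQ_inj S h
      simp at this
      rw [this]
    | box C => exact absurd (PQ_inj S h).symm (code_ne_eight _ _)
    | bot => exact absurd h (PQ_ne_bot S _)
    | neg A | and A B | or A B | imp A B =>
      rw [fI, h1] at h
      simp [fI] at h
  | bot =>
    cases B with
    | var j => exact absurd h.symm (PQ_ne_bot S _)
    | box C => exact absurd h.symm (PQ_ne_bot S _)
    | bot => rfl
    | neg A | and A B | or A B | imp A B => simp [fI, botFml] at h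
  | neg A ih =>
    cases B with
    | var j => obtain ⟨φ, h1⟩ := PQ_shape S (Nat.pair 8 j); simp [fI, h1] at h
    | box C => obtain ⟨φ, h1⟩ := PQ_shape S (fI S C).code; simp [fI, h1] at h
    | neg C => simp only [fI, AFml.neg.injEq] at h; rw [ih h]
    | bot | and C D | or C D | imp C D => simp [fI, botFml] at h
  | and A A' ih ih' =>
    cases B with
    | var j => obtain ⟨φ, h1⟩ := PQ_shape S (Nat.pair 8 j); simp [fI, h1] at h
    | box C => obtain ⟨φ, h1⟩ := PQ_shape S (fI S C).code; simp [fI, h1] at h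
    | and C D => simp only [fI, AFml.and.injEq] at h; rw [ih h.1, ih' h.2]
    | bot | neg C | or C D | imp C D => simp [fI, botFml] at h
  | or A A' ih ih' =>
    cases B with
    | var j => obtain ⟨φ, h1⟩ := PQ_shape S (Nat.pair 8 j); simp [fI, h1] at h
    | box C => obtain ⟨φ, h1⟩ := PQ_shape S (fI S C).code; simp [fI, h1] at h
    | or C D => simp only [fI, AFml.or.injEq] at h; rw [ih h.1, ih' h.2]
    | bot | neg C | and C D | imp C D => simp [fI, botFml] at h
  | imp A A' ih ih' =>
    cases B with
    | var j => obtain ⟨φ, h1⟩ := PQ_shape S (Nat.pair 8 j); simp [fI, h1] at h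
    | box C => obtain ⟨φ, h1⟩ := PQ_shape S (fI S C).code; simp [fI, h1] at h
    | imp C D => simp only [fI, AFml.imp.injEq] at h; rw [ih h.1, ih' h.2]
    | bot | neg C | and C D | or C D => simp [fI, botFml] at h

theorem fI_iter (S : Pcs) (k : ℕ) {B : MFml} {φ : AFml} (h : fI S B = iterPred (PF S) k φ) :
    ∃ C, B = boxIter k C ∧ fI S C = φ := by
  induction k generalizing B with
  | zero => exact ⟨B, rfl, h⟩
  | succ k ih =>
    obtain ⟨C, rfl, hC⟩ := fI_inv S (B := B) (ψ := iterPred (PF S) k φ) h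
    obtain ⟨D, rfl, hD⟩ := ih hC
    exact ⟨D, rfl, hD⟩

theorem boxIter_subs (k : ℕ) (C : MFml) : C ∈ subs (boxIter k C) := by
  induction k with
  | zero => exact mem_subs_self _
  | succ k ih => exact Finset.mem_insert_of_mem ih

/-- The value of a formula only depends on the pattern below its code. -/
theorem kval_local {Q : AFml} {g g' k : ℕ} (h : ∀ x, x ≤ k → (In g x ↔ In g' x)) {φ : AFml}
    (hφ : φ.code ≤ k) : kval (atm (Q, g)) φ = kval (atm (Q, g')) φ := by
  refine kval_congr φ fun ψ hψ => ?_
  have : (∃ n, n < ψ.code + 1 ∧ ψ = PQ Q n ∧ In g n) ↔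
      ∃ n, n < ψ.code + 1 ∧ ψ = PQ Q n ∧ In g' n :=
    exists_congr fun n => and_congr_right fun h1 => and_congr_right fun _ => h n (by omega)
  unfold atm
  classical
  refine if_congr Iff.rfl rfl ?_
  by_cases hq : ∃ n, n < ψ.code + 1 ∧ ψ = PQ Q n ∧ In g n
  · rw [if_pos hq, if_pos (this.1 hq)]
  · rw [if_neg hq, if_neg fun h => hq (this.2 h)]

theorem Setup.exact {Γ : Set AFml} {S : Pcs} {Th : ℕ → Prop} {m : ℕ} (hS : Setup Γ S Th m)
    (N : ℕ) : ∀ A : MFml, sizeOf A ≤ N → Proves Γ (fI S A) → NAProves (m + 1) 0 A := by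
  induction N with
  | zero => intro A hA; cases A <;> simp at hA
  | succ N IH =>
  intro A hA hp
  by_contra hn
  obtain ⟨v, hv, hvA⟩ := exists_val hn
  classical
  let F : Finset ℕ := ((subs A).filter fun B => ¬ B.evalTC v).biUnion fun B =>
    match B with
    | .box B => {(fI S B).code}
    | .var i => {Nat.pair 8 i}
    | _ => ∅
  obtain ⟨g, hg⟩ := exists_In F
  have hF : ∀ x, In g x ↔ (∃ B, .box B ∈ subs A ∧ ¬ v (.box B) ∧ x = (fI S B).code) ∨
      (∃ i, .var i ∈ subs A ∧ ¬ v (.var i) ∧ x = Nat.pair 8 i) := by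
    intro x
    rw [hg]
    simp only [F, Finset.mem_biUnion, Finset.mem_filter]
    constructor
    · rintro ⟨B, ⟨h1, h2⟩, h3⟩
      cases B with
      | box B => exact .inl ⟨B, h1, h2, by simpa using h3⟩
      | var i => exact .inr ⟨i, h1, h2, by simpa using h3⟩
      | bot | neg _ | and _ _ | or _ _ | imp _ _ => simp at h3
    · rintro (⟨B, h1, h2, rfl⟩ | ⟨i, h1, h2, rfl⟩)
      · exact ⟨.box B, ⟨h1, h2⟩, by simp⟩
      · exact ⟨.var i, ⟨h1, h2⟩, by simp⟩
  have inBox : ∀ B, .box B ∈ subs A → (In g (fI S B).code ↔ ¬ v (.box B)) := by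
    intro B hB
    rw [hF]
    constructor
    · rintro (⟨C, _, h, e⟩ | ⟨i, _, _, e⟩)
      · rwa [fI_inj S (AFml.code_inj e)]
      · exact absurd e (code_ne_eight _ _)
    · intro h; exact .inl ⟨B, hB, h, rfl⟩
  have inVar : ∀ i, .var i ∈ subs A → (In g (Nat.pair 8 i) ↔ ¬ v (.var i)) := by
    intro i hi
    rw [hF]
    constructor
    · rintro (⟨C, _, h, e⟩ | ⟨j, _, h, e⟩)
      · exact absurd e.symm (code_ne_eight _ _)
      · simp at e
        rwa [e]
    · intro h; exact .inr ⟨i, hi, h, rfl⟩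
  have kv : ∀ B, B ∈ subs A → kval (atm (PhiF S, g)) (fI S B) = if B.evalTC v then 2 else 0 := by
    intro B
    have kPQ : ∀ n, kval (atm (PhiF S, g)) (PQ (PhiF S) n) = if In g n then 0 else 2 := by
      intro n
      rw [← atm_PQ]
      obtain ⟨φ, h⟩ := PQ_shape S n
      rw [h]; rfl
    induction B with
    | var i =>
      intro h
      rw [fI, kPQ]
      simp only [inVar i h, MFml.evalTC]
      by_cases hh : v (.var i) <;> simp [hh]
    | box B _ =>
      intro h
      rw [fI, kPQ]
      simp only [inBox B h, MFml.evalTC]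
      by_cases hh : v (.box B) <;> simp [hh]
    | bot =>
      intro _
      show atm (PhiF S, g) botFml = _
      rw [atm_bot]; simp [MFml.evalTC]
    | neg B ih =>
      intro h
      have h1 := ih (subs_trans h (Finset.mem_insert_of_mem (mem_subs_self B)))
      simp only [fI, kval, h1, MFml.evalTC]
      by_cases hb : B.evalTC v <;> simp [hb]
    | and B C ih1 ih2 =>
      intro h
      have h1 := ih1 (subs_trans h (by simp [subs, mem_subs_self]))
      have h2 := ih2 (subs_trans h (by simp [subs, mem_subs_self]))
      simp only [fI, kval, h1, h2, MFml.evalTC]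
      by_cases hb : B.evalTC v <;> by_cases hc : C.evalTC v <;> simp [hb, hc]
    | or B C ih1 ih2 =>
      intro h
      have h1 := ih1 (subs_trans h (by simp [subs, mem_subs_self]))
      have h2 := ih2 (subs_trans h (by simp [subs, mem_subs_self]))
      simp only [fI, kval, h1, h2, MFml.evalTC]
      by_cases hb : B.evalTC v <;> by_cases hc : C.evalTC v <;> simp [hb, hc]
    | imp B C ih1 ih2 =>
      intro h
      have h1 := ih1 (subs_trans h (by simp [subs, mem_subs_self]))
      have h2 := ih2 (subs_trans h (by simp [subs, mem_subs_self]))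
      simp only [fI, kval, h1, h2, MFml.evalTC]
      by_cases hb : B.evalTC v <;> by_cases hc : C.evalTC v <;> simp [hb, hc]
  have hTh : ∀ x, In g x → ¬ Th x := by
    intro x hx ht
    obtain ⟨φ, rfl, hφ⟩ := (hS.thm x).1 ht
    rcases (hF _).1 hx with ⟨B, h1, h2, e⟩ | ⟨i, _, _, e⟩
    · rw [AFml.code_inj e] at hφ
      have h3 := sizeOf_subs h1
      simp only [MFml.box.sizeOf_spec] at h3
      exact h2 (hv _ (.nec (IH B (by omega) hφ)))
    · exact code_ne_eight _ _ e
  have hK : KK Th g (PhiF S).code := by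
    refine ⟨(fI S A).code, (hS.thm _).2 ⟨_, rfl, hp⟩, (Kv_iff _ _ _ _).2 ⟨_, rfl, ?_⟩⟩
    rw [kv A (mem_subs_self A), if_neg hvA]
  obtain ⟨t, ht⟩ := hS.good.ka2 _ _ hK
  refine hS.noTr _ ⟨ht, fun x _ h1 h2 => ?_, fun b _ hb => ?_⟩
  · rw [hS.good.nm, Nat.unpair_pair] at h1
    obtain ⟨_, s, _, hs⟩ := h2
    exact hTh x h1 ((hS.good.th x).2 ⟨s, hs⟩)
  · by_contra hc
    push Not at hc
    have hB := hS.good.bd1 _ _ hb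
    have hkb : b.unpair.2.unpair.1 ≤ b := (Nat.unpair_left_le _).trans (Nat.unpair_right_le _)
    have hloc : ∀ x, x ≤ b.unpair.2.unpair.1 → (In g x ↔ In b.unpair.1 x) := by
      intro x hx
      have := hc x (hx.trans hkb) ((hS.good.dm _ _).2 hx)
      rwa [hS.good.nm, hS.good.nm, Nat.unpair_pair] at this
    obtain ⟨n, x, r, hn, hx, hI, hxg, hr, hr0⟩ := hB
    obtain ⟨φ, rfl, rfl⟩ := (Kv_iff _ _ _ _).1 hr
    have hI' : x = (iterPred (PF S) m φ).code := (It_iff _ _ _ _).1 hI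
    subst hI'
    rw [← hloc _ hx] at hxg
    rw [← kval_local hloc hn] at hr0
    rcases (hF _).1 hxg with ⟨B, h1, h2, e⟩ | ⟨i, _, _, e⟩
    · obtain ⟨C, rfl, rfl⟩ := fI_iter S m (AFml.code_inj e).symm
      have hC : C ∈ subs A := subs_trans h1 (boxIter_subs (m + 1) C)
      apply hr0
      rw [kv C hC, if_neg]
      intro hCv
      exact h2 (hv _ (.acc C) hCv)
    · exact code_ne_eight _ _ e

end

/-- Theorem 4.7: Suppose `T` is `Σ₁`-ill and `m ≥ 1`. Then
there is a `Σ₁` provability predicate `PR_T(x)` of `T` such that (1) `N⁺A_{m,0}` is sound for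
every arithmetical interpretation based on `PR_T(x)`, and (2) some arithmetical interpretation
based on `PR_T(x)` is exact for `N⁺A_{m,0}`. -/
theorem statement_11 (Tax : Set AFml) (hext : PA ⊆ Tax)
    (hcons : ¬ Proves Tax botFml) (hpr : PrAxiomatized Tax)
    (hill : ¬ Sigma1Sound Tax)
    (m : ℕ) (hm : 1 ≤ m) :
    ∃ P : AFml, IsSigma1 P ∧ IsProvPred Tax P ∧
      (∀ (A : MFml) (f : MFml → AFml), IsInterp P f → NAProves m 0 A → Proves Tax (f A)) ∧
      (∃ f : MFml → AFml, IsInterp P f ∧ ∀ A : MFml, NAProves m 0 A ↔ Proves Tax (f A)) := by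
  obtain ⟨k, rfl⟩ : ∃ k, m = k + 1 := ⟨m - 1, by omega⟩
  obtain ⟨S, Th, hS⟩ := exists_setup hext hcons hpr hill k
  refine ⟨PF S, sigma1_PF S, hS.prov, fun A f hf h => hS.sound hf h, fI S, isInterp_fI S,
    fun A => ⟨hS.sound (isInterp_fI S), hS.exact _ A le_rfl⟩⟩

end PLN
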